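/- arXiv:2004.01484 — 3 statements merged into one kernel-verified Lean document; each statement's English description precedes it below -/
import Mathlib

section
/- Let A be a type, let R be a nontrivial element of the free group on A that is cyclically reduced and not a proper power, and let n ≥ 2 be a natural number. Let G be the one-relator group presented by ⟨A | Rⁿ = 1⟩, i.e. the quotient of FreeGroup A by the normal closure of {Rⁿ}. If w is a nontrivial element of FreeGroup A whose image in G is the identity (i.e. w lies in the normal closure of {Rⁿ}), then the reduced word of w contains a subword u (a contiguous infix of the list w.toWord) such that either u or the inverse word of u is a subword of the reduced word of Rⁿ, and such that n · (length of u) > (n−1) · (length of the reduced word of Rⁿ). -/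
/-- A word over `A` is cyclically reduced if its first and last letters are not
mutually inverse; an element of the free group is cyclically reduced if its
reduced word is. -/
def FreeGroup.CyclicallyReduced {A : Type*} [DecidableEq A] (w : FreeGroup A) : Prop :=
  ∀ x : A × Bool, w.toWord.head? = some x → w.toWord.getLast? ≠ some (x.1, !x.2)

/-- The formal inverse of a word: reverse the list and negate each sign. -/
def FreeGroup.wordInv {A : Type*} (u : List (A × Bool)) : List (A × Bool) :=
  (u.map fun p => (p.1, !p.2)).reverse


namespace BBN

open Finset

/-- Formal inverse of a letter. -/
def linv {A : Type*} (p : A × Bool) : A × Bool := (p.1, !p.2)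

theorem linv_linv {A : Type*} (p : A × Bool) : linv (linv p) = p := by
  simp [linv]

theorem take_isInf {B : Type*} (m : ℕ) (L : List B) : L.take m <:+: L :=
  ⟨[], L.drop m, by simp⟩

theorem reduced_of_isInf {A : Type*} {L L' : List (A × Bool)} (h : FreeGroup.IsReduced L)
    (h' : L' <:+: L) : FreeGroup.IsReduced L' := by
  obtain ⟨a, b, rfl⟩ := h'
  unfold FreeGroup.IsReduced at h ⊢
  exact (List.isChain_append.1 (List.isChain_append.1 h).1).2.1

theorem linv_ne {A : Type*} (p : A × Bool) : linv p ≠ p := by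
  rcases p with ⟨a, b⟩
  simp [linv]

/-! ### Stackings of a cyclic word -/

section Stack

variable {A : Type*} {ℓ : ℕ} (W : ZMod ℓ → A × Bool)

/-- Tail position of side `i`. -/
def tl (i : ZMod ℓ) : ZMod ℓ := if (W i).2 then i else i + 1

/-- Head position of side `i`. -/
def hd (i : ZMod ℓ) : ZMod ℓ := if (W i).2 then i + 1 else i

/-- Height functions on positions compatible with the labels. -/
structure IsStack (h : ZMod ℓ → ℤ) : Prop where
  inj : Function.Injective h
  compat : ∀ i j, (W i).1 = (W j).1 → h (tl W i) < h (tl W j) → h (hd W i) < h (hd W j)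

theorem IsStack.neg {h : ZMod ℓ → ℤ} (H : IsStack W h) : IsStack W (fun i => - h i) := by
  refine ⟨fun x y hxy => H.inj (neg_injective hxy), fun i j hij hlt => ?_⟩
  have := H.compat j i hij.symm (by simpa using hlt)
  simpa using this

/-- Consistent equivalence relations on positions. -/
def Consistent (r : Setoid (ZMod ℓ)) : Prop :=
  ∀ i j, (W i).1 = (W j).1 → (r (tl W i) (tl W j) ↔ r (hd W i) (hd W j))

theorem tl_inj (hred : ∀ i, W (i + 1) ≠ linv (W i)) {i j : ZMod ℓ} (hij : (W i).1 = (W j).1)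
    (h : tl W i = tl W j) : i = j := by
  have key : ∀ i j : ZMod ℓ, (W i).1 = (W j).1 → (W i).2 = true → (W j).2 = false →
      i = j + 1 → False := by
    intro i j h1 h2 h3 h4
    subst h4
    exact hred j (Prod.ext h1 (by simp [linv, h2, h3]))
  unfold tl at h
  by_cases hi : (W i).2 = true <;> by_cases hj : (W j).2 = true <;>
    simp only [hi, hj, if_true, if_false, Bool.false_eq_true] at h
  · exact h
  · exact (key i j hij hi (by simpa using hj) h).elim
  · exact (key j i hij.symm hj (by simpa using hi) h.symm).elim
  · exact add_right_cancel h

/-- Integrating a function of total sum zero along the cycle. -/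
theorem exists_primitive [NeZero ℓ] (g : ZMod ℓ → ℚ) (hg : ∑ i, g i = 0) :
    ∃ φ : ZMod ℓ → ℚ, ∀ i, φ (i + 1) = φ i + g i := by
  have hsum : ∑ t ∈ range ℓ, g (t : ZMod ℓ) = 0 := by
    rw [← hg]
    refine Finset.sum_bij' (fun t _ => (t : ZMod ℓ)) (fun i _ => i.val) ?_ ?_ ?_ ?_ ?_
    · simp
    · intro i _
      simpa using ZMod.val_lt i
    · intro t ht
      exact ZMod.val_cast_of_lt (by simpa using ht)
    · intro i _
      simp
    · simp
  refine ⟨fun i => ∑ t ∈ range i.val, g (t : ZMod ℓ), fun i => ?_⟩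
  have hlt := ZMod.val_lt i
  have hi : ((i.val : ℕ) : ZMod ℓ) = i := by simp
  rcases Nat.lt_or_ge (i.val + 1) ℓ with h | h
  · have : (i + 1).val = i.val + 1 := by
      have h2 : i + 1 = ((i.val + 1 : ℕ) : ZMod ℓ) := by push_cast; rw [hi]
      rw [h2, ZMod.val_cast_of_lt h]
    simp only [this, sum_range_succ, hi]
  · have hl : i.val + 1 = ℓ := by omega
    have : i + 1 = 0 := by
      have h2 : i + 1 = ((i.val + 1 : ℕ) : ZMod ℓ) := by push_cast; rw [hi]
      rw [h2, hl]; simp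
    have h3 : ∑ t ∈ range (i.val + 1), g (t : ZMod ℓ) = 0 := by rw [hl]; exact hsum
    rw [sum_range_succ, hi] at h3
    simp only [this, ZMod.val_zero, range_zero, sum_empty]
    exact h3.symm

theorem card_image_le_card_image {ι β γ : Type*} [DecidableEq β] [DecidableEq γ]
    (s : Finset ι) (f : ι → β) (g : ι → γ)
    (h : ∀ i j, f i = f j → g i = g j) : (s.image g).card ≤ (s.image f).card := by
  classical
  rcases isEmpty_or_nonempty ι with hι | hι
  · have : s = ∅ := Finset.eq_empty_of_isEmpty s
    simp [this]
  have hsub : s.image g ⊆ (s.image f).image (fun b => g (Function.invFun f b)) := by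
    intro c hc
    obtain ⟨i, hi, rfl⟩ := mem_image.1 hc
    refine mem_image.2 ⟨f i, mem_image_of_mem f hi, ?_⟩
    exact h _ _ (Function.invFun_eq ⟨i, rfl⟩)
  exact (card_le_card hsub).trans card_image_le

open Classical in
/-- If the quotient graph has more edges than vertices, a refining height function exists. -/
theorem exists_height [NeZero ℓ] (r : Setoid (ZMod ℓ)) 
    (hE : Fintype.card (Quotient r) <
      (univ.image (fun i => ((⟦tl W i⟧ : Quotient r), (W i).1))).card) :
    ∃ φ : ZMod ℓ → ℚ, (∀ i j, (W i).1 = (W j).1 → r (tl W i) (tl W j) →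
        φ (hd W i) - φ (tl W i) = φ (hd W j) - φ (tl W j)) ∧
      ∃ x y, r x y ∧ φ x ≠ φ y := by
  set ec : ZMod ℓ → Quotient r × A := fun i => ((⟦tl W i⟧ : Quotient r), (W i).1) with hec
  set E := univ.image ec with hEdef
  let ecE : ZMod ℓ → E := fun i => ⟨ec i, mem_image_of_mem _ (mem_univ i)⟩
  have hrep : ∀ e : E, ∃ i, ecE i = e := by
    rintro ⟨e, he⟩
    obtain ⟨i, -, hi⟩ := mem_image.1 he
    exact ⟨i, Subtype.ext hi⟩
  choose rep hrep using hrep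
  let sg : ZMod ℓ → ℚ := fun i => if (W i).2 then 1 else -1
  let Sm : (E → ℚ) →ₗ[ℚ] ℚ := ∑ i, sg i • LinearMap.proj (ecE i)
  let δ : (Quotient r → ℚ) →ₗ[ℚ] (E → ℚ) :=
    LinearMap.pi fun e =>
      (LinearMap.proj (Quotient.mk r (hd W (rep e))) : (Quotient r → ℚ) →ₗ[ℚ] ℚ) -
      (LinearMap.proj (Quotient.mk r (tl W (rep e))) : (Quotient r → ℚ) →ₗ[ℚ] ℚ)
  have h1 : Module.finrank ℚ (LinearMap.range δ) + 1 ≤ Fintype.card (Quotient r) := by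
    have hk : 0 < Module.finrank ℚ (LinearMap.ker δ) := by
      rw [Module.finrank_pos_iff_exists_ne_zero]
      refine ⟨⟨fun _ => 1, ?_⟩, ?_⟩
      · rw [LinearMap.mem_ker]
        ext e
        simp [δ]
      · intro h0
        have := congrFun (congrArg Subtype.val h0) ⟦0⟧
        simp at this
    have := LinearMap.finrank_range_add_finrank_ker δ
    rw [Module.finrank_fintype_fun_eq_card] at this
    omega
  have h2 : E.card ≤ Module.finrank ℚ (LinearMap.ker Sm) + 1 := by
    have := LinearMap.finrank_range_add_finrank_ker Sm
    rw [Module.finrank_fintype_fun_eq_card, Fintype.card_coe] at this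
    have h3 : Module.finrank ℚ (LinearMap.range Sm) ≤ 1 := by
      simpa using Submodule.finrank_le (LinearMap.range Sm)
    omega
  have h3 : ¬ (LinearMap.ker Sm ≤ LinearMap.range δ) := by
    intro hle
    have := Submodule.finrank_mono hle
    omega
  obtain ⟨ψ, hψ, hψn⟩ := Set.not_subset.1 h3
  obtain ⟨φ, hφ⟩ := exists_primitive (fun i => sg i * ψ (ecE i)) (by
    have : Sm ψ = 0 := hψ
    simpa [Sm] using this)
  have hd1 : ∀ i, φ (hd W i) - φ (tl W i) = ψ (ecE i) := by
    intro i
    have := hφ i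
    unfold hd tl
    by_cases hi : (W i).2 = true
    · simp only [sg, hi, if_true] at this ⊢
      linarith
    · simp only [sg, hi, if_false, Bool.false_eq_true] at this ⊢
      linarith
  refine ⟨φ, ?_, ?_⟩
  · intro i j hij hr
    rw [hd1, hd1]
    congr 1
    exact Subtype.ext (Prod.ext (Quotient.sound hr) hij)
  · by_contra hcon
    push Not at hcon
    apply hψn
    refine ⟨fun q => Quotient.lift φ (fun x y h => hcon x y h) q, ?_⟩
    ext e
    have := hd1 (rep e)
    rw [hrep e] at this
    simpa [δ] using this

open Classical in
/-- If the quotient graph has at most as many edges as vertices, it is the circle itself. -/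
theorem eq_of_card_le [NeZero ℓ] (hred : ∀ i, W (i + 1) ≠ linv (W i))
    (hprim : ∀ d : ZMod ℓ, (∀ i, W (i + d) = W i) → d = 0)
    (r : Setoid (ZMod ℓ)) (hr : Consistent W r)
    (hE : (univ.image (fun i => ((⟦tl W i⟧ : Quotient r), (W i).1))).card ≤
      Fintype.card (Quotient r)) {x y : ZMod ℓ} (hxy : r x y) : x = y := by
  let T : Finset (Quotient r × A × Bool) := univ.image (fun i => (⟦tl W i⟧, (W i).1, true))
  let D : Finset (Quotient r × A × Bool) := univ.image (fun i => (⟦hd W i⟧, (W i).1, false))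
  have hT : T.card ≤ (univ.image (fun i => ((⟦tl W i⟧ : Quotient r), (W i).1))).card :=
    card_image_le_card_image _ _ _ (by
      intro i j h
      simp only [Prod.mk.injEq] at h ⊢
      exact ⟨h.1, h.2, trivial⟩)
  have hD : D.card ≤ (univ.image (fun i => ((⟦tl W i⟧ : Quotient r), (W i).1))).card :=
    card_image_le_card_image _ _ _ (by
      intro i j h
      simp only [Prod.mk.injEq] at h ⊢
      exact ⟨Quotient.sound ((hr i j h.2).1 (Quotient.exact h.1)), h.2, trivial⟩)
  set HE := T ∪ D with hHE
  have hcard : HE.card ≤ 2 * Fintype.card (Quotient r) :=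
    (card_union_le _ _).trans (by omega)
  let outH : ZMod ℓ → Quotient r × A × Bool := fun x => (⟦x⟧, W x)
  let inH : ZMod ℓ → Quotient r × A × Bool := fun x => (⟦x⟧, linv (W (x - 1)))
  have hout : ∀ x, outH x ∈ HE := by
    intro x
    by_cases hx : (W x).2 = true
    · refine mem_union_left _ (mem_image.2 ⟨x, mem_univ _, ?_⟩)
      simp [outH, tl, hx]
      rw [← hx]
    · refine mem_union_right _ (mem_image.2 ⟨x, mem_univ _, ?_⟩)
      have hx' : (W x).2 = false := by simpa using hx
      simp [outH, hd, hx']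
      rw [← hx']
  have hin : ∀ x, inH x ∈ HE := by
    intro x
    by_cases hx : (W (x - 1)).2 = true
    · refine mem_union_right _ (mem_image.2 ⟨x - 1, mem_univ _, ?_⟩)
      simp [inH, hd, hx, linv]
    · refine mem_union_left _ (mem_image.2 ⟨x - 1, mem_univ _, ?_⟩)
      have hx' : (W (x - 1)).2 = false := by simpa using hx
      simp [inH, tl, hx', linv]
  have hne : ∀ x, outH x ≠ inH x := by
    intro x h
    have h2 : W x = linv (W (x - 1)) := congrArg Prod.snd h
    apply hred (x - 1)
    rw [sub_add_cancel, h2]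
  have hge : ∀ q : Quotient r, 2 ≤ (HE.filter (fun p => p.1 = q)).card := by
    intro q
    induction q using Quotient.inductionOn with | _ x
    have : ({outH x, inH x} : Finset _) ⊆ HE.filter (fun p => p.1 = ⟦x⟧) := by
      intro p hp
      rcases mem_insert.1 hp with rfl | hp
      · exact mem_filter.2 ⟨hout x, rfl⟩
      · rw [mem_singleton.1 hp]
        exact mem_filter.2 ⟨hin x, rfl⟩
    calc 2 = ({outH x, inH x} : Finset _).card := (card_pair (hne x)).symm
      _ ≤ _ := card_le_card this
  have hsum : HE.card = ∑ q : Quotient r, (HE.filter (fun p => p.1 = q)).card :=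
    card_eq_sum_card_fiberwise (fun _ _ => mem_univ _)
  have heq : ∀ q : Quotient r, (HE.filter (fun p => p.1 = q)).card = 2 := by
    intro q
    by_contra hq
    have hq2 : 2 < (HE.filter (fun p => p.1 = q)).card := lt_of_le_of_ne (hge q) (Ne.symm hq)
    have : ∑ _q : Quotient r, 2 < ∑ q : Quotient r, (HE.filter (fun p => p.1 = q)).card :=
      sum_lt_sum (fun q _ => hge q) ⟨q, mem_univ _, hq2⟩
    rw [← hsum] at this
    simp at this
    omega
  have hfib : ∀ x, HE.filter (fun p => p.1 = ⟦x⟧) = {outH x, inH x} := by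
    intro x
    symm
    apply eq_of_subset_of_card_le
    · intro p hp
      rcases mem_insert.1 hp with rfl | hp
      · exact mem_filter.2 ⟨hout x, rfl⟩
      · rw [mem_singleton.1 hp]
        exact mem_filter.2 ⟨hin x, rfl⟩
    · rw [heq, card_pair (hne x)]
  -- local dichotomy
  have hdich : ∀ x y, r x y → (W x = W y ∧ W (x - 1) = W (y - 1)) ∨
      (W x = linv (W (y - 1)) ∧ W y = linv (W (x - 1))) := by
    intro x y hxy
    have hq : (⟦x⟧ : Quotient r) = ⟦y⟧ := Quotient.sound hxy
    have h1 : ({outH x, inH x} : Finset _) = {outH y, inH y} := by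
      rw [← hfib, ← hfib, hq]
    have h2 : outH x ∈ ({outH y, inH y} : Finset _) := by rw [← h1]; simp
    have h3 : inH x ∈ ({outH y, inH y} : Finset _) := by rw [← h1]; simp
    simp only [mem_insert, mem_singleton] at h2 h3
    rcases h2 with h2 | h2
    · left
      rcases h3 with h3 | h3
      · exact absurd (h2.trans h3.symm) (hne x)
      · refine ⟨congrArg Prod.snd h2, ?_⟩
        have := congrArg linv (congrArg Prod.snd h3)
        simpa [inH, linv_linv] using this
    · right
      rcases h3 with h3 | h3
      · exact ⟨congrArg Prod.snd h2, (congrArg Prod.snd h3).symm⟩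
      · exact absurd (h2.trans h3.symm) (hne x)
  have hpar : ∀ x y, r x y → W x = W y → r (x + 1) (y + 1) := by
    intro x y hxy hw
    have := hr x y (by rw [hw])
    unfold tl hd at this
    rw [hw] at this
    by_cases hy : (W y).2 = true
    · simp only [hy, if_true] at this
      exact this.1 hxy
    · simp only [hy, if_false, Bool.false_eq_true] at this
      exact this.2 hxy
  have hanti : ∀ x y, r x y → W x = linv (W (y - 1)) → r (x + 1) (y - 1) := by
    intro x y hxy hw
    have := hr x (y - 1) (by rw [hw]; rfl)
    unfold tl hd at this
    rw [hw] at this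
    by_cases hy : (W (y - 1)).2 = true
    · simp [hy, linv] at this
      exact this.2 hxy
    · simp [hy, linv] at this
      exact this.1 hxy
  rcases hdich x y hxy with ⟨h1, -⟩ | ⟨h1, -⟩
  · have : ∀ t : ℕ, r (x + t) (y + t) ∧ W (x + t) = W (y + t) := by
      intro t
      induction t with
      | zero => simpa using ⟨hxy, h1⟩
      | succ t ih =>
        have hr1 := hpar _ _ ih.1 ih.2
        have e1 : ∀ z : ZMod ℓ, z + ((t + 1 : ℕ) : ZMod ℓ) = z + t + 1 := by
          intro z; push_cast; ring
        rw [e1, e1]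
        refine ⟨hr1, ?_⟩
        rcases hdich _ _ hr1 with ⟨h, -⟩ | ⟨h, -⟩
        · exact h
        · exfalso
          rw [add_sub_cancel_right, ← ih.2] at h
          exact hred _ h
    have := hprim (y - x) (by
      intro i
      have h := (this (i - x).val).2
      simp only [ZMod.natCast_val, ZMod.cast_id', id_eq] at h
      rw [show x + (i - x) = i by ring, show y + (i - x) = i + (y - x) by ring] at h
      exact h.symm)
    exact (sub_eq_zero.1 this).symm
  · exfalso
    have : ∀ t : ℕ, r (x + t) (y - t) ∧ W (x + t) = linv (W (y - t - 1)) := by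
      intro t
      induction t with
      | zero => simpa using ⟨hxy, h1⟩
      | succ t ih =>
        have hr1 := hanti _ _ ih.1 ih.2
        have e1 : x + ((t + 1 : ℕ) : ZMod ℓ) = x + t + 1 := by push_cast; ring
        have e2 : y - ((t + 1 : ℕ) : ZMod ℓ) = y - t - 1 := by push_cast; ring
        rw [e1, e2]
        refine ⟨hr1, ?_⟩
        rcases hdich _ _ hr1 with ⟨h, -⟩ | ⟨h, -⟩
        · exfalso
          apply hred (x + t)
          rw [h, ih.2, linv_linv]
        · exact h
    have hv : (((y - 1 - x).val : ℕ) : ZMod ℓ) = y - 1 - x := by simp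
    rcases Nat.even_or_odd' (y - 1 - x).val with ⟨t, ht | ht⟩
    · have h := (this t).2
      rw [ht] at hv
      push_cast at hv
      have e : y - t - 1 = x + t := by linear_combination -hv
      rw [e] at h
      exact linv_ne _ h.symm
    · have h := (this t).2
      rw [ht] at hv
      push_cast at hv
      have e : y - t - 1 = x + t + 1 := by linear_combination -hv
      rw [e] at h
      apply hred (x + t)
      rw [h, linv_linv]

theorem exists_lt [NeZero ℓ] (hred : ∀ i, W (i + 1) ≠ linv (W i))
    (hprim : ∀ d : ZMod ℓ, (∀ i, W (i + d) = W i) → d = 0) (N : ℕ) :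
    ∀ (r : Setoid (ZMod ℓ)), Consistent W r → Nat.card {p : ZMod ℓ × ZMod ℓ // r p.1 p.2} ≤ N →
    ∃ lt : ZMod ℓ → ZMod ℓ → Prop, (∀ x y, r x y → x ≠ y → lt x y ∨ lt y x) ∧
      (∀ x y, lt x y → ¬ lt y x) ∧ (∀ x y z, lt x y → lt y z → lt x z) ∧
      (∀ i j, (W i).1 = (W j).1 → r (tl W i) (tl W j) → lt (tl W i) (tl W j) →
        lt (hd W i) (hd W j)) := by
  classical
  induction N with
  | zero =>
    intro r _ hc
    exfalso
    have : 0 < Nat.card {p : ZMod ℓ × ZMod ℓ // r p.1 p.2} :=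
      Nat.card_pos_iff.2 ⟨⟨⟨(0, 0), r.refl _⟩⟩, inferInstance⟩
    omega
  | succ N ih =>
    intro r hr hc
    by_cases hE : (univ.image (fun i => ((⟦tl W i⟧ : Quotient r), (W i).1))).card ≤
      Fintype.card (Quotient r)
    · refine ⟨fun _ _ => False, ?_, by simp, by simp, by simp⟩
      intro x y hxy hne
      exact absurd (eq_of_card_le W hred hprim r hr hE hxy) hne
    · obtain ⟨φ, hφ, x0, y0, hr0, hne0⟩ := exists_height W r (not_le.1 hE)
      let r' : Setoid (ZMod ℓ) :=
        { r := fun x y => r x y ∧ φ x = φ y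
          iseqv := ⟨fun x => ⟨r.refl x, rfl⟩, fun h => ⟨r.symm h.1, h.2.symm⟩,
            fun h1 h2 => ⟨r.trans h1.1 h2.1, h1.2.trans h2.2⟩⟩ }
      have hr'iff : ∀ x y, r' x y ↔ r x y ∧ φ x = φ y := fun _ _ => Iff.rfl
      have hr' : Consistent W r' := by
        intro i j hij
        rw [hr'iff, hr'iff]
        constructor
        · rintro ⟨h1, h2⟩
          have := hφ i j hij h1
          exact ⟨(hr i j hij).1 h1, by linarith⟩
        · rintro ⟨h1, h2⟩
          have h3 := (hr i j hij).2 h1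
          have := hφ i j hij h3
          exact ⟨h3, by linarith⟩
      have hc' : Nat.card {p : ZMod ℓ × ZMod ℓ // r' p.1 p.2} ≤ N := by
        have : Nat.card {p : ZMod ℓ × ZMod ℓ // r' p.1 p.2} <
            Nat.card {p : ZMod ℓ × ZMod ℓ // r p.1 p.2} := by
          have hss : {p : ZMod ℓ × ZMod ℓ | r' p.1 p.2} ⊂ {p : ZMod ℓ × ZMod ℓ | r p.1 p.2} := by
            refine Set.ssubset_iff_subset_ne.2 ⟨fun p hp => hp.1, fun h => ?_⟩
            have h1 : (x0, y0) ∈ {p : ZMod ℓ × ZMod ℓ | r p.1 p.2} := hr0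
            rw [← h] at h1
            exact hne0 h1.2
          exact Set.ncard_lt_ncard hss (Set.toFinite _)
        omega
      obtain ⟨lt, l1, l2, l3, l4⟩ := ih r' hr' hc'
      refine ⟨fun x y => φ x < φ y ∨ (φ x = φ y ∧ lt x y), ?_, ?_, ?_, ?_⟩
      · intro x y hxy hne
        rcases lt_trichotomy (φ x) (φ y) with h | h | h
        · exact Or.inl (Or.inl h)
        · rcases l1 x y ⟨hxy, h⟩ hne with h1 | h1
          · exact Or.inl (Or.inr ⟨h, h1⟩)
          · exact Or.inr (Or.inr ⟨h.symm, h1⟩)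
        · exact Or.inr (Or.inl h)
      · rintro x y (h | ⟨h, h1⟩) (h2 | ⟨h2, h3⟩)
        · linarith
        · linarith
        · linarith
        · exact l2 _ _ h1 h3
      · rintro x y z (h | ⟨h, h1⟩) (h2 | ⟨h2, h3⟩)
        · exact Or.inl (h.trans h2)
        · exact Or.inl (by linarith)
        · exact Or.inl (by linarith)
        · exact Or.inr ⟨h.trans h2, l3 _ _ _ h1 h3⟩
      · rintro i j hij hrij (h | ⟨h, h1⟩)
        · have := hφ i j hij hrij
          exact Or.inl (by linarith)
        · have := hφ i j hij hrij
          exact Or.inr ⟨by linarith, l4 i j hij ⟨hrij, h⟩ h1⟩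

theorem exists_stack [NeZero ℓ] (hred : ∀ i, W (i + 1) ≠ linv (W i))
    (hprim : ∀ d : ZMod ℓ, (∀ i, W (i + d) = W i) → d = 0) :
    ∃ h : ZMod ℓ → ℤ, IsStack W h := by
  classical
  obtain ⟨lt, l1, l2, l3, l4⟩ := exists_lt W hred hprim _ ⊤ (fun i j _ => by simp) le_rfl
  let h : ZMod ℓ → ℤ := fun x => ((univ.filter (fun y => lt y x)).card : ℤ)
  have hlt : ∀ x y, lt x y → h x < h y := by
    intro x y hxy
    have : univ.filter (fun z => lt z x) ⊂ univ.filter (fun z => lt z y) := by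
      refine ⟨fun z hz => ?_, fun hcon => ?_⟩
      · simp only [mem_filter, mem_univ, true_and] at hz ⊢
        exact l3 _ _ _ hz hxy
      · have : x ∈ univ.filter (fun z => lt z x) := hcon (by simpa using hxy)
        simp only [mem_filter, mem_univ, true_and] at this
        exact l2 _ _ this this
    exact Int.ofNat_lt.2 (card_lt_card this)
  refine ⟨h, ?_, ?_⟩
  · intro x y hxy
    by_contra hne
    rcases l1 x y (by simp) hne with h1 | h1
    · exact absurd hxy (hlt _ _ h1).ne
    · exact absurd hxy (hlt _ _ h1).ne'
  · intro i j hij hh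
    apply hlt
    apply l4 i j hij (by simp)
    rcases l1 (tl W i) (tl W j) (by simp) (by rintro h0; rw [h0] at hh; exact lt_irrefl _ hh) with h1 | h1
    · exact h1
    · exact absurd (hlt _ _ h1) (by omega)

end Stack

end BBN


namespace BBN

open Finset

/-! ### Crossed homomorphisms (path functions) on a free group acting on a set -/

section Cr

variable {A X M : Type*} [MulAction (FreeGroup A) X] [Group M]

/-- The homomorphism to the wreath product determined by edge values. -/
def crHom (f : A → X → M) : FreeGroup A →* (X → M) ⋊[mulAutArrow] FreeGroup A :=
  FreeGroup.lift fun a => ⟨f a, FreeGroup.of a⟩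

/-- The value of the path reading `g` starting at `v`. -/
def cr (f : A → X → M) (g : FreeGroup A) (v : X) : M := (crHom f g).left v

theorem crHom_right (f : A → X → M) (g : FreeGroup A) : (crHom f g).right = g := by
  have : (SemidirectProduct.rightHom.comp (crHom f)) = MonoidHom.id _ := by
    ext a
    simp [crHom]
  exact DFunLike.congr_fun this g

theorem cr_one (f : A → X → M) (v : X) : cr f 1 v = 1 := by
  simp [cr]

theorem cr_mul (f : A → X → M) (g h : FreeGroup A) (v : X) :
    cr f (g * h) v = cr f g v * cr f h (g⁻¹ • v) := by
  unfold cr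
  rw [map_mul, SemidirectProduct.mul_left, crHom_right]
  rfl

theorem cr_of (f : A → X → M) (a : A) (v : X) : cr f (FreeGroup.of a) v = f a v := by
  simp [cr, crHom]

theorem cr_inv (f : A → X → M) (g : FreeGroup A) (v : X) :
    cr f g⁻¹ v = (cr f g (g • v))⁻¹ := by
  have := cr_mul f g g⁻¹ (g • v)
  rw [mul_inv_cancel, cr_one, inv_smul_smul] at this
  exact (inv_eq_of_mul_eq_one_right this.symm).symm

/-- A single letter as a group element. -/
def lett (p : A × Bool) : FreeGroup A := FreeGroup.mk [p]

theorem lett_true (a : A) : lett (a, true) = FreeGroup.of a := rfl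

theorem lett_false (a : A) : lett (a, false) = (FreeGroup.of a)⁻¹ := rfl

theorem lett_linv (p : A × Bool) : lett (linv p) = (lett p)⁻¹ := by
  rcases p with ⟨a, _ | _⟩
  · simp [linv, lett_true, lett_false]
  · simp [linv, lett_true, lett_false]

/-- The edge traversed by a letter starting at a vertex. -/
def eo (v : X) (p : A × Bool) : X × A := if p.2 then (v, p.1) else (FreeGroup.of p.1 • v, p.1)

theorem eo_linv (v : X) (p : A × Bool) : eo ((lett p)⁻¹ • v) (linv p) = eo v p := by
  rcases p with ⟨a, _ | _⟩
  · simp [linv, eo, lett_false]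
  · simp [linv, eo, lett_true]

theorem cr_lett_true (f : A → X → M) (v : X) (p : A × Bool) (h : p.2 = true) :
    cr f (lett p) v = f (eo v p).2 (eo v p).1 := by
  rcases p with ⟨a, b⟩
  simp only at h
  subst h
  simp [lett_true, cr_of, eo]

theorem cr_lett_false (f : A → X → M) (v : X) (p : A × Bool) (h : p.2 = false) :
    cr f (lett p) v = (f (eo v p).2 (eo v p).1)⁻¹ := by
  rcases p with ⟨a, b⟩
  simp only at h
  subst h
  simp [lett_false, cr_inv, cr_of, eo]

/-- The word `L`, read from `v`, avoids the edge `e`. -/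
def Avoids (e : X × A) (v : X) (L : List (A × Bool)) : Prop :=
  ∀ L1 p L2, L = L1 ++ p :: L2 → eo ((FreeGroup.mk L1)⁻¹ • v) p ≠ e

theorem avoids_cons {e : X × A} {v : X} {p : A × Bool} {L : List (A × Bool)}
    (h : Avoids e v (p :: L)) : eo v p ≠ e ∧ Avoids e ((lett p)⁻¹ • v) L := by
  refine ⟨?_, ?_⟩
  · have := h [] p L rfl
    rw [← FreeGroup.one_eq_mk] at this
    simpa using this
  · intro L1 q L2 hL
    have := h (p :: L1) q L2 (by rw [hL]; rfl)
    have e1 : FreeGroup.mk (p :: L1) = lett p * FreeGroup.mk L1 := by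
      simp [lett, FreeGroup.mul_mk]
    rw [e1, mul_inv_rev, mul_smul] at this
    exact this

theorem mk_cons (p : A × Bool) (L : List (A × Bool)) :
    FreeGroup.mk (p :: L) = lett p * FreeGroup.mk L := by
  simp [lett, FreeGroup.mul_mk]

/-- Path functions with the tautological value outside `e` are tautological on paths avoiding
`e`. -/
theorem cr_avoid (f : A → X → FreeGroup A) (e : X × A)
    (hf : ∀ a v, (v, a) ≠ e → f a v = FreeGroup.of a) (L : List (A × Bool)) :
    ∀ v : X, Avoids e v L → cr f (FreeGroup.mk L) v = FreeGroup.mk L := by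
  induction L with
  | nil => intro v _; rw [← FreeGroup.one_eq_mk, cr_one]
  | cons p L ih =>
    intro v h
    obtain ⟨h1, h2⟩ := avoids_cons h
    rw [mk_cons, cr_mul, ih _ h2]
    congr 1
    rcases p with ⟨a, _ | _⟩
    · rw [cr_lett_false _ _ _ rfl, hf _ _ (by simpa using h1)]
      rfl
    · rw [cr_lett_true _ _ _ rfl, hf _ _ (by simpa using h1)]
      rfl

end Cr

/-! ### Corners -/

section Corner

variable {A X M : Type*} [MulAction (FreeGroup A) X] [Group M] {ℓ : ℕ} (W : ZMod ℓ → A × Bool)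

/-- Subword of the periodic word starting at `i` of length `t`. -/
def wd (i : ZMod ℓ) (t : ℕ) : List (A × Bool) := (List.range t).map fun s : ℕ => W (i + (s : ZMod ℓ))

/-- The corresponding group element. -/
def P (i : ZMod ℓ) (t : ℕ) : FreeGroup A := FreeGroup.mk (wd W i t)

theorem wd_length (i : ZMod ℓ) (t : ℕ) : (wd W i t).length = t := by simp [wd]

theorem wd_add (i : ZMod ℓ) (s t : ℕ) : wd W i (s + t) = wd W i s ++ wd W (i + s) t := by
  unfold wd
  rw [List.range_add, List.map_append, List.map_map]
  congr 2
  funext j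
  simp [add_assoc]

theorem wd_one (i : ZMod ℓ) : wd W i 1 = [W i] := by simp [wd]

theorem P_zero (i : ZMod ℓ) : P W i 0 = 1 := by simp [P, wd, FreeGroup.one_eq_mk]

theorem P_one (i : ZMod ℓ) : P W i 1 = lett (W i) := by simp [P, wd_one, lett]

theorem P_add (i : ZMod ℓ) (s t : ℕ) : P W i (s + t) = P W i s * P W (i + s) t := by
  rw [P, wd_add, ← FreeGroup.mul_mk]; rfl

theorem P_mul (t k : ℕ) (ht : ∀ i, W (i + t) = W i) (i : ZMod ℓ) :
    P W i (k * t) = P W i t ^ k := by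
  induction k with
  | zero => simp [P_zero]
  | succ k ih =>
    have hper : ∀ k : ℕ, ∀ i, W (i + (k * t : ℕ)) = W i := by
      intro k
      induction k with
      | zero => simp
      | succ k ih2 =>
        intro i
        have : i + (((k + 1) * t : ℕ) : ZMod ℓ) = (i + ((k * t : ℕ) : ZMod ℓ)) + t := by
          push_cast; ring
        rw [this, ht, ih2]
    rw [add_mul, one_mul, P_add, ih, pow_succ]
    congr 1
    unfold P wd
    congr 2
    funext s
    rw [add_right_comm, hper]

/-- The rotation map on corners. -/
def sg (x : X × ZMod ℓ) : X × ZMod ℓ := ((lett (W x.2))⁻¹ • x.1, x.2 + 1)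

theorem sg_iter (x : X × ZMod ℓ) (t : ℕ) :
    (sg W)^[t] x = ((P W x.2 t)⁻¹ • x.1, x.2 + t) := by
  induction t with
  | zero => simp [P_zero]
  | succ t ih =>
    rw [Function.iterate_succ_apply', ih, P_add, P_one, mul_inv_rev, mul_smul]
    simp [sg, add_assoc]

/-- The edge below a side. -/
def ed (x : X × ZMod ℓ) : X × A := eo x.1 (W x.2)

/-- Value of the path function along a corner path. -/
def pth (f : A → X → M) (x : X × ZMod ℓ) (t : ℕ) : M := cr f (P W x.2 t) x.1

theorem pth_add (f : A → X → M) (x : X × ZMod ℓ) (s t : ℕ) :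
    pth W f x (s + t) = pth W f x s * pth W f ((sg W)^[s] x) t := by
  unfold pth
  rw [P_add, cr_mul, sg_iter]

theorem pth_zero (f : A → X → M) (x : X × ZMod ℓ) : pth W f x 0 = 1 := by
  simp [pth, P_zero, cr_one]

theorem pth_mul (f : A → X → M) (x : X × ZMod ℓ) (m k : ℕ) (hx : (sg W)^[m] x = x) :
    pth W f x (k * m) = pth W f x m ^ k := by
  induction k with
  | zero => simp [pth_zero]
  | succ k ih =>
    have : (sg W)^[k * m] x = x := by
      have h : Function.IsPeriodicPt (sg W) m x := hx
      exact h.const_mul k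
    rw [add_mul, one_mul, pth_add, this, ih, pow_succ]

theorem avoids_wd {e : X × A} (t : ℕ) (x : X × ZMod ℓ)
    (h : ∀ s < t, ed W ((sg W)^[s] x) ≠ e) : Avoids e x.1 (wd W x.2 t) := by
  intro L1 p L2 hL
  have hlen : L1.length < t := by
    have := congrArg List.length hL
    rw [wd_length] at this
    simp at this
    omega
  obtain ⟨k, rfl⟩ : ∃ k, t = L1.length + (1 + k) := ⟨t - L1.length - 1, by omega⟩
  rw [wd_add, wd_add, wd_one] at hL
  obtain ⟨h1, h2⟩ := List.append_inj hL (by rw [wd_length])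
  simp only [List.cons_append, List.nil_append, List.cons.injEq] at h2
  have := h _ hlen
  rw [sg_iter] at this
  unfold ed at this
  simp only at this
  rw [h2.1, P, h1] at this
  exact this

end Corner

end BBN


namespace BBN

open Finset

/-! ### Homology of Schreier graphs -/

section Homology

variable {A X : Type*} [MulAction (FreeGroup A) X] (k : Type*) [Field k]

/-- The chain of the path reading `g` from `v`. -/
noncomputable def chain (g : FreeGroup A) (v : X) : (X × A) →₀ k :=
  Multiplicative.toAdd
    (cr (fun a v => Multiplicative.ofAdd (Finsupp.single ((v, a) : X × A) (1 : k))) g v)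

theorem chain_one (v : X) : chain k (1 : FreeGroup A) v = 0 := by
  simp [chain, cr_one]

theorem chain_mul (g h : FreeGroup A) (v : X) :
    chain k (g * h) v = chain k g v + chain k h (g⁻¹ • v) := by
  simp [chain, cr_mul]

theorem chain_inv (g : FreeGroup A) (v : X) :
    chain k g⁻¹ v = - chain k g (g • v) := by
  simp [chain, cr_inv]

theorem chain_of (a : A) (v : X) :
    chain k (FreeGroup.of a) v = Finsupp.single (v, a) 1 := by
  simp [chain, cr_of]

theorem chain_lett (p : A × Bool) (v : X) :
    chain k (lett p) v = Finsupp.single (eo v p) (if p.2 then 1 else -1) := by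
  rcases p with ⟨a, _ | _⟩
  · simp [lett_false, chain_inv, chain_of, eo]
  · simp [lett_true, chain_of, eo]

/-- Boundary map. -/
noncomputable def bd : ((X × A) →₀ k) →ₗ[k] (X →₀ k) :=
  Finsupp.linearCombination k fun e : X × A =>
    Finsupp.single ((FreeGroup.of e.2)⁻¹ • e.1) (1 : k) - Finsupp.single e.1 1

theorem bd_single (e : X × A) (c : k) : bd k (Finsupp.single e c) =
    c • (Finsupp.single ((FreeGroup.of e.2)⁻¹ • e.1) (1 : k) - Finsupp.single e.1 1) := by
  simp [bd]

theorem bd_chain (g : FreeGroup A) : ∀ v : X,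
    bd k (chain k g v) = Finsupp.single (g⁻¹ • v) 1 - Finsupp.single v 1 := by
  induction g using FreeGroup.induction_on with
  | C1 => intro v; simp [chain_one]
  | of a => intro v; simp [chain_of, bd_single]
  | inv_of a ih =>
    intro v
    rw [chain_inv, map_neg, ih]
    simp
  | mul g h ihg ihh =>
    intro v
    rw [chain_mul, map_add, ihg, ihh, mul_inv_rev, mul_smul]
    abel

end Homology

section Schreier

variable {A : Type*} (k : Type*) [Field k] (H : Subgroup (FreeGroup A))

/-- Base vertex of the Schreier graph. -/
def base : FreeGroup A ⧸ H := ((1 : FreeGroup A) : FreeGroup A ⧸ H)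

theorem smul_base_eq_iff (g h : FreeGroup A) : g • base H = h • base H ↔ g⁻¹ * h ∈ H := by
  unfold base
  rw [MulAction.Quotient.smul_coe, MulAction.Quotient.smul_coe, QuotientGroup.eq]
  simp

theorem smul_base_iff (g : FreeGroup A) : g • base H = base H ↔ g ∈ H := by
  have := smul_base_eq_iff H g 1
  rw [one_smul] at this
  rw [this]; simp

theorem exists_smul_base (v : FreeGroup A ⧸ H) : ∃ g : FreeGroup A, g⁻¹ • base H = v := by
  induction v using QuotientGroup.induction_on with | _ g
  exact ⟨g⁻¹, by simp [base]⟩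

theorem ker_bd_le_span :
    LinearMap.ker (bd (A := A) (X := FreeGroup A ⧸ H) k) ≤
      Submodule.span k {z | ∃ h ∈ H, z = chain k h (base H)} := by
  choose τ hτ using exists_smul_base H
  let L : ((FreeGroup A ⧸ H) →₀ k) →ₗ[k] (((FreeGroup A ⧸ H) × A) →₀ k) :=
    Finsupp.linearCombination k fun v => chain k (τ v) (base H)
  let hh : (FreeGroup A ⧸ H) × A → FreeGroup A := fun e =>
    τ e.1 * FreeGroup.of e.2 * (τ ((FreeGroup.of e.2)⁻¹ • e.1))⁻¹
  have hmem : ∀ e, hh e ∈ H := by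
    intro e
    rw [← smul_base_iff]
    have h1 := hτ ((FreeGroup.of e.2)⁻¹ • e.1)
    simp only [hh, mul_smul]
    rw [h1, smul_inv_smul]
    exact (inv_smul_eq_iff.1 (hτ e.1)).symm
  let Θ : (((FreeGroup A ⧸ H) × A) →₀ k) →ₗ[k] (((FreeGroup A ⧸ H) × A) →₀ k) :=
    Finsupp.linearCombination k fun e => chain k (hh e) (base H)
  have hid : ∀ z, z = Θ z + L (bd k z) := by
    intro z
    have : (LinearMap.id : (((FreeGroup A ⧸ H) × A) →₀ k) →ₗ[k] _) = Θ + L.comp (bd k) := by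
      apply Finsupp.lhom_ext'
      intro e
      ext1
      simp only [LinearMap.comp_apply, LinearMap.id_apply, LinearMap.add_apply,
        Finsupp.lsingle_apply, bd_single, one_smul, map_sub]
      simp only [Θ, L, Finsupp.linearCombination_single, one_smul]
      have e1 : chain k (hh e) (base H) = chain k (τ e.1) (base H) + Finsupp.single e 1
          - chain k (τ ((FreeGroup.of e.2)⁻¹ • e.1)) (base H) := by
        simp only [hh]
        rw [chain_mul, chain_mul, chain_inv, chain_of, hτ, mul_inv_rev, mul_smul, hτ]
        have h3 : τ ((FreeGroup.of e.2)⁻¹ • e.1) • (FreeGroup.of e.2)⁻¹ • e.1 = base H := by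
          conv_lhs => rw [← hτ ((FreeGroup.of e.2)⁻¹ • e.1)]
          rw [hτ]
          rw [inv_smul_eq_iff.1 (hτ ((FreeGroup.of e.2)⁻¹ • e.1))]
        rw [h3]
        abel
      rw [e1]
      abel
    conv_lhs => rw [← LinearMap.id_apply (R := k) z, this]
    rfl
  intro z hz
  rw [LinearMap.mem_ker] at hz
  rw [hid z, hz, map_zero, add_zero]
  simp only [Θ]
  rw [Finsupp.linearCombination_apply]
  refine Submodule.sum_mem _ fun e _ => Submodule.smul_mem _ _ (Submodule.subset_span ?_)
  exact ⟨hh e, hmem e, rfl⟩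

theorem chain_mem_of_closure (gens : Set (FreeGroup A)) (hH : H = Subgroup.closure gens)
    (V : Submodule k (((FreeGroup A ⧸ H) × A) →₀ k)) (hV : ∀ g ∈ gens, chain k g (base H) ∈ V)
    (h : FreeGroup A) (hh : h ∈ H) : chain k h (base H) ∈ V := by
  have hh2 : h ∈ Subgroup.closure gens := hH ▸ hh
  induction hh2 using Subgroup.closure_induction with
  | mem g hg => exact hV g hg
  | one => rw [chain_one]; exact V.zero_mem
  | mul x y hx hy ihx ihy =>
    rw [← hH] at hx hy
    rw [chain_mul, (smul_base_iff H _).2 (H.inv_mem hx)]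
    exact V.add_mem (ihx hx) (ihy hy)
  | inv x hx ih =>
    rw [← hH] at hx
    rw [chain_inv, (smul_base_iff H _).2 hx]
    exact V.neg_mem (ih hx)

end Schreier

section Rank

variable {A X : Type*} [MulAction (FreeGroup A) X] (k : Type*) [Field k]

theorem rank_ineq (G : Finset ((X × A) →₀ k))
    (hG : LinearMap.ker (bd (A := A) (X := X) k) ≤ Submodule.span k (G : Set ((X × A) →₀ k)))
    (E : Finset (X × A)) (V : Finset X) (v0 : X) (hv0 : v0 ∈ V)
    (hE : ∀ e ∈ E, e.1 ∈ V ∧ (FreeGroup.of e.2)⁻¹ • e.1 ∈ V) :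
    E.card + 1 ≤ V.card + G.card := by
  classical
  let ι : (E → k) →ₗ[k] ((X × A) →₀ k) :=
    Fintype.linearCombination k (fun e : E => Finsupp.single e.1 (1 : k))
  let D0 : ((E → k) × k) →ₗ[k] (X →₀ k) :=
    LinearMap.coprod ((bd k).comp ι) (LinearMap.toSpanSingleton k _ (Finsupp.single v0 1))
  let res : (X →₀ k) →ₗ[k] (V → k) := LinearMap.pi fun v => Finsupp.lapply v.1
  let D := res.comp D0
  have hsupp : ∀ z, D0 z ∈ Finsupp.supported k k (V : Set X) := by
    rintro ⟨z, c⟩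
    simp only [D0, LinearMap.coprod_apply, LinearMap.comp_apply, LinearMap.toSpanSingleton_apply]
    refine Submodule.add_mem _ ?_ (Submodule.smul_mem _ _ (Finsupp.single_mem_supported k 1 hv0))
    simp only [ι, Fintype.linearCombination_apply, map_sum, map_smul, bd_single, one_smul]
    refine Submodule.sum_mem _ fun e _ => Submodule.smul_mem _ _ (Submodule.sub_mem _ ?_ ?_)
    · exact Finsupp.single_mem_supported k 1 (hE e.1 e.2).2
    · exact Finsupp.single_mem_supported k 1 (hE e.1 e.2).1
  have hker : ∀ z ∈ LinearMap.ker D, D0 z = 0 := by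
    intro z hz
    have hz2 : res (D0 z) = 0 := hz
    ext v
    by_cases hv : v ∈ V
    · exact congrFun hz2 ⟨v, hv⟩
    · by_contra hne
      exact hv (hsupp z (Finsupp.mem_support_iff.2 hne))
  let aug : (X →₀ k) →ₗ[k] k := Finsupp.linearCombination k fun _ => (1 : k)
  have haug : ∀ z, aug (bd (A := A) k z) = 0 := by
    intro z
    have : aug.comp (bd (A := A) k) = 0 := by
      apply Finsupp.lhom_ext'
      intro e
      ext1
      simp [bd_single, aug]
    exact DFunLike.congr_fun this z
  have hker2 : ∀ z ∈ LinearMap.ker D, z.2 = 0 ∧ bd k (ι z.1) = 0 := by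
    intro z hz
    have h0 := hker z hz
    have h1 := congrArg aug h0
    simp only [D0, LinearMap.coprod_apply, LinearMap.comp_apply, LinearMap.toSpanSingleton_apply,
      map_add, haug, zero_add] at h0 h1
    have h2 : z.2 = 0 := by simpa [aug] using h1
    refine ⟨h2, ?_⟩
    rw [h2] at h0
    simpa using h0
  have hιinj : Function.Injective ι := by
    intro z z' h
    funext e
    have key : ∀ z : E → k, (ι z) e.1 = z e := by
      intro z
      simp only [ι, Fintype.linearCombination_apply, Finsupp.finsetSum_apply, Finsupp.smul_apply]
      rw [Finset.sum_eq_single e]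
      · simp
      · intro b _ hb
        rw [Finsupp.single_eq_of_ne]
        · simp
        · intro h
          exact hb (Subtype.ext h.symm)
      · simp
    rw [← key z, ← key z', h]
  let S := Submodule.span k (G : Set ((X × A) →₀ k))
  let j : LinearMap.ker D →ₗ[k] S :=
    LinearMap.codRestrict S ((ι.comp (LinearMap.fst k _ _)).comp (LinearMap.ker D).subtype) (by
      intro z
      exact hG (hker2 z.1 z.2).2)
  have hj : Function.Injective j := by
    intro z z' h
    have h1 : ι z.1.1 = ι z'.1.1 := congrArg Subtype.val h
    exact Subtype.ext (Prod.ext (hιinj h1) ((hker2 z.1 z.2).1.trans (hker2 z'.1 z'.2).1.symm))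
  have f1 : Module.finrank k (LinearMap.ker D) ≤ G.card :=
    (LinearMap.finrank_le_finrank_of_injective hj).trans (finrank_span_finset_le_card G)
  have f2 := LinearMap.finrank_range_add_finrank_ker D
  have f3 : Module.finrank k (LinearMap.range D) ≤ V.card := by
    have := Submodule.finrank_le (LinearMap.range D)
    rwa [Module.finrank_fintype_fun_eq_card, Fintype.card_coe] at this
  rw [Module.finrank_prod, Module.finrank_fintype_fun_eq_card, Fintype.card_coe,
    Module.finrank_self] at f2
  omega

end Rank

end BBN


namespace BBN

open Finset

/-! ### Top corners and sides -/

section Tops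

variable {A X : Type*} [MulAction (FreeGroup A) X] {ℓ : ℕ} (W : ZMod ℓ → A × Bool)

/-- Tail corner of a side. -/
def tc (x : X × ZMod ℓ) : X × ZMod ℓ := if (W x.2).2 then x else sg W x

/-- Head corner of a side. -/
def hc (x : X × ZMod ℓ) : X × ZMod ℓ := if (W x.2).2 then sg W x else x

theorem tc_fst (x : X × ZMod ℓ) : (tc W x).1 = (ed W x).1 := by
  unfold tc ed eo sg lett
  rcases hx : W x.2 with ⟨a, _ | _⟩
  · simp
    rfl
  · simp

theorem hc_fst (x : X × ZMod ℓ) : (hc W x).1 = (FreeGroup.of (ed W x).2)⁻¹ • (ed W x).1 := by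
  unfold hc ed eo sg lett
  rcases hx : W x.2 with ⟨a, _ | _⟩
  · simp
  · simp
    rfl

theorem tc_snd (x : X × ZMod ℓ) : (tc W x).2 = tl W x.2 := by
  unfold tc tl sg
  split_ifs <;> rfl

theorem hc_snd (x : X × ZMod ℓ) : (hc W x).2 = hd W x.2 := by
  unfold hc hd sg
  split_ifs <;> rfl

theorem ed_snd (x : X × ZMod ℓ) : (ed W x).2 = (W x.2).1 := by
  unfold ed eo
  split_ifs <;> rfl

theorem tc_or (x : X × ZMod ℓ) : (tc W x = x ∧ hc W x = sg W x) ∨ (tc W x = sg W x ∧ hc W x = x) := by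
  unfold tc hc
  split_ifs <;> simp

/-- Top corner. -/
def ctop (h : ZMod ℓ → ℤ) (K : Finset (X × ZMod ℓ)) (x : X × ZMod ℓ) : Prop :=
  ∀ y ∈ K, y.1 = x.1 → h y.2 ≤ h x.2

/-- Top side. -/
def stp (h : ZMod ℓ → ℤ) (K : Finset (X × ZMod ℓ)) (x : X × ZMod ℓ) : Prop :=
  ∀ y ∈ K, ed W y = ed W x → h (tl W y.2) ≤ h (tl W x.2)

variable {W} {h : ZMod ℓ → ℤ} {K : Finset (X × ZMod ℓ)}

theorem stp_of_tc (hK : ∀ x ∈ K, sg W x ∈ K) {x : X × ZMod ℓ} (hx : ctop h K (tc W x)) :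
    stp W h K x := by
  intro y hy hyx
  have h1 : tc W y ∈ K := by
    rcases tc_or W y with h | h
    · rw [h.1]; exact hy
    · rw [h.1]; exact hK _ hy
  have := hx _ h1 (by rw [tc_fst, tc_fst, hyx])
  rwa [tc_snd, tc_snd] at this

theorem stp_of_hc (hS : IsStack W h) (hK : ∀ x ∈ K, sg W x ∈ K) {x : X × ZMod ℓ}
    (hx : ctop h K (hc W x)) : stp W h K x := by
  intro y hy hyx
  have h1 : hc W y ∈ K := by
    rcases tc_or W y with h | h
    · rw [h.2]; exact hK _ hy
    · rw [h.2]; exact hy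
  have := hx _ h1 (by rw [hc_fst, hc_fst, hyx])
  rw [hc_snd, hc_snd] at this
  by_contra hlt
  have := hS.compat x.2 y.2 (by rw [← ed_snd, ← ed_snd, hyx]) (by simpa using hlt)
  omega

theorem stp_of_ctop (hS : IsStack W h) (hK : ∀ x ∈ K, sg W x ∈ K) {x : X × ZMod ℓ}
    (hx : ctop h K x) : stp W h K x := by
  rcases tc_or W x with h | h
  · exact stp_of_tc hK (by rw [h.1]; exact hx)
  · exact stp_of_hc hS hK (by rw [h.2]; exact hx)

theorem stp_of_ctop_sg (hS : IsStack W h) (hK : ∀ x ∈ K, sg W x ∈ K) {x : X × ZMod ℓ}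
    (hx : ctop h K (sg W x)) : stp W h K x := by
  rcases tc_or W x with h | h
  · exact stp_of_hc hS hK (by rw [h.2]; exact hx)
  · exact stp_of_tc hK (by rw [h.1]; exact hx)

/-- Sides over the same edge with the same tail height coincide. -/
theorem side_eq (hred : ∀ i, W (i + 1) ≠ linv (W i)) (hS : IsStack W h) {x y : X × ZMod ℓ}
    (hxy : ed W x = ed W y) (hh : h (tl W x.2) = h (tl W y.2)) : x = y := by
  have h1 : x.2 = y.2 := tl_inj W hred (by rw [← ed_snd, ← ed_snd, hxy]) (hS.inj hh)
  refine Prod.ext ?_ h1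
  have h2 : tc W x = tc W y := Prod.ext (by rw [tc_fst, tc_fst, hxy]) (by rw [tc_snd, tc_snd, h1])
  unfold tc at h2
  rw [h1] at h2
  split_ifs at h2
  · rw [h2]
  · have := congrArg Prod.fst h2
    simp only [sg] at this
    rw [h1] at this
    exact smul_left_cancel _ this

theorem corner_eq (hS : IsStack W h) {x y : X × ZMod ℓ}
    (hxy : x.1 = y.1) (hh : h x.2 = h y.2) : x = y := Prod.ext hxy (hS.inj hh)

open Classical in
theorem card_tops {α β : Type*} [DecidableEq β] (K : Finset α) (π : α → β) (κ : α → ℤ)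
    (hinj : ∀ x y, π x = π y → κ x = κ y → x = y) :
    (K.filter fun x => ∀ y ∈ K, π y = π x → κ y ≤ κ x).card = (K.image π).card := by
  have : K.image π = (K.filter fun x => ∀ y ∈ K, π y = π x → κ y ≤ κ x).image π := by
    apply Finset.Subset.antisymm
    · intro b hb
      obtain ⟨x, hx, rfl⟩ := mem_image.1 hb
      obtain ⟨y, hy, hmax⟩ := exists_max_image (K.filter fun y => π y = π x) κ
        ⟨x, mem_filter.2 ⟨hx, rfl⟩⟩
      rw [mem_filter] at hy
      refine mem_image.2 ⟨y, mem_filter.2 ⟨hy.1, fun z hz hzy => ?_⟩, hy.2⟩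
      exact hmax z (mem_filter.2 ⟨hz, hzy.trans hy.2⟩)
    · exact image_subset_image (filter_subset _ _)
  rw [this, card_image_of_injOn]
  intro x hx y hy hxy
  simp only [coe_filter, Set.mem_ofPred_eq] at hx hy
  exact hinj x y hxy (le_antisymm (hy.2 x hx.1 hxy) (hx.2 y hy.1 hxy.symm))

open Classical in
theorem card_starts (hred : ∀ i, W (i + 1) ≠ linv (W i)) (hS : IsStack W h)
    (hK : ∀ x ∈ K, sg W x ∈ K) :
    (K.filter fun x => stp W h K x ∧ ¬ ctop h K x).card + (K.image Prod.fst).card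
      = (K.image (ed W)).card := by
  rw [← card_tops K Prod.fst (fun x => h x.2) (fun x y h1 h2 => corner_eq hS h1 h2),
    ← card_tops K (ed W) (fun x => h (tl W x.2)) (fun x y h1 h2 => side_eq hred hS h1 h2)]
  rw [← card_union_of_disjoint]
  · congr 1
    ext x
    simp only [mem_union, mem_filter]
    constructor
    · rintro (⟨h1, h2, _⟩ | ⟨h1, h2⟩)
      · exact ⟨h1, h2⟩
      · exact ⟨h1, stp_of_ctop hS hK h2⟩
    · rintro ⟨h1, h2⟩
      by_cases h3 : ctop h K x
      · exact Or.inr ⟨h1, h3⟩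
      · exact Or.inl ⟨h1, h2, h3⟩
  · rw [disjoint_left]
    intro x hx hx2
    rw [mem_filter] at hx hx2
    exact hx.2.2 hx2.2

open Classical in
theorem starts_le (hred : ∀ i, W (i + 1) ≠ linv (W i)) (hS : IsStack W h)
    (hK : ∀ x ∈ K, sg W x ∈ K) (hne : K.Nonempty) (k : Type*) [Field k]
    (G : Finset ((X × A) →₀ k))
    (hG : LinearMap.ker (bd (A := A) (X := X) k) ≤ Submodule.span k (G : Set ((X × A) →₀ k))) :
    (K.filter fun x => stp W h K x ∧ ¬ ctop h K x).card + 1 ≤ G.card := by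
  obtain ⟨x0, hx0⟩ := hne
  have h1 := card_starts hred hS hK
  have h2 := rank_ineq k G hG (K.image (ed W)) (K.image Prod.fst) x0.1 (mem_image_of_mem _ hx0) (by
    intro e he
    obtain ⟨x, hx, rfl⟩ := mem_image.1 he
    rw [← hc_fst, ← tc_fst]
    rcases tc_or W x with h | h
    · rw [h.1, h.2]; exact ⟨mem_image_of_mem _ hx, mem_image_of_mem _ (hK _ hx)⟩
    · rw [h.1, h.2]; exact ⟨mem_image_of_mem _ (hK _ hx), mem_image_of_mem _ hx⟩)
  omega

theorem walk_back (hS : IsStack W h) (hK : ∀ x ∈ K, sg W x ∈ K) {t : ℕ} :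
    ∀ {x : X × ZMod ℓ}, ctop h K ((sg W)^[t] x) →
    (∀ s < t, ¬ (stp W h K ((sg W)^[s] x) ∧ ¬ ctop h K ((sg W)^[s] x))) →
    ∀ s ≤ t, ctop h K ((sg W)^[s] x) := by
  induction t with
  | zero => intro x hx _ s hs; obtain rfl : s = 0 := by omega
            exact hx
  | succ t ih =>
    intro x hx hst s hs
    have h1 : ctop h K ((sg W)^[t] x) := by
      have h2 := hst t (by omega)
      rw [Function.iterate_succ_apply'] at hx
      have := stp_of_ctop_sg hS hK hx
      tauto
    rcases Nat.lt_or_ge t s with h | h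
    · obtain rfl : s = t + 1 := by omega
      exact hx
    · exact ih h1 (fun s hs => hst s (by omega)) s h

end Tops

end BBN


namespace BBN

open Finset

/-! ### Orbits of corners and runs of free sides -/

section Orbits

variable {A X : Type*} [MulAction (FreeGroup A) X] {ℓ : ℕ} (W : ZMod ℓ → A × Bool) (N : ℕ)

open Classical in
/-- The orbit of a corner. -/
noncomputable def orb (x : X × ZMod ℓ) : Finset (X × ZMod ℓ) :=
  (range N).image fun t => (sg W)^[t] x

variable {W N}

theorem mem_orb {x y : X × ZMod ℓ} : y ∈ orb W N x ↔ ∃ t < N, (sg W)^[t] x = y := by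
  simp [orb]

theorem mem_orb_iter (hN : 0 < N) {x : X × ZMod ℓ} (hx : (sg W)^[N] x = x) (t : ℕ) :
    (sg W)^[t] x ∈ orb W N x := by
  refine mem_orb.2 ⟨t % N, Nat.mod_lt _ hN, ?_⟩
  exact Function.IsPeriodicPt.iterate_mod_apply (f := sg W) (n := N) hx t

theorem iter_periodic {x : X × ZMod ℓ} (hx : (sg W)^[N] x = x) (t : ℕ) :
    (sg W)^[N] ((sg W)^[t] x) = (sg W)^[t] x := by
  rw [← Function.iterate_add_apply, add_comm, Function.iterate_add_apply, hx]

theorem iter_back (hN : 0 < N) {x : X × ZMod ℓ} (hx : (sg W)^[N] x = x) (t : ℕ) :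
    ∃ s, (sg W)^[s] ((sg W)^[t] x) = x := by
  refine ⟨N * t - t, ?_⟩
  rw [← Function.iterate_add_apply]
  have : N * t - t + t = t * N := by
    have : t ≤ N * t := Nat.le_mul_of_pos_left t hN
    rw [Nat.mul_comm t N]; omega
  rw [this]
  exact Function.IsPeriodicPt.const_mul (f := sg W) (m := N) hx t

theorem orb_iter (hN : 0 < N) {x : X × ZMod ℓ} (hx : (sg W)^[N] x = x) (t : ℕ) :
    orb W N ((sg W)^[t] x) = orb W N x := by
  apply Finset.Subset.antisymm
  · intro y hy
    obtain ⟨s, _, rfl⟩ := mem_orb.1 hy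
    rw [← Function.iterate_add_apply]
    exact mem_orb_iter hN hx _
  · intro y hy
    obtain ⟨s, _, rfl⟩ := mem_orb.1 hy
    obtain ⟨r, hr⟩ := iter_back hN hx t
    have : (sg W)^[s] x = (sg W)^[s + r] ((sg W)^[t] x) := by
      rw [Function.iterate_add_apply, hr]
    rw [this]
    exact mem_orb_iter hN (iter_periodic hx t) _

theorem self_mem_orb (hN : 0 < N) (x : X × ZMod ℓ) : x ∈ orb W N x :=
  mem_orb.2 ⟨0, hN, rfl⟩

theorem pigeon {α : Type*} (s : Finset α) (f g : α → ℕ) (hf : ∑ i ∈ s, f i + 1 ≤ s.card)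
    (hg : ∑ i ∈ s, g i + 1 ≤ s.card) :
    (∃ a ∈ s, f a = 0 ∧ g a = 0) ∨ ∃ a ∈ s, ∃ b ∈ s, a ≠ b ∧ f a + g a = 1 ∧ f b + g b = 1 := by
  classical
  by_cases h0 : ∃ a ∈ s, f a = 0 ∧ g a = 0
  · exact Or.inl h0
  right
  push Not at h0
  let B := s.filter fun a => f a + g a = 1
  have hB : 1 < B.card := by
    have h1 : ∀ a ∈ s, 2 ≤ f a + g a + (if f a + g a = 1 then 1 else 0) := by
      intro a ha
      have := h0 a ha
      split_ifs with h <;> omega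
    have h2 := Finset.sum_le_sum h1
    rw [Finset.sum_add_distrib, Finset.sum_add_distrib, ← Finset.card_filter] at h2
    simp only [sum_const, smul_eq_mul] at h2
    change _ ≤ _ + B.card at h2
    omega
  obtain ⟨a, ha, b, hb, hab⟩ := Finset.one_lt_card.1 hB
  rw [mem_filter] at ha hb
  exact ⟨a, ha.1, b, hb.1, hab, ha.2, hb.2⟩

variable [NeZero ℓ] {h : ZMod ℓ → ℤ} {K : Finset (X × ZMod ℓ)}

theorem iter_mem (hK : ∀ x ∈ K, sg W x ∈ K) {x : X × ZMod ℓ} (hx : x ∈ K) (t : ℕ) :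
    (sg W)^[t] x ∈ K := by
  induction t with
  | zero => exact hx
  | succ t ih => rw [Function.iterate_succ_apply']; exact hK _ ih

/-- Predicate of being a start. -/
def isst (W : ZMod ℓ → A × Bool) (h : ZMod ℓ → ℤ) (K : Finset (X × ZMod ℓ)) (x : X × ZMod ℓ) :
    Prop := stp W h K x ∧ ¬ ctop h K x

theorem exists_top (h : ZMod ℓ → ℤ) (K : Finset (X × ZMod ℓ)) (x : X × ZMod ℓ) :
    ∃ t < ℓ, ctop h K ((sg W)^[t] x) := by
  obtain ⟨i, hi⟩ := Finite.exists_max h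
  refine ⟨(i - x.2).val, ZMod.val_lt _, fun y _ _ => ?_⟩
  rw [sg_iter]
  simp only [ZMod.natCast_val, ZMod.cast_id', id_eq, add_sub_cancel]
  exact hi _

theorem all_top (hS : IsStack W h) (hK : ∀ x ∈ K, sg W x ∈ K) (hN : 0 < N)
    (hKN : ∀ x ∈ K, (sg W)^[N] x = x) (O : Finset (X × ZMod ℓ))
    (hO : ∀ x ∈ K, orb W N x = O → ¬ isst W h K x) :
    ∀ x ∈ K, orb W N x = O → ctop h K x := by
  intro x hx hxO
  obtain ⟨t, _, ht⟩ := exists_top (W := W) h K x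
  exact walk_back hS hK ht (fun s _ => hO _ (iter_mem hK hx s)
    ((orb_iter hN (hKN x hx) s).trans hxO)) 0 (Nat.zero_le _)

theorem top_run (hS : IsStack W h) (hK : ∀ x ∈ K, sg W x ∈ K) {n : ℕ} (hn : 2 ≤ n)
    (hKN : ∀ x ∈ K, (sg W)^[n * ℓ] x = x)
    (hfull : ∀ x ∈ K, ∀ t, 0 < t → t < n * ℓ → (sg W)^[t] x ≠ x)
    (z : X × ZMod ℓ) (hz : z ∈ K)
    (hu : ∀ x ∈ K, orb W (n * ℓ) x = orb W (n * ℓ) z → isst W h K x → x = z) :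
    ∀ t, 1 ≤ t → t ≤ (n - 1) * ℓ + 1 → ctop h K ((sg W)^[t] z) := by
  have hℓ : 0 < ℓ := Nat.pos_of_ne_zero (NeZero.ne ℓ)
  have hnl : n * ℓ = (n - 1) * ℓ + ℓ := by
    obtain ⟨m, rfl⟩ : ∃ m, n = m + 1 := ⟨n - 1, by omega⟩
    simp [add_mul]
  obtain ⟨r, hr, htop⟩ := exists_top (W := W) h K ((sg W)^[(n - 1) * ℓ + 1] z)
  rw [← Function.iterate_add_apply] at htop
  intro t ht1 ht2
  obtain ⟨s, rfl⟩ : ∃ s, t = s + 1 := ⟨t - 1, by omega⟩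
  have e1 : r + ((n - 1) * ℓ + 1) = (r + (n - 1) * ℓ) + 1 := by ring
  rw [e1, Function.iterate_add_apply _ _ 1] at htop
  have := walk_back hS hK htop (fun s hs hst => by
    rw [← Function.iterate_add_apply] at hst
    have := hu _ (iter_mem hK hz (s + 1)) (orb_iter (by positivity) (hKN z hz) _) hst
    exact hfull z hz (s + 1) (by omega) (by omega) this) s (by omega)
  rwa [← Function.iterate_add_apply] at this

/-- Value-one orbits carry runs. -/
theorem one_run {h' : ZMod ℓ → ℤ} (hS : IsStack W h) (hS' : IsStack W h')
    (hK : ∀ x ∈ K, sg W x ∈ K) {n : ℕ} (hn : 2 ≤ n)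
    (hKN : ∀ x ∈ K, (sg W)^[n * ℓ] x = x)
    (hfull : ∀ x ∈ K, ∀ t, 0 < t → t < n * ℓ → (sg W)^[t] x ≠ x)
    (z : X × ZMod ℓ) (hz : z ∈ K)
    (hu : ∀ x ∈ K, orb W (n * ℓ) x = orb W (n * ℓ) z → isst W h K x → x = z)
    (hu' : ∀ x ∈ K, orb W (n * ℓ) x = orb W (n * ℓ) z → ¬ isst W h' K x) :
    (∀ t ≤ (n - 1) * ℓ, stp W h K ((sg W)^[t] z) ∧ stp W h' K ((sg W)^[t] z)) ∧
    (∀ t, 1 ≤ t → t ≤ (n - 1) * ℓ → ctop h K ((sg W)^[t] z) ∧ ctop h' K ((sg W)^[t] z)) := by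
  have hℓ : 0 < ℓ := Nat.pos_of_ne_zero (NeZero.ne ℓ)
  have hN : 0 < n * ℓ := by positivity
  have h1 := top_run hS hK hn hKN hfull z hz hu
  have h2 : ∀ t, ctop h' K ((sg W)^[t] z) := fun t =>
    all_top hS' hK hN hKN _ hu' _ (iter_mem hK hz t) (orb_iter hN (hKN z hz) t)
  refine ⟨fun t ht => ⟨?_, stp_of_ctop hS' hK (h2 t)⟩, fun t ht1 ht2 => ⟨h1 t ht1 (by omega), h2 t⟩⟩
  apply stp_of_ctop_sg hS hK
  rw [← Function.iterate_succ_apply' (sg W) t z]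
  exact h1 (t + 1) (by omega) (by omega)

open Classical in
theorem orbit_cases (N : ℕ) (hS : IsStack W h)
    (hst : (K.filter fun x => stp W h K x ∧ ¬ ctop h K x).card + 1 ≤ (K.image (orb W N)).card)
    (hst' : (K.filter fun x => stp W (fun i => - h i) K x ∧ ¬ ctop (fun i => - h i) K x).card + 1
      ≤ (K.image (orb W N)).card) :
    let val1 : X × ZMod ℓ → Prop := fun z => 
      (isst W h K z ∧ (∀ x ∈ K, orb W N x = orb W N z → isst W h K x → x = z) ∧
        ∀ x ∈ K, orb W N x = orb W N z → ¬ isst W (fun i => - h i) K x) ∨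
      (isst W (fun i => - h i) K z ∧
        (∀ x ∈ K, orb W N x = orb W N z → isst W (fun i => - h i) K x → x = z) ∧
        ∀ x ∈ K, orb W N x = orb W N z → ¬ isst W h K x)
    (∃ z ∈ K, ∀ x ∈ K, orb W N x = orb W N z →
      ¬ isst W h K x ∧ ¬ isst W (fun i => - h i) K x) ∨
    (∃ z ∈ K, ∃ z' ∈ K, orb W N z ≠ orb W N z' ∧ val1 z ∧ val1 z') := by
  intro val1
  set S1 := K.filter fun x => stp W h K x ∧ ¬ ctop h K x with hS1
  set S2 := K.filter fun x => stp W (fun i => - h i) K x ∧ ¬ ctop (fun i => - h i) K x with hS2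
  have m1 : ∀ x, x ∈ S1 ↔ x ∈ K ∧ isst W h K x := fun x => by rw [hS1, mem_filter]; rfl
  have m2 : ∀ x, x ∈ S2 ↔ x ∈ K ∧ isst W (fun i => - h i) K x := fun x => by
    rw [hS2, mem_filter]; rfl
  have c1 := card_eq_sum_card_fiberwise (s := S1) (t := K.image (orb W N)) (f := orb W N)
    (fun x hx => mem_image_of_mem _ ((m1 x).1 hx).1)
  have c2 := card_eq_sum_card_fiberwise (s := S2) (t := K.image (orb W N)) (f := orb W N)
    (fun x hx => mem_image_of_mem _ ((m2 x).1 hx).1)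
  rw [c1] at hst
  rw [c2] at hst'
  have key : ∀ O, (S1.filter fun x => orb W N x = O).card
      + (S2.filter fun x => orb W N x = O).card = 1 → ∃ z ∈ K, orb W N z = O ∧ val1 z := by
    intro O hO
    have : ((S1.filter fun x => orb W N x = O).card = 1 ∧
      (S2.filter fun x => orb W N x = O).card = 0) ∨ ((S2.filter fun x => orb W N x = O).card = 1 ∧
      (S1.filter fun x => orb W N x = O).card = 0) := by omega
    rcases this with ⟨h1, h0⟩ | ⟨h1, h0⟩
    · obtain ⟨z, hz⟩ := card_eq_one.1 h1
      have hzz : z ∈ S1.filter fun x => orb W N x = O := by rw [hz]; simp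
      rw [mem_filter, m1] at hzz
      refine ⟨z, hzz.1.1, hzz.2, Or.inl ⟨hzz.1.2, fun x hx hxo hxs => ?_, fun x hx hxo hxs => ?_⟩⟩
      · have : x ∈ S1.filter fun x => orb W N x = O :=
          mem_filter.2 ⟨(m1 x).2 ⟨hx, hxs⟩, hxo.trans hzz.2⟩
        rw [hz] at this
        simpa using this
      · have : x ∈ S2.filter fun x => orb W N x = O :=
          mem_filter.2 ⟨(m2 x).2 ⟨hx, hxs⟩, hxo.trans hzz.2⟩
        rw [card_eq_zero.1 h0] at this
        simp at this
    · obtain ⟨z, hz⟩ := card_eq_one.1 h1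
      have hzz : z ∈ S2.filter fun x => orb W N x = O := by rw [hz]; simp
      rw [mem_filter, m2] at hzz
      refine ⟨z, hzz.1.1, hzz.2, Or.inr ⟨hzz.1.2, fun x hx hxo hxs => ?_, fun x hx hxo hxs => ?_⟩⟩
      · have : x ∈ S2.filter fun x => orb W N x = O :=
          mem_filter.2 ⟨(m2 x).2 ⟨hx, hxs⟩, hxo.trans hzz.2⟩
        rw [hz] at this
        simpa using this
      · have : x ∈ S1.filter fun x => orb W N x = O :=
          mem_filter.2 ⟨(m1 x).2 ⟨hx, hxs⟩, hxo.trans hzz.2⟩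
        rw [card_eq_zero.1 h0] at this
        simp at this
  rcases pigeon _ _ _ hst hst' with ⟨O, hO, h1, h2⟩ | ⟨O, hO, O', hO', hne, h1, h2⟩
  · left
    obtain ⟨z, hz, rfl⟩ := mem_image.1 hO
    refine ⟨z, hz, fun x hx hxz => ⟨fun hs => ?_, fun hs => ?_⟩⟩
    · have : x ∈ S1.filter fun x => orb W N x = orb W N z :=
          mem_filter.2 ⟨(m1 x).2 ⟨hx, hs⟩, hxz⟩
      rw [card_eq_zero.1 h1] at this
      simp at this
    · have : x ∈ S2.filter fun x => orb W N x = orb W N z :=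
          mem_filter.2 ⟨(m2 x).2 ⟨hx, hs⟩, hxz⟩
      rw [card_eq_zero.1 h2] at this
      simp at this
  · right
    obtain ⟨z, hz, hzO, hv⟩ := key O h1
    obtain ⟨z', hz', hzO', hv'⟩ := key O' h2
    exact ⟨z, hz, z', hz', by rw [hzO, hzO']; exact hne, hv, hv'⟩

/-- A free side. -/
def IsFree (W : ZMod ℓ → A × Bool) (K : Finset (X × ZMod ℓ)) (x : X × ZMod ℓ) : Prop :=
  ∀ y ∈ K, ed W y = ed W x → y = x

theorem free_of_stp (hred : ∀ i, W (i + 1) ≠ linv (W i)) (hS : IsStack W h) {x : X × ZMod ℓ}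
    (h1 : stp W h K x) (h2 : stp W (fun i => - h i) K x) : IsFree W K x := by
  intro y hy hyx
  refine side_eq hred hS hyx (le_antisymm (h1 y hy hyx) ?_)
  have := h2 y hy hyx
  simpa using this

theorem lone_of_ctop (hS : IsStack W h) {x : X × ZMod ℓ}
    (h1 : ctop h K x) (h2 : ctop (fun i => - h i) K x) : ∀ y ∈ K, y.1 = x.1 → y = x := by
  intro y hy hyx
  refine corner_eq hS hyx (le_antisymm (h1 y hy hyx) ?_)
  have := h2 y hy hyx
  simpa using this

open Classical in
theorem exists_free (hred : ∀ i, W (i + 1) ≠ linv (W i)) (hS : IsStack W h)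
    (hK : ∀ x ∈ K, sg W x ∈ K) (hN : 0 < N)
    (hKN : ∀ x ∈ K, (sg W)^[N] x = x)
    (hst : (K.filter fun x => stp W h K x ∧ ¬ ctop h K x).card + 1 ≤ (K.image (orb W N)).card)
    (hst' : (K.filter fun x => stp W (fun i => - h i) K x ∧ ¬ ctop (fun i => - h i) K x).card + 1
      ≤ (K.image (orb W N)).card) : ∃ x ∈ K, IsFree W K x := by
  have hS' := hS.neg
  rcases orbit_cases N hS hst hst' with ⟨z, hz, h0⟩ | ⟨z, hz, _, _, _, hv, _⟩
  · refine ⟨z, hz, free_of_stp hred hS ?_ ?_⟩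
    · exact stp_of_ctop hS hK (all_top hS hK hN hKN _ (fun x hx hxo => (h0 x hx hxo).1) z hz rfl)
    · exact stp_of_ctop hS' hK (all_top hS' hK hN hKN _ (fun x hx hxo => (h0 x hx hxo).2) z hz rfl)
  · refine ⟨z, hz, free_of_stp hred hS ?_ ?_⟩
    · rcases hv with ⟨h1, _, h3⟩ | ⟨h1, _, h3⟩
      · exact h1.1
      · exact stp_of_ctop hS hK (all_top hS hK hN hKN _ h3 z hz rfl)
    · rcases hv with ⟨h1, _, h3⟩ | ⟨h1, _, h3⟩
      · exact stp_of_ctop hS' hK (all_top hS' hK hN hKN _ h3 z hz rfl)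
      · exact h1.1

open Classical in
theorem exists_run (hred : ∀ i, W (i + 1) ≠ linv (W i)) (hS : IsStack W h)
    (hK : ∀ x ∈ K, sg W x ∈ K) {n : ℕ} (hn : 2 ≤ n)
    (hKN : ∀ x ∈ K, (sg W)^[n * ℓ] x = x)
    (hfull : ∀ x ∈ K, ∀ t, 0 < t → t < n * ℓ → (sg W)^[t] x ≠ x)
    (hst : (K.filter fun x => stp W h K x ∧ ¬ ctop h K x).card + 1 ≤
      (K.image (orb W (n * ℓ))).card)
    (hst' : (K.filter fun x => stp W (fun i => - h i) K x ∧ ¬ ctop (fun i => - h i) K x).card + 1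
      ≤ (K.image (orb W (n * ℓ))).card) (v0 : X) :
    ∃ z ∈ K, (∀ t ≤ (n - 1) * ℓ, IsFree W K ((sg W)^[t] z)) ∧
      ∀ t, 1 ≤ t → t ≤ (n - 1) * ℓ → ((sg W)^[t] z).1 ≠ v0 := by
  have hS' := hS.neg
  have hℓ : 0 < ℓ := Nat.pos_of_ne_zero (NeZero.ne ℓ)
  have hN : 0 < n * ℓ := by positivity
  have hnl : n * ℓ = (n - 1) * ℓ + ℓ := by
    obtain ⟨m, rfl⟩ : ∃ m, n = m + 1 := ⟨n - 1, by omega⟩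
    simp [add_mul]
  rcases orbit_cases (n * ℓ) hS hst hst' with ⟨z, hz, h0⟩ | ⟨z, hz, z', hz', hne, hv, hv'⟩
  · have t1 := all_top hS hK hN hKN _ (fun x hx hxo => (h0 x hx hxo).1)
    have t2 := all_top hS' hK hN hKN _ (fun x hx hxo => (h0 x hx hxo).2)
    have fr : ∀ x ∈ K, orb W (n * ℓ) x = orb W (n * ℓ) z → IsFree W K x := fun x hx hxo =>
      free_of_stp hred hS (stp_of_ctop hS hK (t1 x hx hxo)) (stp_of_ctop hS' hK (t2 x hx hxo))
    by_cases hb : ∃ x ∈ K, orb W (n * ℓ) x = orb W (n * ℓ) z ∧ x.1 = v0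
    · obtain ⟨x, hx, hxo, rfl⟩ := hb
      refine ⟨x, hx, fun t _ => fr _ (iter_mem hK hx t) ((orb_iter hN (hKN x hx) t).trans hxo), ?_⟩
      intro t ht1 ht2 hv
      have := lone_of_ctop hS (t1 x hx hxo) (t2 x hx hxo) _ (iter_mem hK hx t) hv
      exact hfull x hx t (by omega) (by omega) this
    · push Not at hb
      refine ⟨z, hz, fun t _ => fr _ (iter_mem hK hz t) (orb_iter hN (hKN z hz) t), ?_⟩
      intro t _ _
      exact hb _ (iter_mem hK hz t) (orb_iter hN (hKN z hz) t)
  · have main : ∀ z ∈ K, ((isst W h K z ∧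
        (∀ x ∈ K, orb W (n * ℓ) x = orb W (n * ℓ) z → isst W h K x → x = z) ∧
        ∀ x ∈ K, orb W (n * ℓ) x = orb W (n * ℓ) z → ¬ isst W (fun i => - h i) K x) ∨
      (isst W (fun i => - h i) K z ∧
        (∀ x ∈ K, orb W (n * ℓ) x = orb W (n * ℓ) z → isst W (fun i => - h i) K x → x = z) ∧
        ∀ x ∈ K, orb W (n * ℓ) x = orb W (n * ℓ) z → ¬ isst W h K x)) →
        (∀ t ≤ (n - 1) * ℓ, IsFree W K ((sg W)^[t] z)) ∧
        (∀ t, 1 ≤ t → t ≤ (n - 1) * ℓ → ∀ y ∈ K, y.1 = ((sg W)^[t] z).1 → y = (sg W)^[t] z) := by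
      intro z hz hv
      rcases hv with ⟨h1, h2, h3⟩ | ⟨h1, h2, h3⟩
      · obtain ⟨a, b⟩ := one_run hS hS' hK hn hKN hfull z hz h2 h3
        exact ⟨fun t ht => free_of_stp hred hS (a t ht).1 (a t ht).2,
          fun t ht1 ht2 => lone_of_ctop hS (b t ht1 ht2).1 (b t ht1 ht2).2⟩
      · obtain ⟨a, b⟩ := one_run hS' hS hK hn hKN hfull z hz h2 h3
        exact ⟨fun t ht => free_of_stp hred hS (a t ht).2 (a t ht).1,
          fun t ht1 ht2 => lone_of_ctop hS (b t ht1 ht2).2 (b t ht1 ht2).1⟩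
    obtain ⟨f1, l1⟩ := main z hz hv
    obtain ⟨f2, l2⟩ := main z' hz' hv'
    by_cases hb : ∃ t, 1 ≤ t ∧ t ≤ (n - 1) * ℓ ∧ ((sg W)^[t] z).1 = v0
    · refine ⟨z', hz', f2, fun t ht1 ht2 hv => ?_⟩
      obtain ⟨s, hs1, hs2, hsv⟩ := hb
      have := l1 s hs1 hs2 _ (iter_mem hK hz' t) (hv.trans hsv.symm)
      have e1 := orb_iter hN (hKN z hz) s
      have e2 := orb_iter hN (hKN z' hz') t
      rw [← this] at e1
      exact hne (e1.symm.trans e2)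
    · push Not at hb
      exact ⟨z, hz, f1, hb⟩

end Orbits

end BBN


namespace BBN

open Finset

/-! ### The subgroups generated by finitely many conjugates, and the collapse -/

section Sub

variable {A : Type*} {ℓ : ℕ} (W : ZMod ℓ → A × Bool) (N : ℕ)

/-- Subgroup generated by finitely many conjugates of the relator. -/
def HS (S : Finset (FreeGroup A)) : Subgroup (FreeGroup A) :=
  Subgroup.closure ((fun s => s * P W 0 N * s⁻¹) '' (S : Set (FreeGroup A)))

/-- Basic corner of the cell attached at `s`. -/
def bc (S : Finset (FreeGroup A)) (s : FreeGroup A) : (FreeGroup A ⧸ HS W N S) × ZMod ℓ :=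
  (s⁻¹ • base (HS W N S), 0)

open Classical in
/-- All corners. -/
noncomputable def KS (S : Finset (FreeGroup A)) : Finset ((FreeGroup A ⧸ HS W N S) × ZMod ℓ) :=
  S.biUnion fun s => orb W N (bc W N S s)

variable {W N}

theorem conj_mem_HS {S : Finset (FreeGroup A)} {s : FreeGroup A} (hs : s ∈ S) :
    s * P W 0 N * s⁻¹ ∈ HS W N S := Subgroup.subset_closure ⟨s, hs, rfl⟩

open Classical in
theorem HS_translate {S : Finset (FreeGroup A)} {g x : FreeGroup A} (hg : g ∈ HS W N S) :
    x * g * x⁻¹ ∈ HS W N (S.image fun s => x * s) := by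
  unfold HS at hg
  induction hg using Subgroup.closure_induction with
  | mem g hg =>
    obtain ⟨s, hs, rfl⟩ := hg
    have := conj_mem_HS (W := W) (N := N) (mem_image_of_mem (fun s => x * s) hs)
    convert this using 1
    simp only
    group
  | one => simp
  | mul g h _ _ hg hh =>
    have := mul_mem hg hh
    convert this using 1
    group
  | inv g _ hg =>
    have := inv_mem hg
    convert this using 1
    group

theorem HS_translate' {S : Finset (FreeGroup A)} {g : FreeGroup A} (x : FreeGroup A)
    (hg : g ∈ HS W N S) :
    ∃ S' : Finset (FreeGroup A), S'.card ≤ S.card ∧ x * g * x⁻¹ ∈ HS W N S' := by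
  classical
  exact ⟨_, card_image_le, HS_translate hg⟩

theorem bc_periodic (hNℓ : (N : ZMod ℓ) = 0) {S : Finset (FreeGroup A)} {s : FreeGroup A}
    (hs : s ∈ S) : (sg W)^[N] (bc W N S s) = bc W N S s := by
  rw [sg_iter]
  refine Prod.ext ?_ (by simp [hNℓ])
  simp only [bc]
  rw [← mul_smul, smul_base_eq_iff]
  have := conj_mem_HS (W := W) (N := N) hs
  simpa [mul_assoc] using this

theorem mem_KS (hN : 0 < N) (hNℓ : (N : ZMod ℓ) = 0) {S : Finset (FreeGroup A)}
    {x : (FreeGroup A ⧸ HS W N S) × ZMod ℓ} :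
    x ∈ KS W N S ↔ ∃ s ∈ S, ∃ t, (sg W)^[t] (bc W N S s) = x := by
  simp only [KS, mem_biUnion]
  constructor
  · rintro ⟨s, hs, hx⟩
    obtain ⟨t, _, ht⟩ := mem_orb.1 hx
    exact ⟨s, hs, t, ht⟩
  · rintro ⟨s, hs, t, rfl⟩
    exact ⟨s, hs, mem_orb_iter hN (bc_periodic hNℓ hs) t⟩

theorem KS_sg (hN : 0 < N) (hNℓ : (N : ZMod ℓ) = 0) {S : Finset (FreeGroup A)}
    {x : (FreeGroup A ⧸ HS W N S) × ZMod ℓ} (hx : x ∈ KS W N S) : sg W x ∈ KS W N S := by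
  rw [mem_KS hN hNℓ] at hx ⊢
  obtain ⟨s, hs, t, rfl⟩ := hx
  exact ⟨s, hs, t + 1, by rw [Function.iterate_succ_apply']⟩

theorem KS_periodic (hN : 0 < N) (hNℓ : (N : ZMod ℓ) = 0) {S : Finset (FreeGroup A)}
    {x : (FreeGroup A ⧸ HS W N S) × ZMod ℓ} (hx : x ∈ KS W N S) : (sg W)^[N] x = x := by
  rw [mem_KS hN hNℓ] at hx
  obtain ⟨s, hs, t, rfl⟩ := hx
  exact iter_periodic (bc_periodic hNℓ hs) t

theorem pth_conj {X M : Type*} [MulAction (FreeGroup A) X] [Group M] (f : A → X → M)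
    {x : X × ZMod ℓ} (hx : (sg W)^[N] x = x) (t : ℕ) :
    pth W f x N * pth W f x t = pth W f x t * pth W f ((sg W)^[t] x) N := by
  rw [← pth_add, add_comm, pth_add, hx]

theorem chain_eq_pth {X : Type*} [MulAction (FreeGroup A) X] (k : Type*) [Field k]
    (x : X × ZMod ℓ) (t : ℕ) : chain k (P W x.2 t) x.1 = Multiplicative.toAdd
      (pth W (fun a v => Multiplicative.ofAdd (Finsupp.single ((v, a) : X × A) (1 : k))) x t) := rfl

theorem chain_iter {X : Type*} [MulAction (FreeGroup A) X] (k : Type*) [Field k]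
    {x : X × ZMod ℓ} (hx : (sg W)^[N] x = x) (t : ℕ) :
    chain k (P W ((sg W)^[t] x).2 N) ((sg W)^[t] x).1 = chain k (P W x.2 N) x.1 := by
  rw [chain_eq_pth, chain_eq_pth]
  congr 1
  have := pth_conj (fun a v => Multiplicative.ofAdd (Finsupp.single ((v, a) : X × A) (1 : k))) hx t
  rw [mul_comm] at this
  exact (mul_left_cancel this).symm

theorem chain_conj (k : Type*) [Field k] {S : Finset (FreeGroup A)} {s : FreeGroup A}
    (hs : s ∈ S) : chain k (s * P W 0 N * s⁻¹) (base (HS W N S)) =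
      chain k (P W 0 N) (s⁻¹ • base (HS W N S)) := by
  have h1 := (smul_base_iff (HS W N S) _).2 (inv_mem (conj_mem_HS (W := W) (N := N) hs))
  have h2 : s • (s * P W 0 N)⁻¹ • base (HS W N S) = base (HS W N S) := by
    conv_rhs => rw [← h1]
    rw [← mul_smul]
    congr 1
    group
  rw [chain_mul, chain_mul, chain_inv, h2]
  abel

open Classical in
/-- The rank bound. -/
theorem exists_gens (k : Type*) [Field k] (hN : 0 < N) (hNℓ : (N : ZMod ℓ) = 0)
    (S : Finset (FreeGroup A)) :
    ∃ G : Finset (((FreeGroup A ⧸ HS W N S) × A) →₀ k),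
      LinearMap.ker (bd (A := A) (X := FreeGroup A ⧸ HS W N S) k) ≤
        Submodule.span k (G : Set _) ∧ G.card ≤ ((KS W N S).image (orb W N)).card := by
  let z : (FreeGroup A ⧸ HS W N S) × ZMod ℓ → (((FreeGroup A ⧸ HS W N S) × A) →₀ k) :=
    fun x => chain k (P W x.2 N) x.1
  refine ⟨(KS W N S).image z, ?_, ?_⟩
  · refine (ker_bd_le_span k (HS W N S)).trans (Submodule.span_le.2 ?_)
    rintro _ ⟨h, hh, rfl⟩
    refine chain_mem_of_closure k (HS W N S) _ rfl _ ?_ h hh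
    rintro _ ⟨s, hs, rfl⟩
    rw [chain_conj k hs]
    apply Submodule.subset_span
    rw [mem_coe]
    exact mem_image.2 ⟨bc W N S s, (mem_KS hN hNℓ).2 ⟨s, hs, 0, rfl⟩, rfl⟩
  · have key : ∀ x ∈ KS W N S, ∀ y ∈ KS W N S, orb W N x = orb W N y → z x = z y := by
      intro x hx y hy hxy
      have : x ∈ orb W N y := hxy ▸ self_mem_orb hN x
      obtain ⟨t, _, rfl⟩ := mem_orb.1 this
      exact chain_iter k (KS_periodic hN hNℓ hy) t
    have := card_image_le_card_image (univ : Finset (KS W N S)) (fun x => orb W N x.1)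
      (fun x => z x.1) (fun i j => key i.1 i.2 j.1 j.2)
    have e1 : (univ : Finset (KS W N S)).image (fun x => z x.1) = (KS W N S).image z := by
      ext a; simp
    have e2 : (univ : Finset (KS W N S)).image (fun x => orb W N x.1)
        = (KS W N S).image (orb W N) := by
      ext a; simp
    rwa [e1, e2] at this

open Classical in
theorem starts_le_KS [NeZero ℓ] (hred : ∀ i, W (i + 1) ≠ linv (W i)) {h : ZMod ℓ → ℤ}
    (hS : IsStack W h) (hN : 0 < N) (hNℓ : (N : ZMod ℓ) = 0) (S : Finset (FreeGroup A))
    (hne : S.Nonempty) :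
    ((KS W N S).filter fun x => stp W h (KS W N S) x ∧ ¬ ctop h (KS W N S) x).card + 1 ≤
      ((KS W N S).image (orb W N)).card := by
  obtain ⟨G, hG, hc⟩ := exists_gens (W := W) ℚ hN hNℓ S
  obtain ⟨s, hs⟩ := hne
  have := starts_le hred hS (fun x hx => KS_sg hN hNℓ hx)
    ⟨bc W N S s, (mem_KS hN hNℓ).2 ⟨s, hs, 0, rfl⟩⟩ ℚ G hG
  exact this.trans hc

section Collapse

variable {X : Type*} [MulAction (FreeGroup A) X]

open Classical in
/-- The collapse path function. -/
noncomputable def cf (W : ZMod ℓ → A × Bool) (x0 : X × ZMod ℓ) (a : A) (v : X) : FreeGroup A :=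
  if (v, a) = ed W x0 then
    (if (W x0.2).2 then (P W (x0.2 + 1) (Function.minimalPeriod (sg W) x0 - 1))⁻¹
      else P W (x0.2 + 1) (Function.minimalPeriod (sg W) x0 - 1))
  else FreeGroup.of a

theorem cf_of_ne (x0 : X × ZMod ℓ) (a : A) (v : X) (h : (v, a) ≠ ed W x0) :
    cf W x0 a v = FreeGroup.of a := if_neg h

theorem cf_pth_avoid (x0 x : X × ZMod ℓ) (t : ℕ) (h : ∀ s < t, ed W ((sg W)^[s] x) ≠ ed W x0) :
    pth W (cf W x0) x t = P W x.2 t :=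
  cr_avoid (cf W x0) (ed W x0) (cf_of_ne x0) _ _ (avoids_wd W t x h)

theorem ne_of_lt_minimalPeriod {x0 : X × ZMod ℓ} {s : ℕ} (hs : 0 < s)
    (h : s < Function.minimalPeriod (sg W) x0) : (sg W)^[s] x0 ≠ x0 := by
  intro h2
  exact absurd (Function.IsPeriodicPt.minimalPeriod_le hs h2) (by omega)

variable {K : Finset (X × ZMod ℓ)}

theorem cf_pth_self (hN : 0 < N) (hK : ∀ x ∈ K, sg W x ∈ K) {x0 : X × ZMod ℓ} (hx0 : x0 ∈ K)
    (hfree : IsFree W K x0) (hper : (sg W)^[N] x0 = x0) : pth W (cf W x0) x0 N = 1 := by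
  obtain ⟨q, hq⟩ : Function.minimalPeriod (sg W) x0 ∣ N :=
    Function.IsPeriodicPt.minimalPeriod_dvd hper
  have hm : 0 < Function.minimalPeriod (sg W) x0 :=
    Function.IsPeriodicPt.minimalPeriod_pos hN hper
  have h1 : pth W (cf W x0) x0 (Function.minimalPeriod (sg W) x0) = 1 := by
    obtain ⟨m, hm2⟩ : ∃ m, Function.minimalPeriod (sg W) x0 = 1 + m :=
      ⟨Function.minimalPeriod (sg W) x0 - 1, by omega⟩
    rw [hm2, pth_add]
    rw [cf_pth_avoid x0 ((sg W)^[1] x0) m]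
    · have e1 : pth W (cf W x0) x0 1 = (P W (x0.2 + 1) m)⁻¹ := by
        have hm3 : Function.minimalPeriod (sg W) x0 - 1 = m := by omega
        unfold pth
        rw [P_one]
        rcases hb : (W x0.2).2 with _ | _
        · rw [cr_lett_false _ _ _ hb]
          simp [cf, ed, hb, hm3]
        · rw [cr_lett_true _ _ _ hb]
          simp [cf, ed, hb, hm3]
      rw [e1, sg_iter]
      simp
    · intro s hs he
      rw [← Function.iterate_add_apply] at he
      exact ne_of_lt_minimalPeriod (by omega) (by omega) (hfree _ (iter_mem' hK hx0 (s + 1)) he)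
  rw [hq, mul_comm, pth_mul W _ _ _ _ (Function.isPeriodicPt_minimalPeriod (sg W) x0), h1, one_pow]
where
  iter_mem' (hK : ∀ x ∈ K, sg W x ∈ K) {x : X × ZMod ℓ} (hx : x ∈ K) (t : ℕ) :
    (sg W)^[t] x ∈ K := by
    induction t with
    | zero => exact hx
    | succ t ih => rw [Function.iterate_succ_apply']; exact hK _ ih

end Collapse

open Classical in
/-- The collapse lemma. -/
theorem collapse (hN : 0 < N) (hNℓ : (N : ZMod ℓ) = 0) (S : Finset (FreeGroup A))
    (x0 : (FreeGroup A ⧸ HS W N S) × ZMod ℓ) (hx0 : x0 ∈ KS W N S)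
    (hfree : IsFree W (KS W N S) x0) (L : List (A × Bool)) (v : FreeGroup A ⧸ HS W N S)
    (hL : Avoids (ed W x0) v L) (hv : FreeGroup.mk L • v = v) :
    ∃ S' : Finset (FreeGroup A), S'.card < S.card ∧ FreeGroup.mk L ∈ HS W N S' := by
  obtain ⟨x, rfl⟩ := exists_smul_base (HS W N S) v
  set b := base (HS W N S) with hb
  set ρ : FreeGroup A → FreeGroup A := fun g => cr (cf W x0) g b with hρ
  let S1 := S.filter fun s => x0 ∉ orb W N (bc W N S s)
  have hcard : S1.card < S.card := by
    apply Finset.card_lt_card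
    refine (Finset.filter_ssubset).2 ?_
    obtain ⟨s, hs, t, ht⟩ := (mem_KS hN hNℓ).1 hx0
    refine ⟨s, hs, ?_⟩
    rw [not_not, ← ht]
    exact mem_orb_iter hN (bc_periodic hNℓ hs) t
  -- conjugation formula
  have hconj : ∀ y g : FreeGroup A, g • y⁻¹ • b = y⁻¹ • b →
      ρ (y * g * y⁻¹) = ρ y * cr (cf W x0) g (y⁻¹ • b) * (ρ y)⁻¹ := by
    intro y g hg
    have h2 : y • (y * g)⁻¹ • b = b := by
      have : g⁻¹ • y⁻¹ • b = y⁻¹ • b := by rw [inv_smul_eq_iff, hg]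
      rw [mul_inv_rev, mul_smul, this, smul_inv_smul]
    simp only [hρ]
    rw [cr_mul, cr_mul, cr_inv, h2]
  have hQ : ∀ s ∈ S, cr (cf W x0) (P W 0 N) (s⁻¹ • b) =
      if x0 ∈ orb W N (bc W N S s) then 1 else P W 0 N := by
    intro s hs
    have hp := bc_periodic (W := W) hNℓ hs
    change pth W (cf W x0) (bc W N S s) N = _
    split_ifs with h
    · obtain ⟨t, _, ht⟩ := mem_orb.1 h
      have h1 := pth_conj (cf W x0) hp t
      rw [ht, cf_pth_self hN (fun x hx => KS_sg hN hNℓ hx) hx0 hfree (KS_periodic hN hNℓ hx0),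
        mul_one] at h1
      exact mul_eq_right.1 h1
    · refine cf_pth_avoid x0 (bc W N S s) N ?_
      intro t ht he
      apply h
      rw [← hfree _ ((mem_KS hN hNℓ).2 ⟨s, hs, t, rfl⟩) he]
      exact mem_orb_iter hN hp t
  have hmem : ∀ h ∈ HS W N S, ρ h ∈ HS W N (S1.image ρ) := by
    intro h hh
    have hh2 := hh
    unfold HS at hh2
    induction hh2 using Subgroup.closure_induction with
    | mem g hg =>
      obtain ⟨s, hs, rfl⟩ := hg
      simp only
      rw [hconj, hQ s hs]
      · split_ifs with h
        · simp
        · exact conj_mem_HS (mem_image_of_mem ρ (mem_filter.2 ⟨hs, h⟩))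
      · have := conj_mem_HS (W := W) (N := N) hs
        rw [← mul_smul, hb, smul_base_eq_iff]
        have := inv_mem this
        simpa [mul_assoc] using this
    | one =>
      simp only [hρ, cr_one]
      exact one_mem _
    | mul g h hg hh' ihg ihh =>
      simp only [hρ] at ihg ihh ⊢
      rw [cr_mul, hb, (smul_base_iff (HS W N S) _).2 (inv_mem hg)]
      exact mul_mem (ihg hg) (ihh hh')
    | inv g hg ih =>
      simp only [hρ] at ih ⊢
      rw [cr_inv, hb, (smul_base_iff (HS W N S) _).2 hg]
      exact inv_mem (ih hg)
  have hin : x * FreeGroup.mk L * x⁻¹ ∈ HS W N S := by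
    rw [← smul_base_iff, mul_smul, mul_smul, ← hb, hv, smul_inv_smul]
  have h3 := hmem _ hin
  rw [hconj x _ hv, cr_avoid (cf W x0) (ed W x0) (cf_of_ne x0) L _ hL] at h3
  have h4 := HS_translate (x := (ρ x)⁻¹) h3
  have h5 : FreeGroup.mk L = (ρ x)⁻¹ * (ρ x * FreeGroup.mk L * (ρ x)⁻¹) * (ρ x)⁻¹⁻¹ := by group
  rw [← h5] at h4
  exact ⟨_, lt_of_le_of_lt (card_image_le.trans card_image_le) hcard, h4⟩

end Sub

end BBN


namespace BBN

open Finset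

/-! ### Periods of cells -/

section Period

variable {A : Type*} [DecidableEq A] {ℓ : ℕ} {W : ZMod ℓ → A × Bool}

theorem wd_reduced (hred : ∀ i, W (i + 1) ≠ linv (W i)) (i : ZMod ℓ) (t : ℕ) :
    FreeGroup.IsReduced (wd W i t) := by
  unfold FreeGroup.IsReduced wd
  rw [List.isChain_iff_getElem]
  intro j hj
  simp only [List.getElem_map, List.getElem_range]
  intro h1
  by_contra h2
  apply hred (i + j)
  have e : i + ((j + 1 : ℕ) : ZMod ℓ) = i + j + 1 := by push_cast; ring
  rw [e] at h1 h2
  refine Prod.ext h1.symm ?_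
  simp only [linv]
  revert h2
  generalize (W (i + j)).2 = p
  generalize (W (i + j + 1)).2 = q
  cases p <;> cases q <;> simp

theorem toWord_P (hred : ∀ i, W (i + 1) ≠ linv (W i)) (i : ZMod ℓ) (t : ℕ) :
    (P W i t).toWord = wd W i t := by
  unfold P
  rw [FreeGroup.toWord_mk]
  exact (FreeGroup.isReduced_iff_reduce_eq).1 (wd_reduced hred i t)

/-- Bad elements: nontrivial without long relator subwords. -/
def Bad (W : ZMod ℓ → A × Bool) (m : ℕ) (w : FreeGroup A) : Prop :=
  w ≠ 1 ∧ ∀ i, ¬ wd W i m <:+: w.toWord ∧ ¬ ((wd W i m).map linv).reverse <:+: w.toWord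

theorem bad_P (hred : ∀ i, W (i + 1) ≠ linv (W i)) (i : ZMod ℓ) {t m : ℕ} (ht : 0 < t)
    (htm : t < m) : Bad W m (P W i t) := by
  have hlen : (P W i t).toWord.length = t := by rw [toWord_P hred, wd_length]
  refine ⟨fun h => ?_, fun j => ⟨fun h => ?_, fun h => ?_⟩⟩
  · rw [h, FreeGroup.toWord_one] at hlen
    simp at hlen
    omega
  · have := h.length_le
    rw [hlen, wd_length] at this
    omega
  · have := h.length_le
    rw [hlen, List.length_reverse, List.length_map, wd_length] at this
    omega

theorem chain_avoid {X : Type*} [MulAction (FreeGroup A) X] (k : Type*) [Field k] (e : X × A)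
    (L : List (A × Bool)) : ∀ v : X, Avoids e v L → chain k (FreeGroup.mk L) v e = 0 := by
  induction L with
  | nil => intro v _; rw [← FreeGroup.one_eq_mk, chain_one]; rfl
  | cons p L ih =>
    intro v h
    obtain ⟨h1, h2⟩ := avoids_cons h
    rw [mk_cons, chain_mul, Finsupp.add_apply, ih _ h2, chain_lett, Finsupp.single_eq_of_ne h1.symm,
      add_zero]

theorem minimalPeriod_iter {X : Type*} [MulAction (FreeGroup A) X] {N : ℕ} (hN : 0 < N)
    {x : X × ZMod ℓ} (hx : (sg W)^[N] x = x) (t : ℕ) :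
    Function.minimalPeriod (sg W) ((sg W)^[t] x) = Function.minimalPeriod (sg W) x := by
  exact Function.minimalPeriod_apply_iterate (Function.mk_mem_periodicPts hN hx) t

theorem full_periods [NeZero ℓ] (hred : ∀ i, W (i + 1) ≠ linv (W i)) {n : ℕ} (hn : 2 ≤ n)
    (S : Finset (FreeGroup A))
    (IH : ∀ S' : Finset (FreeGroup A), S'.card < S.card → ∀ w ∈ HS W (n * ℓ) S',
      ¬ Bad W ((n - 1) * ℓ + 1) w)
    (x0 : (FreeGroup A ⧸ HS W (n * ℓ) S) × ZMod ℓ) (hx0 : x0 ∈ KS W (n * ℓ) S)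
    (hfree : IsFree W (KS W (n * ℓ) S) x0) :
    ∀ x ∈ KS W (n * ℓ) S, ∀ t, 0 < t → t < n * ℓ → (sg W)^[t] x ≠ x := by
  intro x hx t ht0 htN htx
  have hℓ : 0 < ℓ := Nat.pos_of_ne_zero (NeZero.ne ℓ)
  have hN : 0 < n * ℓ := by positivity
  have hNℓ : ((n * ℓ : ℕ) : ZMod ℓ) = 0 := by simp
  have hper := KS_periodic hN hNℓ hx
  have hper0 := KS_periodic hN hNℓ hx0
  set m := Function.minimalPeriod (sg W) x with hm
  have hmpos : 0 < m := Function.IsPeriodicPt.minimalPeriod_pos hN hper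
  have hmt : m ≤ t := Function.IsPeriodicPt.minimalPeriod_le ht0 htx
  have hmN : m ∣ n * ℓ := Function.IsPeriodicPt.minimalPeriod_dvd hper
  have hmx : (sg W)^[m] x = x := Function.isPeriodicPt_minimalPeriod (sg W) x
  have hmℓ : ℓ ∣ m := by
    rw [sg_iter] at hmx
    have := congrArg Prod.snd hmx
    simp only [add_eq_left] at this
    exact (ZMod.natCast_eq_zero_iff _ _).1 this
  have hvx : (P W x.2 m)⁻¹ • x.1 = x.1 := by
    rw [sg_iter] at hmx
    exact congrArg Prod.fst hmx
  have hvx' : P W x.2 m • x.1 = x.1 := by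
    rw [inv_smul_eq_iff] at hvx
    exact hvx.symm
  by_cases hxo : x0 ∈ orb W (n * ℓ) x
  · -- torsion argument
    obtain ⟨s, hs, hsx⟩ := mem_orb.1 hxo
    have hm0 : Function.minimalPeriod (sg W) x0 = m := by
      rw [← hsx]
      exact minimalPeriod_iter hN hper s
    obtain ⟨q, hq⟩ := hmN
    have hq1 : q ≠ 1 := by rintro rfl; omega
    obtain ⟨p, hp, hpq⟩ := Nat.exists_prime_and_dvd hq1
    have := Fact.mk hp
    let k := ZMod p
    have hmx0 : (sg W)^[m] x0 = x0 := hm0 ▸ Function.isPeriodicPt_minimalPeriod (sg W) x0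
    have hzero' : ∀ N', N' = q * m → chain k (P W x0.2 N') x0.1 = 0 := by
      rintro N' rfl
      rw [chain_eq_pth, pth_mul W _ _ _ _ hmx0, toAdd_pow]
      obtain ⟨r, rfl⟩ := hpq
      rw [mul_comm p r, mul_nsmul]
      have : ∀ z : ((FreeGroup A ⧸ HS W (n * ℓ) S) × A) →₀ k, p • z = 0 := by
        intro z
        ext e
        simp [k]
      rw [this]
    have hzero := hzero' (n * ℓ) (by rw [hq, mul_comm])
    let V : Submodule k (((FreeGroup A ⧸ HS W (n * ℓ) S) × A) →₀ k) :=
      LinearMap.ker (Finsupp.lapply (ed W x0))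
    have hker : LinearMap.ker (bd (A := A) (X := FreeGroup A ⧸ HS W (n * ℓ) S) k) ≤ V := by
      refine (ker_bd_le_span k (HS W (n * ℓ) S)).trans (Submodule.span_le.2 ?_)
      rintro _ ⟨h, hh, rfl⟩
      refine chain_mem_of_closure k (HS W (n * ℓ) S) _ rfl _ ?_ h hh
      rintro _ ⟨s, hs, rfl⟩
      rw [chain_conj k hs, LinearMap.mem_ker, Finsupp.lapply_apply]
      have hp := bc_periodic (W := W) hNℓ hs
      by_cases h : x0 ∈ orb W (n * ℓ) (bc W (n * ℓ) S s)
      · obtain ⟨r, _, hr⟩ := mem_orb.1 h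
        have := chain_iter k hp r
        rw [hr, hzero] at this
        change chain k (P W (bc W (n * ℓ) S s).2 (n * ℓ)) (bc W (n * ℓ) S s).1 _ = 0
        rw [← this]
        rfl
      · refine chain_avoid k _ _ _ (avoids_wd W (n * ℓ) (bc W (n * ℓ) S s) ?_)
        intro r hr he
        apply h
        rw [← hfree _ ((mem_KS hN hNℓ).2 ⟨s, hs, r, rfl⟩) he]
        exact mem_orb_iter hN hp r
    have hcyc : chain k (P W x0.2 m) x0.1 ∈ V := by
      apply hker
      rw [LinearMap.mem_ker, bd_chain]
      rw [sg_iter] at hmx0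
      have h5 : (P W x0.2 m)⁻¹ • x0.1 = x0.1 := congrArg Prod.fst hmx0
      rw [h5, sub_self]
    rw [LinearMap.mem_ker, Finsupp.lapply_apply] at hcyc
    obtain ⟨m', hm'⟩ : ∃ m', m = 1 + m' := ⟨m - 1, by omega⟩
    rw [hm', P_add, P_one, chain_mul, Finsupp.add_apply, chain_lett] at hcyc
    have e2 : chain k (P W (x0.2 + (1 : ℕ)) m') ((lett (W x0.2))⁻¹ • x0.1) (ed W x0) = 0 := by
      have := avoids_wd W (e := ed W x0) m' (sg W x0) (by
        intro r hr he
        have e3 : (sg W)^[r] (sg W x0) = (sg W)^[r + 1] x0 := (Function.iterate_succ_apply _ _ _).symm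
        rw [e3] at he
        have := hfree _ (iter_mem (fun x hx => KS_sg hN hNℓ hx) hx0 (r + 1)) he
        exact ne_of_lt_minimalPeriod (by omega) (by omega) this)
      have h4 := chain_avoid k _ _ _ this
      simpa [sg, P] using h4
    rw [e2, add_zero] at hcyc
    unfold ed at hcyc
    rw [Finsupp.single_eq_same] at hcyc
    split_ifs at hcyc
    · exact one_ne_zero hcyc
    · exact one_ne_zero (neg_eq_zero.1 hcyc)
  · -- collapse
    have hav : Avoids (ed W x0) x.1 (wd W x.2 m) := by
      apply avoids_wd
      intro s hs he
      apply hxo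
      rw [← hfree _ (iter_mem (fun x hx => KS_sg hN hNℓ hx) hx s) he]
      exact mem_orb_iter hN hper s
    obtain ⟨S', hS', hmem⟩ := collapse hN hNℓ S x0 hx0 hfree _ _ hav hvx'
    refine IH S' hS' _ hmem (bad_P hred x.2 hmpos ?_)
    obtain ⟨d, hd⟩ := hmℓ
    rw [hd]
    have h1 : ℓ * d < n * ℓ := by omega
    have h2 : d < n := by
      rw [mul_comm n ℓ] at h1
      exact lt_of_mul_lt_mul_left h1 (Nat.zero_le _)
    have h3 : d ≤ n - 1 := by omega
    have := Nat.mul_le_mul_left ℓ h3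
    rw [mul_comm (n - 1) ℓ]
    omega

end Period

end BBN


namespace BBN

open Finset

/-! ### The path lemma -/

section Path

variable {A X : Type*} [MulAction (FreeGroup A) X] {ℓ : ℕ} {W : ZMod ℓ → A × Bool}

theorem eo_eq {v v' : X} {p q : A × Bool} (h : eo v p = eo v' q) :
    (v = v' ∧ p = q) ∨ (p = linv q ∧ v = (lett q)⁻¹ • v') := by
  rcases p with ⟨a, _ | _⟩ <;> rcases q with ⟨b, _ | _⟩ <;>
    simp only [eo, if_true, if_false, Bool.false_eq_true, Prod.mk.injEq] at h <;>
    obtain ⟨h1, rfl⟩ := h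
  · left; exact ⟨smul_left_cancel _ h1, rfl⟩
  · right; refine ⟨rfl, ?_⟩
    rw [lett_true, ← h1, inv_smul_smul]
  · right; refine ⟨rfl, ?_⟩
    rw [lett_false, h1, inv_inv]
  · left; exact ⟨h1, rfl⟩

theorem infix_of_get {α : Type*} {l L : List α} (j : ℕ) (h : j + l.length ≤ L.length)
    (hget : ∀ i < l.length, l[i]? = L[j + i]?) : l <:+: L := by
  have : l = (L.drop j).take l.length := by
    apply List.ext_getElem?
    intro i
    by_cases hi : i < l.length
    · rw [hget i hi, List.getElem?_take_of_lt hi, List.getElem?_drop]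
    · rw [List.getElem?_eq_none (by omega), List.getElem?_eq_none]
      rw [List.length_take]
      omega
  rw [this]
  exact (take_isInf _ _).trans (List.drop_suffix _ _).isInfix

/-- Vertex after `j` letters. -/
def vt (v0 : X) (L : List (A × Bool)) (j : ℕ) : X := (FreeGroup.mk (L.take j))⁻¹ • v0

theorem vt_succ (v0 : X) (L : List (A × Bool)) (j : ℕ) (p : A × Bool) (hp : L[j]? = some p) :
    vt v0 L (j + 1) = (lett p)⁻¹ • vt v0 L j := by
  unfold vt
  rw [List.take_add_one, hp, ← FreeGroup.mul_mk, mul_inv_rev, mul_smul]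
  rfl

theorem path_lemma (v0 : X) (L : List (A × Bool))
    (hinj : ∀ i ≤ L.length, ∀ j ≤ L.length, vt v0 L i = vt v0 L j → vt v0 L i ≠ v0 → i = j)
    (z : X × ZMod ℓ) (M : ℕ)
    (hne : ∀ t < M, ed W ((sg W)^[t] z) ≠ ed W ((sg W)^[t + 1] z))
    (hinn : ∀ t, 1 ≤ t → t ≤ M → ((sg W)^[t] z).1 ≠ v0)
    (hcov : ∀ t ≤ M, ∃ j p, L[j]? = some p ∧ eo (vt v0 L j) p = ed W ((sg W)^[t] z)) :
    wd W z.2 (M + 1) <:+: L ∨ ((wd W z.2 (M + 1)).map linv).reverse <:+: L := by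
  obtain ⟨_, p0, _, _⟩ := hcov 0 (Nat.zero_le _)
  have : Nonempty (A × Bool) := ⟨p0⟩
  choose! J p hp he using hcov
  have hlt : ∀ t ≤ M, J t < L.length := fun t ht => by
    have := hp t ht
    exact (List.getElem?_eq_some_iff.1 this).1
  have hJne : ∀ t < M, J t ≠ J (t + 1) := by
    intro t ht h
    apply hne t ht
    rw [← he t (by omega), ← he (t + 1) (by omega), h]
    have h1 := hp t (by omega)
    rw [h, hp (t + 1) (by omega)] at h1
    rw [Option.some.inj h1]
  have hWt : ∀ t, ((sg W)^[t] z).2 = z.2 + t := fun t => by rw [sg_iter]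
  -- the dichotomy at each step
  have hd : ∀ t ≤ M,
      (vt v0 L (J t) = ((sg W)^[t] z).1 ∧ vt v0 L (J t + 1) = ((sg W)^[t + 1] z).1 ∧
        p t = W (z.2 + t)) ∨
      (vt v0 L (J t) = ((sg W)^[t + 1] z).1 ∧ p t = linv (W (z.2 + t)) ∧
        vt v0 L (J t + 1) = ((sg W)^[t] z).1) := by
    intro t ht
    have h1 := he t ht
    have h2 := vt_succ v0 L (J t) (p t) (hp t ht)
    have h3 : ((sg W)^[t + 1] z).1 = (lett (W (z.2 + t)))⁻¹ • ((sg W)^[t] z).1 := by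
      rw [Function.iterate_succ_apply', sg, hWt]
    unfold ed at h1
    rw [hWt] at h1
    rcases eo_eq h1 with ⟨a, b⟩ | ⟨a, b⟩
    · left
      refine ⟨a, ?_, b⟩
      rw [h2, h3, a, b]
    · right
      refine ⟨b.trans h3.symm, a, ?_⟩
      rw [h2, a, b, lett_linv, inv_inv, smul_inv_smul]
  rcases hd 0 (Nat.zero_le _) with h0 | h0
  · left
    have key : ∀ t ≤ M, J t = J 0 + t ∧ (vt v0 L (J t + 1) = ((sg W)^[t + 1] z).1 ∧
        p t = W (z.2 + t)) := by
      intro t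
      induction t with
      | zero => intro _; exact ⟨rfl, h0.2⟩
      | succ t ih =>
        intro ht
        obtain ⟨e1, e2, e3⟩ := ih (by omega)
        have hi := hinn (t + 1) (by omega) ht
        have l1 := hlt t (by omega)
        have l2 := hlt (t + 1) ht
        rcases hd (t + 1) ht with h | h
        · have := hinj _ (by omega) _ (by omega) (e2.trans h.1.symm) (e2 ▸ hi)
          exact ⟨by omega, h.2⟩
        · have := hinj _ (by omega) _ (by omega) (e2.trans h.2.2.symm) (e2 ▸ hi)
          exact absurd (by omega) (hJne t (by omega))
    apply infix_of_get (J 0)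
    · rw [wd_length]
      have := (key M le_rfl).1
      have := hlt M le_rfl
      omega
    · intro i hi
      rw [wd_length] at hi
      obtain ⟨e1, _, e3⟩ := key i (by omega)
      rw [← e1, hp i (by omega), e3]
      simp [wd, hi]
  · right
    have key : ∀ t ≤ M, J t + t = J 0 ∧ (vt v0 L (J t) = ((sg W)^[t + 1] z).1 ∧
        p t = linv (W (z.2 + t))) := by
      intro t
      induction t with
      | zero => intro _; exact ⟨rfl, h0.1, h0.2.1⟩
      | succ t ih =>
        intro ht
        obtain ⟨e1, e2, e3⟩ := ih (by omega)
        have hi := hinn (t + 1) (by omega) ht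
        have l1 := hlt t (by omega)
        have l2 := hlt (t + 1) ht
        rcases hd (t + 1) ht with h | h
        · have := hinj _ (by omega) _ (by omega) (e2.trans h.1.symm) (e2 ▸ hi)
          exact absurd (by omega) (hJne t (by omega))
        · have := hinj _ (by omega) _ (by omega) (e2.trans h.2.2.symm) (e2 ▸ hi)
          exact ⟨by omega, h.1, h.2.1⟩
    apply infix_of_get (J M)
    · rw [List.length_reverse, List.length_map, wd_length]
      have := (key M le_rfl).1
      have := hlt 0 (Nat.zero_le _)
      omega
    · intro i hi
      rw [List.length_reverse, List.length_map, wd_length] at hi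
      obtain ⟨e1, _, e3⟩ := key (M - i) (by omega)
      have e4 := (key M le_rfl).1
      have e5 : J M + i = J (M - i) := by omega
      rw [e5, hp _ (by omega), e3, List.getElem?_reverse (by simpa [wd_length] using hi)]
      simp [wd]

end Path

section NoBad

variable {A : Type*} [DecidableEq A] {ℓ : ℕ} {W : ZMod ℓ → A × Bool}

theorem mk_take_drop (L : List (A × Bool)) {i j : ℕ} (hij : i ≤ j) :
    FreeGroup.mk (L.take j) = FreeGroup.mk (L.take i) * FreeGroup.mk ((L.drop i).take (j - i)) := by
  rw [FreeGroup.mul_mk, ← List.take_add, Nat.add_sub_cancel' hij]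

theorem no_bad [NeZero ℓ] (hred : ∀ i, W (i + 1) ≠ linv (W i))
    (hprim : ∀ d, (∀ i, W (i + d) = W i) → d = 0) {n : ℕ} (hn : 2 ≤ n) (c : ℕ) :
    ∀ S : Finset (FreeGroup A), S.card ≤ c → ∀ w ∈ HS W (n * ℓ) S,
      ¬ Bad W ((n - 1) * ℓ + 1) w := by
  classical
  obtain ⟨h, hS⟩ := exists_stack W hred hprim
  have hℓ : 0 < ℓ := Nat.pos_of_ne_zero (NeZero.ne ℓ)
  have hN : 0 < n * ℓ := by positivity
  have hNℓ : ((n * ℓ : ℕ) : ZMod ℓ) = 0 := by simp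
  induction c with
  | zero =>
    intro S hc w hw hbad
    have : S = ∅ := card_eq_zero.1 (by omega)
    subst this
    simp only [HS, coe_empty, Set.image_empty, Subgroup.closure_empty, Subgroup.mem_bot] at hw
    exact hbad.1 hw
  | succ c IHc =>
    have main : ∀ k, ∀ S : Finset (FreeGroup A), S.card ≤ c + 1 → ∀ w ∈ HS W (n * ℓ) S,
        w.toWord.length = k → ¬ Bad W ((n - 1) * ℓ + 1) w := by
      intro k
      induction k using Nat.strong_induction_on with
      | _ k IHk =>
      intro S hc w hw hk hbad
      have IH : ∀ S' : Finset (FreeGroup A), S'.card < S.card → ∀ w ∈ HS W (n * ℓ) S',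
        ¬ Bad W ((n - 1) * ℓ + 1) w := fun S' hS' => IHc S' (by omega)
      have hne : S.Nonempty := by
        rw [nonempty_iff_ne_empty]
        rintro rfl
        simp only [HS, coe_empty, Set.image_empty, Subgroup.closure_empty, Subgroup.mem_bot] at hw
        exact hbad.1 hw
      set L := w.toWord with hL
      set v0 := base (HS W (n * ℓ) S) with hv0
      have hmkL : FreeGroup.mk L = w := FreeGroup.mk_toWord
      have hLred : FreeGroup.IsReduced L := FreeGroup.isReduced_toWord
      -- simplicity
      have hsimple : ∀ i j, i < j → j ≤ L.length → vt v0 L i = vt v0 L j → i = 0 ∧ j = L.length := by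
        intro i j hij hj he
        by_contra hcon
        set g := FreeGroup.mk (L.take i) with hg
        set l := (L.drop i).take (j - i) with hl
        have hlen : l.length = j - i := by
          rw [hl, List.length_take, List.length_drop]; omega
        have hinf : l <:+: L :=
          (take_isInf _ _).trans (List.drop_suffix _ _).isInfix
        have hlw : (FreeGroup.mk l).toWord = l := by
          rw [FreeGroup.toWord_mk]
          exact (FreeGroup.isReduced_iff_reduce_eq).1 (reduced_of_isInf hLred hinf)
        unfold vt at he
        rw [mk_take_drop L hij.le, ← hg, ← hl, hv0, smul_base_eq_iff] at he
        have h1 : g * FreeGroup.mk l * g⁻¹ ∈ HS W (n * ℓ) S := by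
          have := inv_mem he
          simpa [mul_assoc] using this
        obtain ⟨S', hS', h2⟩ := HS_translate' g⁻¹ h1
        have h3 : g⁻¹ * (g * FreeGroup.mk l * g⁻¹) * g⁻¹⁻¹ = FreeGroup.mk l := by group
        rw [h3] at h2
        refine IHk (j - i) (by omega) _ (hS'.trans hc) _ h2 (by rw [hlw, hlen]) ?_
        refine ⟨?_, fun a => ?_⟩
        · intro h4
          rw [h4, FreeGroup.toWord_one] at hlw
          rw [← hlw] at hlen
          simp at hlen
          omega
        · rw [hlw]
          exact ⟨fun h => (hbad.2 a).1 (h.trans hinf), fun h => (hbad.2 a).2 (h.trans hinf)⟩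
      have hvend : vt v0 L L.length = v0 := by
        unfold vt
        rw [List.take_length, hmkL, hv0]
        exact (smul_base_iff _ _).2 (inv_mem hw)
      have hinj : ∀ i ≤ L.length, ∀ j ≤ L.length, vt v0 L i = vt v0 L j → vt v0 L i ≠ v0 →
          i = j := by
        intro i hi j hj he hv
        rcases lt_trichotomy i j with h | h | h
        · obtain ⟨_, rfl⟩ := hsimple i j h hj he
          exact absurd (he.trans hvend) hv
        · exact h
        · obtain ⟨_, rfl⟩ := hsimple j i h hi he.symm
          exact absurd hvend hv
      have hK : ∀ x ∈ KS W (n * ℓ) S, sg W x ∈ KS W (n * ℓ) S := fun x hx => KS_sg hN hNℓ hx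
      have hKN : ∀ x ∈ KS W (n * ℓ) S, (sg W)^[n * ℓ] x = x := fun x hx => KS_periodic hN hNℓ hx
      have st1 := starts_le_KS hred hS hN hNℓ S hne
      have st2 := starts_le_KS hred hS.neg hN hNℓ S hne
      obtain ⟨x0, hx0, hfree0⟩ := exists_free hred hS hK hN hKN (by convert st1) (by convert st2)
      have hfull := full_periods hred hn S IH x0 hx0 hfree0
      obtain ⟨z, hz, hzf, hzv⟩ := exists_run hred hS hK hn hKN hfull (by convert st1) (by convert st2) v0
      have hM : (n - 1) * ℓ < n * ℓ := Nat.mul_lt_mul_of_pos_right (by omega) hℓ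
      have hM1 : 1 < n * ℓ := by
        calc 1 < n * 1 := by omega
          _ ≤ n * ℓ := Nat.mul_le_mul_left _ hℓ
      have := path_lemma (W := W) v0 L hinj z ((n - 1) * ℓ) (by
        intro t ht he
        have := hzf (t + 1) (by omega) _ (iter_mem hK hz t) he
        rw [Function.iterate_succ_apply'] at this
        exact hfull _ (iter_mem hK hz t) 1 (by omega) hM1 this.symm) hzv (by
        intro t ht
        by_contra hcon
        push Not at hcon
        have hav : Avoids (ed W ((sg W)^[t] z)) v0 L := by
          intro L1 p L2 hLL
          have := hcon L1.length p (by rw [hLL]; simp)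
          unfold vt at this
          rw [hLL] at this
          simpa using this
        obtain ⟨S', hS', hmem⟩ := collapse hN hNℓ S _ (iter_mem hK hz t) (hzf t ht) L v0 hav (by
          rw [hmkL, hv0]
          exact (smul_base_iff _ _).2 hw)
        rw [hmkL] at hmem
        exact IH S' hS' w hmem hbad)
      rcases this with h | h
      · exact (hbad.2 z.2).1 h
      · exact (hbad.2 z.2).2 h
    intro S hc w hw
    exact main _ S hc w hw rfl

end NoBad

end BBN


namespace BBN

open Finset

section Wrap

variable {A : Type*}

/-- The cyclic word of a list. -/
def cw (r : List (A × Bool)) [NeZero r.length] (i : ZMod r.length) : A × Bool :=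
  r[i.val]'(ZMod.val_lt i)

theorem cw_natCast (r : List (A × Bool)) [NeZero r.length] (k : ℕ) (hk : k < r.length) :
    cw r (k : ZMod r.length) = r[k] := by
  unfold cw
  congr 1
  exact ZMod.val_natCast_of_lt hk

theorem wd_cw (r : List (A × Bool)) [NeZero r.length] : wd (cw r) 0 r.length = r := by
  apply List.ext_getElem
  · rw [wd_length]
  · intro i h1 h2
    simp only [wd, List.getElem_map, List.getElem_range, zero_add]
    exact cw_natCast r i h2

variable {ℓ : ℕ} {W : ZMod ℓ → A × Bool}

theorem wd_isInf [NeZero ℓ] (i : ZMod ℓ) (m N : ℕ) (h : ℓ - 1 + m ≤ N) :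
    wd W i m <:+: wd W 0 N := by
  have hi := ZMod.val_lt i
  obtain ⟨r, rfl⟩ : ∃ r, N = i.val + (m + r) := ⟨N - i.val - m, by omega⟩
  rw [wd_add, wd_add]
  refine ⟨wd W 0 i.val, wd W (0 + (i.val : ZMod ℓ) + m) r, ?_⟩
  simp

theorem HS_mono {N : ℕ} {S T : Finset (FreeGroup A)} (h : S ⊆ T) : HS W N S ≤ HS W N T :=
  Subgroup.closure_mono (Set.image_mono (by exact_mod_cast h))

theorem exists_HS {N : ℕ} {w : FreeGroup A}
    (hw : w ∈ Subgroup.normalClosure ({P W 0 N} : Set (FreeGroup A))) :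
    ∃ S : Finset (FreeGroup A), w ∈ HS W N S := by
  classical
  unfold Subgroup.normalClosure at hw
  induction hw using Subgroup.closure_induction with
  | mem x hx =>
    obtain ⟨a, ha, hc⟩ := Group.mem_conjugatesOfSet_iff.1 hx
    rw [Set.mem_singleton_iff] at ha
    subst ha
    obtain ⟨c, rfl⟩ := isConj_iff.1 hc
    exact ⟨{c}, conj_mem_HS (mem_singleton_self c)⟩
  | one => exact ⟨∅, one_mem _⟩
  | mul x y _ _ hx hy =>
    obtain ⟨S, hS⟩ := hx
    obtain ⟨T, hT⟩ := hy
    exact ⟨S ∪ T, mul_mem (HS_mono subset_union_left hS) (HS_mono subset_union_right hT)⟩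
  | inv x _ hx =>
    obtain ⟨S, hS⟩ := hx
    exact ⟨S, inv_mem hS⟩

theorem period_gcd [NeZero ℓ] (d : ZMod ℓ) (hd : ∀ i, W (i + d) = W i) :
    ∀ i, W (i + (Nat.gcd d.val ℓ : ℕ)) = W i := by
  have hz : ∀ c : ℤ, ∀ i, W (i + c • d) = W i := by
    intro c
    induction c using Int.induction_on with
    | zero => simp
    | succ c ih => intro i; rw [add_smul, one_smul, ← add_assoc, hd, ih]
    | pred c ih =>
      intro i
      rw [← hd (i + (-(c : ℤ) - 1) • d), sub_smul, one_smul]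
      rw [show i + (-(c : ℤ) • d - d) + d = i + -(c : ℤ) • d by abel]
      exact ih i
  have e : ((Nat.gcd d.val ℓ : ℕ) : ZMod ℓ) = Nat.gcdA d.val ℓ • d := by
    have h1 := congrArg (fun z : ℤ => (z : ZMod ℓ)) (Nat.gcd_eq_gcd_ab d.val ℓ)
    push_cast at h1
    rw [ZMod.natCast_zmod_val, ZMod.natCast_self, zero_mul, add_zero] at h1
    rw [h1, zsmul_eq_mul, mul_comm]
  rw [e]
  exact hz _

end Wrap

theorem spelling {A : Type*} [DecidableEq A]
    (R : FreeGroup A) (hR : R ≠ 1)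
    (hcyc : ∀ x : A × Bool, R.toWord.head? = some x → R.toWord.getLast? ≠ some (x.1, !x.2))
    (hpow : ¬ ∃ (s : FreeGroup A) (k : ℕ), 2 ≤ k ∧ R = s ^ k)
    (n : ℕ) (hn : 2 ≤ n)
    (w : FreeGroup A) (hw : w ≠ 1)
    (hmem : w ∈ Subgroup.normalClosure ({R ^ n} : Set (FreeGroup A))) :
    ∃ u : List (A × Bool), u <:+: w.toWord ∧
      (u <:+: (R ^ n).toWord ∨ (u.map fun p => (p.1, !p.2)).reverse <:+: (R ^ n).toWord) ∧
      n * u.length > (n - 1) * (R ^ n).toWord.length := by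
  set r := R.toWord with hr
  have hr0 : r ≠ [] := fun h => hR (FreeGroup.toWord_eq_nil_iff.1 h)
  have hpos : 0 < r.length := List.length_pos_iff.2 hr0
  have : NeZero r.length := ⟨hpos.ne'⟩
  have hrr : FreeGroup.IsReduced r := FreeGroup.isReduced_toWord
  have hnat : ∀ i : ZMod r.length, ∃ k < r.length, i = (k : ZMod r.length) := fun i =>
    ⟨i.val, ZMod.val_lt i, by simp⟩
  have hred : ∀ i, cw r (i + 1) ≠ linv (cw r i) := by
    intro i h
    obtain ⟨k, hk, rfl⟩ := hnat i
    by_cases hk1 : k + 1 < r.length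
    · have e : (k : ZMod r.length) + 1 = ((k + 1 : ℕ) : ZMod r.length) := by push_cast; rfl
      rw [e, cw_natCast r _ hk1, cw_natCast r _ hk] at h
      unfold FreeGroup.IsReduced at hrr
      have := List.isChain_iff_getElem.1 hrr k hk1
      rw [h] at this
      simp [linv] at this
    · have e : (k : ZMod r.length) + 1 = ((0 : ℕ) : ZMod r.length) := by
        have h2 : k + 1 = r.length := by omega
        have h3 : ((k + 1 : ℕ) : ZMod r.length) = ((r.length : ℕ) : ZMod r.length) := by rw [h2]
        rw [ZMod.natCast_self] at h3
        push_cast at h3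
        simpa using h3
      rw [e, cw_natCast r _ hpos, cw_natCast r _ hk] at h
      refine hcyc r[0] ?_ ?_
      · rw [List.head?_eq_getElem?, List.getElem?_eq_getElem hpos]
      · rw [List.getLast?_eq_getElem?]
        have h2 : r.length - 1 = k := by omega
        rw [h2, List.getElem?_eq_getElem hk, h]
        simp [linv]
  have hRP : P (cw r) 0 r.length = R := by
    unfold P
    rw [wd_cw, hr, FreeGroup.mk_toWord]
  have hprim : ∀ d, (∀ i, cw r (i + d) = cw r i) → d = 0 := by
    intro d hd
    by_contra hne
    have hg := period_gcd d hd
    obtain ⟨q, hq⟩ := Nat.gcd_dvd_right d.val r.length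
    apply hpow
    have hv : 0 < d.val := Nat.pos_of_ne_zero fun h => hne ((ZMod.val_eq_zero d).1 h)
    have hle : Nat.gcd d.val r.length ≤ d.val := Nat.gcd_le_left _ hv
    have hlt := ZMod.val_lt d
    refine ⟨P (cw r) 0 (Nat.gcd d.val r.length), q, ?_, ?_⟩
    · by_contra hq2
      have : q = 0 ∨ q = 1 := by omega
      rcases this with rfl | rfl <;> omega
    · rw [← P_mul _ _ _ hg, mul_comm q, ← hq, hRP]
  have hRn : R ^ n = P (cw r) 0 (n * r.length) := by
    rw [P_mul _ _ _ (by intro i; simp), hRP]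
  rw [hRn, toWord_P hred, wd_length]
  rw [hRn] at hmem
  obtain ⟨S, hS⟩ := exists_HS hmem
  have hnb := no_bad hred hprim hn S.card S le_rfl w hS
  have hnl : n * r.length = (n - 1) * r.length + r.length := by
    obtain ⟨m, rfl⟩ : ∃ m, n = m + 1 := ⟨n - 1, by omega⟩
    simp [add_mul]
  have hlen : n * ((n - 1) * r.length + 1) > (n - 1) * (n * r.length) := by
    have : n * ((n - 1) * r.length + 1) = (n - 1) * (n * r.length) + n := by ring
    omega
  have hex : ∃ i, wd (cw r) i ((n - 1) * r.length + 1) <:+: w.toWord ∨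
      ((wd (cw r) i ((n - 1) * r.length + 1)).map linv).reverse <:+: w.toWord := by
    by_contra hcon
    push Not at hcon
    exact hnb ⟨hw, hcon⟩
  obtain ⟨i, h | h⟩ := hex
  · refine ⟨_, h, Or.inl (wd_isInf i _ _ (by omega)), ?_⟩
    rw [wd_length]
    exact hlen
  · refine ⟨_, h, Or.inr ?_, ?_⟩
    · have e : ((((wd (cw r) i ((n - 1) * r.length + 1)).map linv).reverse).map
          fun p => (p.1, !p.2)).reverse = wd (cw r) i ((n - 1) * r.length + 1) := by
        simp [linv, Function.comp_def]
      rw [e]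
      exact wd_isInf i _ _ (by omega)
    · rw [List.length_reverse, List.length_map, wd_length]
      exact hlen

end BBN

/-- **The B. B. Newman Spelling Theorem (1968).** -/
theorem bb_newman_spelling_theorem {A : Type*} [DecidableEq A]
    (R : FreeGroup A) (hR : R ≠ 1) (hcyc : FreeGroup.CyclicallyReduced R)
    (hpow : ¬ ∃ (s : FreeGroup A) (k : ℕ), 2 ≤ k ∧ R = s ^ k)
    (n : ℕ) (hn : 2 ≤ n)
    (w : FreeGroup A) (hw : w ≠ 1)
    (hmem : w ∈ Subgroup.normalClosure ({R ^ n} : Set (FreeGroup A))) :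
    ∃ u : List (A × Bool), u <:+: w.toWord ∧
      (u <:+: (R ^ n).toWord ∨ FreeGroup.wordInv u <:+: (R ^ n).toWord) ∧
      n * u.length > (n - 1) * (R ^ n).toWord.length := by
  exact BBN.spelling R hR hcyc hpow n hn w hw hmem
end

section
/- Let g ≥ 2 and let ρ = [a₁,b₁][a₂,b₂]⋯[a_g,b_g] be the surface relator in the free group on 2g generators (indexed by a finite type), where [a,b] = a b a⁻¹ b⁻¹. Then the word problem for the surface group ⟨a₁, b₁, …, a_g, b_g | ρ = 1⟩ is decidable: the predicate on lists l : List ((Fin g × Fin 2) × Bool) given by 'the element FreeGroup.mk l lies in the normal closure of {ρ}' is a computable predicate (ComputablePred). -/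
/-
Proof idea.  Write `t = a₁`, `b = b₁`, `R = [a₂,b₂]⋯[a_g,b_g]`.  The surface group is
`⟨t, b, y (y ∈ Y) | t b t⁻¹ = R⁻¹ b⟩`, which is an extension of `ℤ` by a free group, on
which `t` acts by the explicit automorphism `σ : b ↦ R₀⁻¹ b, y_i ↦ y_{i+1}`.
We let the free group act on `K × ℤ`, `K` free, and decide triviality by computing the
orbit of the base point with words.
-/

/-- The surface relator `[a₁,b₁][a₂,b₂]⋯[a_g,b_g]` in the free group on the
`2g` generators `Fin g × Fin 2`, where `a i = of (i, 0)`, `b i = of (i, 1)` and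
`[a,b] = a b a⁻¹ b⁻¹`. -/
def surfaceRelator (g : ℕ) : FreeGroup (Fin g × Fin 2) :=
  ((List.finRange g).map fun i =>
    FreeGroup.of (i, 0) * FreeGroup.of (i, 1) *
      (FreeGroup.of (i, 0))⁻¹ * (FreeGroup.of (i, 1))⁻¹).prod

namespace SurfaceWP

/-- generators of the free group `K` -/
abbrev Gen (n : ℕ) := (Fin (n + 1) × Fin 2) × ℤ

/-- the free group `K` -/
abbrev KK (n : ℕ) := FreeGroup (Gen n)

/-- tail of the relator, translated to level `j` -/
def tailR (n : ℕ) (j : ℤ) : KK n :=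
  ((List.finRange n).map fun i =>
    FreeGroup.of ((i.succ, 0), j) * FreeGroup.of ((i.succ, 1), j) *
      (FreeGroup.of ((i.succ, 0), j))⁻¹ * (FreeGroup.of ((i.succ, 1), j))⁻¹).prod

/-- the automorphism `σ`, as a homomorphism -/
def sig (n : ℕ) : KK n →* KK n :=
  FreeGroup.lift fun x =>
    if x.1 = (0, 1) then (tailR n 0)⁻¹ * FreeGroup.of x else FreeGroup.of (x.1, x.2 + 1)

/-- the inverse of `σ`, as a homomorphism -/
def sigInv (n : ℕ) : KK n →* KK n :=
  FreeGroup.lift fun x =>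
    if x.1 = (0, 1) then tailR n (-1) * FreeGroup.of x else FreeGroup.of (x.1, x.2 - 1)

theorem sig_tailR (n : ℕ) (j : ℤ) : sig n (tailR n j) = tailR n (j + 1) := by
  simp only [tailR, map_list_prod, List.map_map]
  refine congrArg List.prod (List.map_congr_left fun i _ => ?_)
  simp [sig, Fin.succ_ne_zero]

theorem sigInv_tailR (n : ℕ) (j : ℤ) : sigInv n (tailR n j) = tailR n (j - 1) := by
  simp only [tailR, map_list_prod, List.map_map]
  refine congrArg List.prod (List.map_congr_left fun i _ => ?_)
  simp [sigInv, Fin.succ_ne_zero]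

theorem sig_sigInv (n : ℕ) (k : KK n) : sig n (sigInv n k) = k := by
  have : (sig n).comp (sigInv n) = MonoidHom.id _ := by
    ext x
    by_cases h : x.1 = (0, 1)
    · have h1 : sigInv n (FreeGroup.of x) = tailR n (-1) * FreeGroup.of x := by simp [sigInv, h]
      have h2 : sig n (FreeGroup.of x) = (tailR n 0)⁻¹ * FreeGroup.of x := by simp [sig, h]
      simp [h1, h2, sig_tailR]
    · simp [sig, sigInv, h]
  exact DFunLike.congr_fun this k

theorem sigInv_sig (n : ℕ) (k : KK n) : sigInv n (sig n k) = k := by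
  have : (sigInv n).comp (sig n) = MonoidHom.id _ := by
    ext x
    by_cases h : x.1 = (0, 1)
    · have h1 : sigInv n (FreeGroup.of x) = tailR n (-1) * FreeGroup.of x := by simp [sigInv, h]
      have h2 : sig n (FreeGroup.of x) = (tailR n 0)⁻¹ * FreeGroup.of x := by simp [sig, h]
      simp [h1, h2, sigInv_tailR]
    · simp [sig, sigInv, h]
  exact DFunLike.congr_fun this k

/-- the action of `t` -/
def T (n : ℕ) : Equiv.Perm (KK n × ℤ) where
  toFun p := (sig n p.1, p.2 + 1)
  invFun p := (sigInv n p.1, p.2 - 1)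
  left_inv p := by simp [sigInv_sig]
  right_inv p := by simp [sig_sigInv]

/-- the action of `K` by left multiplication -/
def L (n : ℕ) : KK n →* Equiv.Perm (KK n × ℤ) where
  toFun k :=
    { toFun := fun p => (k * p.1, p.2)
      invFun := fun p => (k⁻¹ * p.1, p.2)
      left_inv := fun p => by simp
      right_inv := fun p => by simp }
  map_one' := by ext p <;> simp
  map_mul' a b := by ext p <;> simp [mul_assoc]

theorem T_L (n : ℕ) (k : KK n) : T n * L n k = L n (sig n k) * T n := by
  ext p <;> simp [T, L]

/-- the action of the free group -/
def Phi (n : ℕ) : FreeGroup (Fin (n + 1) × Fin 2) →* Equiv.Perm (KK n × ℤ) :=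
  FreeGroup.lift fun a => if a = (0, 0) then T n else L n (FreeGroup.of (a, 0))

/-- tail of the relator -/
def tailF (n : ℕ) : FreeGroup (Fin (n + 1) × Fin 2) :=
  ((List.finRange n).map fun i =>
    FreeGroup.of (i.succ, 0) * FreeGroup.of (i.succ, 1) *
      (FreeGroup.of (i.succ, 0))⁻¹ * (FreeGroup.of (i.succ, 1))⁻¹).prod

theorem relator_eq (n : ℕ) : surfaceRelator (n + 1) =
    FreeGroup.of (0, 0) * FreeGroup.of (0, 1) *
      (FreeGroup.of (0, 0))⁻¹ * (FreeGroup.of (0, 1))⁻¹ * tailF n := by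
  simp [surfaceRelator, tailF, List.finRange_succ, Function.comp_def]

theorem Phi_tail (n : ℕ) : Phi n (tailF n) = L n (tailR n 0) := by
  simp only [tailR, tailF, map_list_prod, List.map_map]
  refine congrArg List.prod (List.map_congr_left fun i _ => ?_)
  simp [Phi, Fin.succ_ne_zero]

theorem Phi_relator (n : ℕ) : Phi n (surfaceRelator (n + 1)) = 1 := by
  have h0 : Phi n (FreeGroup.of (0, 0)) = T n := by simp [Phi]
  have h1 : Phi n (FreeGroup.of (0, 1)) = L n (FreeGroup.of ((0, 1), 0)) := by simp [Phi]
  have h2 : sig n (FreeGroup.of ((0, 1), 0)) = (tailR n 0)⁻¹ * FreeGroup.of ((0, 1), 0) := by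
    simp [sig]
  rw [relator_eq]
  simp only [map_mul, map_inv, h0, h1, Phi_tail, T_L, h2]
  group

/-- the surface group -/
abbrev NN (n : ℕ) : Subgroup (FreeGroup (Fin (n + 1) × Fin 2)) :=
  Subgroup.normalClosure {surfaceRelator (n + 1)}

/-- the quotient map -/
abbrev qq (n : ℕ) := QuotientGroup.mk' (NN n)

/-- The map from `K` to the surface group. -/
def psi (n : ℕ) : KK n →* (FreeGroup (Fin (n + 1) × Fin 2)) ⧸ NN n :=
  FreeGroup.lift fun x => if x.1 = (0, 1) then qq n (FreeGroup.of x.1) else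
    qq n (FreeGroup.of (0, 0)) ^ x.2 * qq n (FreeGroup.of x.1) *
      (qq n (FreeGroup.of (0, 0)) ^ x.2)⁻¹

theorem psi_tail (n : ℕ) : psi n (tailR n 0) = qq n (tailF n) := by
  simp only [tailR, tailF, map_list_prod, List.map_map]
  refine congrArg List.prod (List.map_congr_left fun i _ => ?_)
  simp [psi, Fin.succ_ne_zero]

theorem rel_quot (n : ℕ) : qq n (FreeGroup.of (0, 0)) * qq n (FreeGroup.of (0, 1)) *
      (qq n (FreeGroup.of (0, 0)))⁻¹ = (qq n (tailF n))⁻¹ * qq n (FreeGroup.of (0, 1)) := by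
  have h : qq n (surfaceRelator (n + 1)) = 1 :=
    (QuotientGroup.eq_one_iff _).2 (Subgroup.subset_normalClosure rfl)
  have hr := congrArg (qq n) (relator_eq n)
  rw [h] at hr
  simp only [map_mul, map_inv] at hr
  rw [← mul_inv_eq_one, hr]
  group

theorem psi_sig (n : ℕ) (k : KK n) : psi n (sig n k) =
    qq n (FreeGroup.of (0, 0)) * psi n k * (qq n (FreeGroup.of (0, 0)))⁻¹ := by
  have : (psi n).comp (sig n) =
      ((MulAut.conj (qq n (FreeGroup.of (0, 0)))).toMonoidHom).comp (psi n) := by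
    ext x
    by_cases h : x.1 = (0, 1)
    · have h2 : sig n (FreeGroup.of x) = (tailR n 0)⁻¹ * FreeGroup.of x := by simp [sig, h]
      have h3 : psi n (FreeGroup.of x) = qq n (FreeGroup.of (0, 1)) := by simp [psi, h]
      simp only [MonoidHom.comp_apply, h2, map_mul, map_inv, h3, psi_tail, MulEquiv.coe_toMonoidHom,
        MulAut.conj_apply]
      exact (rel_quot n).symm
    · have h2 : sig n (FreeGroup.of x) = FreeGroup.of (x.1, x.2 + 1) := by simp [sig, h]
      have h3 : ∀ j, psi n (FreeGroup.of (x.1, j)) =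
        qq n (FreeGroup.of (0, 0)) ^ j * qq n (FreeGroup.of x.1) *
          (qq n (FreeGroup.of (0, 0)) ^ j)⁻¹ := by intro j; simp [psi, h]
      simp only [MonoidHom.comp_apply, h2, MulEquiv.coe_toMonoidHom, MulAut.conj_apply, h3]
      rw [add_comm x.2 1, zpow_add]
      group
  exact DFunLike.congr_fun this k

/-- The equivariant map to the surface group. -/
def ev (n : ℕ) (p : KK n × ℤ) : (FreeGroup (Fin (n + 1) × Fin 2)) ⧸ NN n :=
  psi n p.1 * qq n (FreeGroup.of (0, 0)) ^ p.2

theorem ev_of (n : ℕ) (a) (p : KK n × ℤ) :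
    ev n (Phi n (FreeGroup.of a) p) = qq n (FreeGroup.of a) * ev n p := by
  by_cases h : a = (0, 0)
  · subst h
    have : Phi n (FreeGroup.of (0, 0)) p = (sig n p.1, p.2 + 1) := by simp [Phi, T]
    rw [this]
    simp only [ev, psi_sig]
    rw [add_comm p.2 1, zpow_add]
    group
  · have : Phi n (FreeGroup.of a) p = (FreeGroup.of (a, 0) * p.1, p.2) := by simp [Phi, L, h]
    rw [this]
    have h3 : psi n (FreeGroup.of (a, 0)) = qq n (FreeGroup.of a) := by simp [psi]
    simp only [ev, map_mul, h3, mul_assoc]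

theorem ev_Phi (n : ℕ) (w) : ∀ (p : KK n × ℤ), ev n (Phi n w p) = qq n w * ev n p := by
  induction w using FreeGroup.induction_on with
  | C1 => intro p; simp
  | of a => exact ev_of n a
  | inv_of a _ =>
    intro p
    have := ev_of n a (Phi n (FreeGroup.of a)⁻¹ p)
    rw [← Equiv.Perm.mul_apply, ← map_mul] at this
    rw [map_inv (qq n), eq_inv_mul_iff_mul_eq, ← this]
    simp
  | mul x y hx hy => intro p; rw [map_mul, Equiv.Perm.mul_apply, hx, hy, map_mul, mul_assoc]

theorem mem_iff (n : ℕ) (w) : w ∈ NN n ↔ Phi n w (1, 0) = (1, 0) := by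
  constructor
  · intro h
    have : NN n ≤ (Phi n).ker :=
      Subgroup.normalClosure_le_normal (by simpa using Phi_relator n)
    have h2 : Phi n w = 1 := this h
    simp [h2]
  · intro h
    have := ev_Phi n w (1, 0)
    rw [h] at this
    have h1 : ev n (1, 0) = 1 := by simp [ev]
    rw [h1, mul_one] at this
    exact (QuotientGroup.eq_one_iff _).1 this.symm

/-! ### Words and computability -/

/-- word version of `σ` on letters -/
def sigW (n : ℕ) (x : Gen n × Bool) : List (Gen n × Bool) :=
  if x.1.1 = (0, 1) then
    if x.2 = true then (tailR n 0)⁻¹.toWord ++ [x] else [x] ++ (tailR n 0).toWord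
  else [((x.1.1, x.1.2 + 1), x.2)]

/-- word version of `σ⁻¹` on letters -/
def sigInvW (n : ℕ) (x : Gen n × Bool) : List (Gen n × Bool) :=
  if x.1.1 = (0, 1) then
    if x.2 = true then (tailR n (-1)).toWord ++ [x] else [x] ++ (tailR n (-1))⁻¹.toWord
  else [((x.1.1, x.1.2 - 1), x.2)]

theorem mk_cons' {α : Type*} (x : α × Bool) (l : List (α × Bool)) :
    FreeGroup.mk (x :: l) = FreeGroup.mk [x] * FreeGroup.mk l := by
  rw [FreeGroup.mul_mk]; rfl

theorem mk_single {α : Type*} (a : α) (e : Bool) :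
    FreeGroup.mk [(a, e)] = cond e (FreeGroup.of a) (FreeGroup.of a)⁻¹ := by
  cases e
  · simp [FreeGroup.of, FreeGroup.inv_mk, FreeGroup.invRev]
  · rfl

theorem mk_flatMap {α β : Type*} (f : FreeGroup α →* FreeGroup β)
    (w : α × Bool → List (β × Bool)) (h : ∀ x, FreeGroup.mk (w x) = f (FreeGroup.mk [x]))
    (l : List (α × Bool)) : FreeGroup.mk (l.flatMap w) = f (FreeGroup.mk l) := by
  induction l with
  | nil => exact (map_one f).symm
  | cons x l ih => rw [mk_cons', map_mul, ← ih, ← h, FreeGroup.mul_mk, List.flatMap_cons]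

theorem mk_sigW (n : ℕ) (x) : FreeGroup.mk (sigW n x) = sig n (FreeGroup.mk [x]) := by
  obtain ⟨⟨a, i⟩, e⟩ := x
  by_cases h : a = (0, 1)
  · have h0 : sig n (FreeGroup.of (a, i)) = (tailR n 0)⁻¹ * FreeGroup.of (a, i) := by
      simp [sig, h]
    cases e
    · have h1 : sigW n ((a, i), false) = [((a, i), false)] ++ (tailR n 0).toWord := by
        simp [sigW, h]
      rw [h1, ← FreeGroup.mul_mk, FreeGroup.mk_toWord, mk_single, cond_false, map_inv, h0]
      group
    · have h1 : sigW n ((a, i), true) = (tailR n 0)⁻¹.toWord ++ [((a, i), true)] := by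
        simp [sigW, h]
      rw [h1, ← FreeGroup.mul_mk, FreeGroup.mk_toWord, mk_single, cond_true, h0]
  · have h0 : sig n (FreeGroup.of (a, i)) = FreeGroup.of (a, i + 1) := by simp [sig, h]
    have h1 : sigW n ((a, i), e) = [((a, i + 1), e)] := by simp [sigW, h]
    rw [h1, mk_single, mk_single]
    cases e
    · rw [cond_false, cond_false, map_inv, h0]
    · rw [cond_true, cond_true, h0]

theorem mk_sigInvW (n : ℕ) (x) : FreeGroup.mk (sigInvW n x) = sigInv n (FreeGroup.mk [x]) := by
  obtain ⟨⟨a, i⟩, e⟩ := x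
  by_cases h : a = (0, 1)
  · have h0 : sigInv n (FreeGroup.of (a, i)) = (tailR n (-1)) * FreeGroup.of (a, i) := by
      simp [sigInv, h]
    cases e
    · have h1 : sigInvW n ((a, i), false) = [((a, i), false)] ++ (tailR n (-1))⁻¹.toWord := by
        simp [sigInvW, h]
      rw [h1, ← FreeGroup.mul_mk, FreeGroup.mk_toWord, mk_single, cond_false, map_inv, h0]
      group
    · have h1 : sigInvW n ((a, i), true) = (tailR n (-1)).toWord ++ [((a, i), true)] := by
        simp [sigInvW, h]
      rw [h1, ← FreeGroup.mul_mk, FreeGroup.mk_toWord, mk_single, cond_true, h0]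
  · have h0 : sigInv n (FreeGroup.of (a, i)) = FreeGroup.of (a, i - 1) := by simp [sigInv, h]
    have h1 : sigInvW n ((a, i), e) = [((a, i - 1), e)] := by simp [sigInvW, h]
    rw [h1, mk_single, mk_single]
    cases e
    · rw [cond_false, cond_false, map_inv, h0]
    · rw [cond_true, cond_true, h0]

/-- one step of the algorithm -/
def step (n : ℕ) (x : (Fin (n + 1) × Fin 2) × Bool) (s : List (Gen n × Bool) × ℤ) :
    List (Gen n × Bool) × ℤ :=
  if x.1 = (0, 0) then
    if x.2 = true then (s.1.flatMap (sigW n), s.2 + 1) else (s.1.flatMap (sigInvW n), s.2 - 1)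
  else (((x.1, 0), x.2) :: s.1, s.2)

theorem step_spec (n : ℕ) (x) (s : List (Gen n × Bool) × ℤ) :
    (FreeGroup.mk (step n x s).1, (step n x s).2) =
      Phi n (FreeGroup.mk [x]) (FreeGroup.mk s.1, s.2) := by
  obtain ⟨a, e⟩ := x
  by_cases h : a = (0, 0)
  · have h0 : Phi n (FreeGroup.of a) = T n := by simp [Phi, h]
    cases e
    · have h1 : step n (a, false) s = (s.1.flatMap (sigInvW n), s.2 - 1) := by simp [step, h]
      rw [h1, mk_single, cond_false, map_inv, h0]
      simp only [mk_flatMap _ _ (mk_sigInvW n)]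
      rfl
    · have h1 : step n (a, true) s = (s.1.flatMap (sigW n), s.2 + 1) := by simp [step, h]
      rw [h1, mk_single, cond_true, h0]
      simp only [mk_flatMap _ _ (mk_sigW n)]
      rfl
  · have h0 : Phi n (FreeGroup.of a) = L n (FreeGroup.of (a, 0)) := by simp [Phi, h]
    have h1 : step n (a, e) s = (((a, 0), e) :: s.1, s.2) := by simp [step, h]
    rw [h1]
    simp only
    rw [mk_cons', mk_single, mk_single]
    cases e
    · rw [cond_false, cond_false, map_inv, h0]
      rfl
    · rw [cond_true, cond_true, h0]
      rfl

/-- the algorithm -/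
def run (n : ℕ) (l : List ((Fin (n + 1) × Fin 2) × Bool)) : List (Gen n × Bool) × ℤ :=
  l.foldr (step n) ([], 0)

theorem run_spec (n : ℕ) (l) :
    (FreeGroup.mk (run n l).1, (run n l).2) = Phi n (FreeGroup.mk l) (1, 0) := by
  induction l with
  | nil => 
    rw [← FreeGroup.one_eq_mk, map_one]; rfl
  | cons x l ih =>
    rw [mk_cons', map_mul, Equiv.Perm.mul_apply, ← ih, ← step_spec]
    rfl

theorem mem_iff_run (n : ℕ) (l) :
    FreeGroup.mk l ∈ NN n ↔ FreeGroup.reduce (run n l).1 = [] ∧ (run n l).2 = 0 := by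
  rw [mem_iff, ← run_spec, Prod.mk.injEq, ← FreeGroup.toWord_eq_nil_iff, FreeGroup.toWord_mk]

theorem encode_ofNat (k : ℕ) : Encodable.encode (Int.ofNat k) = 2 * k := rfl

theorem encode_negSucc (k : ℕ) : Encodable.encode (Int.negSucc k) = 2 * k + 1 := rfl

theorem primrec_succ : Primrec (fun z : ℤ => z + 1) := by
  rw [← Primrec.encode_iff]
  have h : Primrec (fun m : ℕ => if m % 2 = 0 then m + 2 else m - 2) := by
    refine Primrec.ite ?_ ?_ ?_
    · exact Primrec.eq.comp (Primrec.nat_mod.comp .id (.const 2)) (.const 0)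
    · exact Primrec.nat_add.comp .id (.const 2)
    · exact Primrec.nat_sub.comp .id (.const 2)
  refine (h.comp Primrec.encode).of_eq fun z => ?_
  rcases z with k | k
  · rw [show Int.ofNat k + 1 = Int.ofNat (k + 1) from rfl]
    have h1 := encode_ofNat k
    have h2 := encode_ofNat (k + 1)
    rw [if_pos (by omega)]; omega
  · rcases k with _ | k
    · rfl
    · rw [show Int.negSucc (k + 1) + 1 = Int.negSucc k from rfl]
      have h1 := encode_negSucc k
      have h2 := encode_negSucc (k + 1)
      rw [if_neg (by omega)]; omega

theorem primrec_pred : Primrec (fun z : ℤ => z - 1) := by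
  rw [← Primrec.encode_iff]
  have h : Primrec (fun m : ℕ => if m = 0 then 1 else if m % 2 = 0 then m - 2 else m + 2) := by
    refine Primrec.ite ?_ (.const 1) (Primrec.ite ?_ ?_ ?_)
    · exact Primrec.eq.comp .id (.const 0)
    · exact Primrec.eq.comp (Primrec.nat_mod.comp .id (.const 2)) (.const 0)
    · exact Primrec.nat_sub.comp .id (.const 2)
    · exact Primrec.nat_add.comp .id (.const 2)
  refine (h.comp Primrec.encode).of_eq fun z => ?_
  rcases z with k | k
  · rcases k with _ | k
    · rfl
    · rw [show Int.ofNat (k + 1) - 1 = Int.ofNat k by simp]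
      have h1 := encode_ofNat k
      have h2 := encode_ofNat (k + 1)
      rw [if_neg (by omega), if_pos (by omega)]; omega
  · rw [show Int.negSucc k - 1 = Int.negSucc (k + 1) by omega]
    have h1 := encode_negSucc k
    have h2 := encode_negSucc (k + 1)
    rw [if_neg (by omega), if_neg (by omega)]; omega

theorem primrec_sigW (n : ℕ) : Primrec (sigW n) := by
  have h1 : Primrec (fun x : Gen n × Bool => [x]) := Primrec.list_cons.comp .id (.const [])
  refine Primrec.ite ?_ (Primrec.ite ?_ ?_ ?_) ?_
  · exact Primrec.eq.comp (Primrec.fst.comp .fst) (.const _)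
  · exact Primrec.eq.comp .snd (.const _)
  · exact Primrec.list_append.comp (.const _) h1
  · exact Primrec.list_append.comp h1 (.const _)
  · exact Primrec.list_cons.comp (((Primrec.fst.comp .fst).pair
      (primrec_succ.comp (Primrec.snd.comp .fst))).pair .snd) (.const [])

theorem primrec_sigInvW (n : ℕ) : Primrec (sigInvW n) := by
  have h1 : Primrec (fun x : Gen n × Bool => [x]) := Primrec.list_cons.comp .id (.const [])
  refine Primrec.ite ?_ (Primrec.ite ?_ ?_ ?_) ?_
  · exact Primrec.eq.comp (Primrec.fst.comp .fst) (.const _)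
  · exact Primrec.eq.comp .snd (.const _)
  · exact Primrec.list_append.comp (.const _) h1
  · exact Primrec.list_append.comp h1 (.const _)
  · exact Primrec.list_cons.comp (((Primrec.fst.comp .fst).pair
      (primrec_pred.comp (Primrec.snd.comp .fst))).pair .snd) (.const [])

theorem primrec_step (n : ℕ) : Primrec₂ (step n) := by
  refine Primrec.ite ?_ (Primrec.ite ?_ ?_ ?_) ?_
  · exact Primrec.eq.comp (Primrec.fst.comp .fst) (.const _)
  · exact Primrec.eq.comp (Primrec.snd.comp .fst) (.const _)
  · exact (Primrec.list_flatMap (Primrec.fst.comp .snd) ((primrec_sigW n).comp₂ .right)).pair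
      (primrec_succ.comp (Primrec.snd.comp .snd))
  · exact (Primrec.list_flatMap (Primrec.fst.comp .snd) ((primrec_sigInvW n).comp₂ .right)).pair
      (primrec_pred.comp (Primrec.snd.comp .snd))
  · exact (Primrec.list_cons.comp (((Primrec.fst.comp .fst).pair (.const 0)).pair
      (Primrec.snd.comp .fst)) (Primrec.fst.comp .snd)).pair (Primrec.snd.comp .snd)

theorem primrec_run (n : ℕ) : Primrec (run n) := by
  have h : Primrec₂ (fun (_ : List ((Fin (n + 1) × Fin 2) × Bool))
      (p : ((Fin (n + 1) × Fin 2) × Bool) × List (Gen n × Bool) × ℤ) => step n p.1 p.2) :=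
    (primrec_step n).comp (Primrec.fst.comp .snd) (Primrec.snd.comp .snd)
  exact Primrec.list_foldr .id (.const _) h

theorem primrec_reduce {α : Type*} [Primcodable α] [DecidableEq α] :
    Primrec (FreeGroup.reduce : List (α × Bool) → List (α × Bool)) := by
  refine Primrec.list_rec (α := List (α × Bool)) (β := α × Bool) (σ := List (α × Bool))
    (h := fun _ (p : (α × Bool) × List (α × Bool) × List (α × Bool)) => List.casesOn p.2.2 [p.1] fun hd2 tl2 =>
      if p.1.1 = hd2.1 ∧ p.1.2 = not hd2.2 then tl2 else p.1 :: hd2 :: tl2) .id (.const []) ?_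
  refine Primrec.list_casesOn (h := fun (p : List (α × Bool) × (α × Bool) × List (α × Bool) × List (α × Bool))
      (q : (α × Bool) × List (α × Bool)) => if p.2.1.1 = q.1.1 ∧ p.2.1.2 = not q.1.2 then q.2
      else p.2.1 :: q.1 :: q.2) (Primrec.snd.comp (Primrec.snd.comp .snd))
    (Primrec.list_cons.comp (Primrec.fst.comp .snd) (.const [])) ?_
  refine Primrec.ite (PrimrecPred.and ?_ ?_) ?_ ?_
  · exact Primrec.eq.comp (Primrec.fst.comp (Primrec.fst.comp (Primrec.snd.comp .fst)))
      (Primrec.fst.comp (Primrec.fst.comp .snd))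
  · exact Primrec.eq.comp (Primrec.snd.comp (Primrec.fst.comp (Primrec.snd.comp .fst)))
      (Primrec.not.comp (Primrec.snd.comp (Primrec.fst.comp .snd)))
  · exact Primrec.snd.comp .snd
  · exact Primrec.list_cons.comp (Primrec.fst.comp (Primrec.snd.comp .fst))
      (Primrec.list_cons.comp (Primrec.fst.comp .snd) (Primrec.snd.comp .snd))

end SurfaceWP

/-- **Dehn (1912):** the word problem for surface groups of genus `g ≥ 2` is
decidable. -/
theorem surface_group_word_problem_decidable (g : ℕ) (hg : 2 ≤ g) :
    ComputablePred fun l : List ((Fin g × Fin 2) × Bool) =>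
      FreeGroup.mk l ∈
        Subgroup.normalClosure ({surfaceRelator g} : Set (FreeGroup (Fin g × Fin 2))) := by
  obtain ⟨n, rfl⟩ : ∃ n, g = n + 1 := ⟨g - 1, by omega⟩
  have h : PrimrecPred fun l : List ((Fin (n + 1) × Fin 2) × Bool) =>
      FreeGroup.reduce (SurfaceWP.run n l).1 = [] ∧ (SurfaceWP.run n l).2 = 0 := by
    refine PrimrecPred.and ?_ ?_
    · exact Primrec.eq.comp (SurfaceWP.primrec_reduce.comp
        (Primrec.fst.comp (SurfaceWP.primrec_run n))) (.const [])
    · exact Primrec.eq.comp (Primrec.snd.comp (SurfaceWP.primrec_run n)) (.const 0)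
  have h' := h.of_eq fun l => (SurfaceWP.mem_iff_run n l).symm
  obtain ⟨d, hd⟩ := h'
  exact ⟨d, hd.to_comp⟩
end

section
/- (Freiheitssatz / Magnus 1930) Let A be a type and let w be a nontrivial, cyclically reduced element of FreeGroup A. Let B ⊆ A be a subset such that at least one letter of A occurring in the reduced word of w does not belong to B. Then the group homomorphism from FreeGroup B to the one-relator group ⟨A | w = 1⟩ induced by the inclusion B ↪ A is injective; that is, the subgroup of ⟨A | w = 1⟩ generated by the images of the generators in B is a free group freely generated by them. -/
namespace Magnus

open Classical in
/-- Magnus rewriting: drop the letter `x`, label other letters by the current height. -/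
noncomputable def rew {A : Type*} (x : A) : ℤ → List (A × Bool) → List ((A × ℤ) × Bool)
  | _, [] => []
  | h, q :: L => if q.1 = x then rew x (h + cond q.2 1 (-1)) L else ((q.1, h), q.2) :: rew x h L

open Classical in
/-- Final height after reading a word. -/
noncomputable def fin {A : Type*} (x : A) : ℤ → List (A × Bool) → ℤ
  | h, [] => h
  | h, q :: L => if q.1 = x then fin x (h + cond q.2 1 (-1)) L else fin x h L

variable {A : Type*} {x : A}

lemma rew_append (h : ℤ) (L L' : List (A × Bool)) :
    rew x h (L ++ L') = rew x h L ++ rew x (fin x h L) L' := by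
  induction L generalizing h with
  | nil => simp [rew, fin]
  | cons q L ih =>
    by_cases hq : q.1 = x <;> simp [rew, fin, hq, ih]

lemma fin_append (h : ℤ) (L L' : List (A × Bool)) :
    fin x h (L ++ L') = fin x (fin x h L) L' := by
  induction L generalizing h with
  | nil => simp [fin]
  | cons q L ih =>
    by_cases hq : q.1 = x <;> simp [fin, hq, ih]

lemma length_rew_le (h : ℤ) (L : List (A × Bool)) : (rew x h L).length ≤ L.length := by
  induction L generalizing h with
  | nil => simp [rew]
  | cons q L ih =>
    by_cases hq : q.1 = x <;> simp [rew, hq]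
    · exact (ih _).trans (Nat.le_succ _)
    · exact ih _

lemma length_rew_lt (h : ℤ) (L : List (A × Bool)) (hx : ∃ b, (x, b) ∈ L) :
    (rew x h L).length < L.length := by
  obtain ⟨b, hb⟩ := hx
  obtain ⟨P, Q, rfl⟩ := List.append_of_mem hb
  rw [rew_append]
  simp only [rew, if_true, List.length_append, List.length_cons]
  have h1 := length_rew_le (x := x) h P
  have h2 := length_rew_le (x := x) (fin x h P + cond b 1 (-1)) Q
  omega

lemma mem_rew {h : ℤ} {L : List (A × Bool)} {q} (hq : q ∈ rew x h L) :
    q.1.1 ≠ x ∧ (q.1.1, q.2) ∈ L := by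
  induction L generalizing h with
  | nil => simp [rew] at hq
  | cons r L ih =>
    by_cases hr : r.1 = x
    · simp only [rew, hr, if_true] at hq
      exact ⟨(ih hq).1, List.mem_cons_of_mem _ (ih hq).2⟩
    · simp only [rew, hr, if_false, List.mem_cons] at hq
      rcases hq with rfl | hq
      · exact ⟨hr, by simp⟩
      · exact ⟨(ih hq).1, List.mem_cons_of_mem _ (ih hq).2⟩

/-- first height or final height if no letters -/
noncomputable def nextH (x : A) (h : ℤ) (L : List (A × Bool)) : ℤ :=
  match rew x h L with
  | [] => fin x h L
  | q :: _ => q.1.2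

lemma nextH_key (h : ℤ) (b : Bool) (L : List (A × Bool))
    (hL : FreeGroup.IsReduced ((x, b) :: L)) :
    (b = true → h < nextH x h ((x, b) :: L)) ∧ (b = false → nextH x h ((x, b) :: L) < h) := by
  induction L generalizing h with
  | nil => cases b <;> simp [nextH, rew, fin]
  | cons q L ih =>
    obtain ⟨a, c⟩ := q
    rw [FreeGroup.isReduced_cons_cons] at hL
    by_cases hq : a = x
    · subst hq
      obtain rfl : b = c := hL.1 rfl
      have := ih (h + cond b 1 (-1)) hL.2
      have e : nextH a h ((a, b) :: (a, b) :: L) = nextH a (h + cond b 1 (-1)) ((a, b) :: L) := by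
        simp [nextH, rew, fin]
      rw [e]
      cases b <;> simp at this ⊢ <;> omega
    · have e : nextH x h ((x, b) :: (a, c) :: L) = h + cond b 1 (-1) := by
        simp [nextH, rew, hq]
      rw [e]
      cases b <;> simp

lemma nextH_ne (h : ℤ) (b : Bool) (L : List (A × Bool))
    (hL : FreeGroup.IsReduced ((x, b) :: L)) : nextH x h ((x, b) :: L) ≠ h := by
  have := nextH_key h b L hL
  cases b <;> simp at this <;> omega

lemma rew_isReduced (h : ℤ) (L : List (A × Bool)) (hL : FreeGroup.IsReduced L) :
    FreeGroup.IsReduced (rew x h L) := by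
  induction L generalizing h with
  | nil => simp [rew]
  | cons q L ih =>
    have hL' : FreeGroup.IsReduced L := hL.infix (List.suffix_cons q L).isInfix
    by_cases hq : q.1 = x
    · simp only [rew, hq, if_true]; exact ih _ hL'
    · simp only [rew, hq, if_false]
      have h0 := ih h hL'
      rcases hR : rew x h L with _ | ⟨r, R⟩
      · simp
      · rw [hR] at h0
        rw [FreeGroup.isReduced_cons_cons]
        refine ⟨?_, h0⟩
        intro hr
        rcases L with _ | ⟨⟨a, c⟩, L⟩
        · simp [rew] at hR
        by_cases ha : a = x
        · subst ha
          have := nextH_ne h c L hL'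
          simp only [nextH, hR] at this
          exact absurd (by rw [← hr]) this
        · simp [rew, ha] at hR
          rw [FreeGroup.isReduced_cons_cons] at hL
          obtain ⟨rfl, -⟩ := hR
          exact hL.1 (by simpa using congrArg Prod.fst hr)

lemma rew_ne_nil (b : Bool) (L : List (A × Bool)) (hL : FreeGroup.IsReduced L)
    (hb : (x, b) ∈ L) (h0 : fin x 0 L = 0) : rew x 0 L ≠ [] := by
  intro h
  rcases L with _ | ⟨⟨a, c⟩, L⟩
  · simp at hb
  by_cases ha : a = x
  · subst ha
    have := nextH_ne 0 c L hL
    simp [nextH, h, h0] at this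
  · simp [rew, ha] at h

lemma rew_eq_nil_mem {h : ℤ} {L : List (A × Bool)} (hL : rew x h L = []) {q} (hq : q ∈ L) :
    q.1 = x := by
  induction L generalizing h with
  | nil => simp at hq
  | cons r L ih =>
    by_cases hr : r.1 = x
    · simp only [rew, hr, if_true] at hL
      rcases List.mem_cons.1 hq with rfl | hq
      · exact hr
      · exact ih hL hq
    · simp [rew, hr] at hL

lemma const_height (h : ℤ) (P Q : List (A × Bool)) (b : Bool)
    (hL : FreeGroup.IsReduced (P ++ (x, b) :: Q))
    (hh : ∀ q ∈ rew x h (P ++ (x, b) :: Q), q.1.2 = h) : ∀ q ∈ Q, q.1 = x := by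
  have key : ∀ (c : Bool) (R : List (A × Bool)), FreeGroup.IsReduced ((x, c) :: R) →
      (∀ q ∈ rew x h ((x, c) :: R), q.1.2 = h) → ∀ q ∈ R, q.1 = x := by
    intro c R hR hh q hq
    have := nextH_ne h c R hR
    rcases hS : rew x h ((x, c) :: R) with _ | ⟨s, S⟩
    · exact rew_eq_nil_mem hS (List.mem_cons_of_mem _ hq)
    · simp only [nextH, hS] at this
      exact absurd (hh s (by simp [hS])) this
  induction P with
  | nil => exact key b Q hL hh
  | cons r P ih =>
    by_cases hr : r.1 = x
    · obtain ⟨a, c⟩ := r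
      simp only at hr
      subst hr
      intro q hq
      exact key c _ hL hh q (by simp [hq])
    · refine ih (hL.infix (List.suffix_cons r _).isInfix) ?_
      intro q hq
      apply hh
      simp [rew, hr, hq]

lemma exists_heights (b : Bool) (L : List (A × Bool)) (hL : FreeGroup.IsReduced (L ++ L))
    (hb : (x, b) ∈ L) (h0 : fin x 0 L = 0) :
    ∃ m M : ℤ, m < M ∧ (∀ q ∈ rew x 0 L, m ≤ q.1.2 ∧ q.1.2 ≤ M) ∧
      (∃ q ∈ rew x 0 L, q.1.2 = m) ∧ (∃ q ∈ rew x 0 L, q.1.2 = M) := by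
  classical
  have hne := rew_ne_nil b L (hL.infix (List.prefix_append L L).isInfix) hb h0
  have hne' : (rew x 0 L).toFinset.Nonempty := by
    rw [List.toFinset_nonempty_iff]; exact hne
  obtain ⟨q₁, h₁, h₁'⟩ := Finset.exists_min_image _ (fun q => q.1.2) hne'
  obtain ⟨q₂, h₂, h₂'⟩ := Finset.exists_max_image _ (fun q => q.1.2) hne'
  simp only [List.mem_toFinset] at h₁ h₁' h₂ h₂'
  refine ⟨q₁.1.2, q₂.1.2, ?_, fun q hq => ⟨h₁' q hq, h₂' q hq⟩, ⟨q₁, h₁, rfl⟩, ⟨q₂, h₂, rfl⟩⟩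
  by_contra hlt
  have hc : ∀ q ∈ rew x 0 L, q.1.2 = q₁.1.2 := by
    intro q hq
    have := h₁' q hq
    have := h₂' q hq
    omega
  obtain ⟨hq1, hq2⟩ := mem_rew h₁
  obtain ⟨P, Q, rfl⟩ := List.append_of_mem hq2
  have hfin : fin x 0 P = q₁.1.2 := by
    apply hc ((q₁.1.1, fin x 0 P), q₁.2)
    rw [rew_append]
    simp [rew, hq1]
  have hx : (x, b) ∈ Q ++ P := by
    simp only [List.mem_append, List.mem_cons] at hb ⊢
    rcases hb with hb | hb | hb
    · exact Or.inr hb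
    · exact absurd (congrArg Prod.fst hb).symm hq1
    · exact Or.inl hb
  obtain ⟨R, S, hRS⟩ := List.append_of_mem hx
  set c := (q₁.1.1, q₁.2) with hcdef
  have hsplit : (P ++ c :: Q) ++ (P ++ c :: Q) = (P ++ [c]) ++ (R ++ (x, b) :: (S ++ c :: Q)) := by
    have : R ++ (x, b) :: (S ++ c :: Q) = (R ++ (x, b) :: S) ++ c :: Q := by simp
    rw [this, ← hRS]; simp
  have := const_height (x := x) q₁.1.2 R (S ++ c :: Q) b
    (hL.infix (by rw [hsplit]; exact (List.suffix_append _ _).isInfix)) (by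
      intro q hq
      have h2 : q ∈ rew x 0 ((P ++ c :: Q) ++ (P ++ c :: Q)) := by
        rw [hsplit, rew_append]
        have : fin x 0 (P ++ [c]) = q₁.1.2 := by
          rw [fin_append, hfin]; simp [fin, hcdef, hq1]
        rw [this]
        exact List.mem_append_right _ hq
      rw [rew_append, h0, List.mem_append, or_self] at h2
      exact hc q h2)
  exact hq1 (this c (by simp))

lemma rew_double (L : List (A × Bool)) (hL : FreeGroup.IsReduced (L ++ L))
    (h0 : fin x 0 L = 0) : FreeGroup.IsReduced (rew x 0 L ++ rew x 0 L) := by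
  have := rew_isReduced (x := x) 0 _ hL
  rwa [rew_append, h0] at this

end Magnus

namespace Magnus

open Classical in
/-- exponent sum of `x` -/
noncomputable def ex {A : Type*} (x : A) : FreeGroup A →* Multiplicative ℤ :=
  FreeGroup.lift (fun a => if a = x then Multiplicative.ofAdd 1 else 1)

open Classical in
lemma lift_update_mul {A G : Type*} [Group G] (x : A) (f : A → G) (g z : G)
    (hz : z ∈ Subgroup.center G) (w : FreeGroup A) :
    FreeGroup.lift (Function.update f x (g * z)) w =
      FreeGroup.lift (Function.update f x g) w * z ^ (ex x w).toAdd := by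
  have hzc : ∀ (k : ℤ) (y : G), y * z ^ k = z ^ k * y := fun k y =>
    Subgroup.mem_center_iff.1 (Subgroup.zpow_mem _ hz k) y
  have hgen : ∀ a, FreeGroup.lift (Function.update f x (g * z)) (FreeGroup.of a) =
      FreeGroup.lift (Function.update f x g) (FreeGroup.of a) *
        z ^ (ex x (FreeGroup.of a)).toAdd := by
    intro a
    by_cases ha : a = x
    · subst ha; simp [ex]
    · simp [ex, ha]
  induction w using FreeGroup.induction_on with
  | C1 => simp
  | of a => exact hgen a
  | inv_of a h =>
    rw [map_inv, map_inv, map_inv, hgen a, mul_inv_rev, toAdd_inv, ← zpow_neg, hzc]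
  | mul a b ha hb =>
    rw [map_mul, map_mul, map_mul, ha, hb, toAdd_mul, zpow_add]
    simp only [mul_assoc]
    rw [← mul_assoc (z ^ _) (FreeGroup.lift _ b), ← hzc, mul_assoc]

open Classical in
lemma solve (p : ℕ) [Fact p.Prime] (n : ℤ) (hn : ¬ (p : ℤ) ∣ n) {A : Type*} (x : A)
    (w : FreeGroup A) (hw : (ex x w).toAdd = n) (G : Type*) [Group G] [Group.IsNilpotent G] :
    IsPGroup p G → ∀ f : A → G, ∃ g, FreeGroup.lift (Function.update f x g) w = 1 := by
  refine Group.nilpotent_center_quotient_ind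
    (P := fun G _ _ => IsPGroup p G → ∀ f : A → G,
      ∃ g, FreeGroup.lift (Function.update f x g) w = 1) G ?_ ?_
  · intro G _ _ _ f
    exact ⟨1, Subsingleton.elim _ _⟩
  · intro G _ _ ih hG f
    obtain ⟨g', hg'⟩ := ih (hG.to_quotient _) (fun a => (QuotientGroup.mk (f a)))
    obtain ⟨g, rfl⟩ := QuotientGroup.mk_surjective g'
    have hc : FreeGroup.lift (Function.update f x g) w ∈ Subgroup.center G := by
      rw [← QuotientGroup.eq_one_iff, ← hg']
      have : (QuotientGroup.mk' (Subgroup.center G)).comp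
          (FreeGroup.lift (Function.update f x g)) =
          FreeGroup.lift (Function.update (fun a => (QuotientGroup.mk (f a) : G ⧸ Subgroup.center G))
            x (QuotientGroup.mk g)) := by
        ext a
        by_cases ha : a = x
        · subst ha; simp
        · simp [ha]
      rw [← this]; rfl
    set c := FreeGroup.lift (Function.update f x g) w with hcdef
    obtain ⟨k, hk⟩ := hG c
    have hcop : IsCoprime n ((p : ℤ) ^ k) := by
      apply IsCoprime.pow_right
      exact ((Nat.prime_iff_prime_int.1 (Fact.out : p.Prime)).coprime_iff_not_dvd.2 hn).symm
    obtain ⟨u, v, huv⟩ := hcop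
    refine ⟨g * c ^ (-u), ?_⟩
    rw [lift_update_mul _ _ _ _ (Subgroup.zpow_mem _ hc _), hw, ← hcdef, ← zpow_mul]
    have h1 : c ^ ((p : ℤ) ^ k) = 1 := by exact_mod_cast hk
    have h2 : c = c ^ (u * n) := by
      conv_lhs => rw [← zpow_one c, ← huv, zpow_add, mul_comm v, zpow_mul c _ v, h1]
      simp
    nth_rewrite 1 [h2]
    rw [← zpow_add]
    simp

/-- unitriangular -/
def UT {R : Type*} [CommRing R] {n : ℕ} (M : Matrix (Fin n) (Fin n) R) : Prop :=
  ∀ r c, c ≤ r → M r c = if r = c then 1 else 0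

lemma UT.mul {R : Type*} [CommRing R] {n : ℕ} {M N : Matrix (Fin n) (Fin n) R}
    (hM : UT M) (hN : UT N) : UT (M * N) := by
  intro r c hrc
  rw [Matrix.mul_apply, Finset.sum_eq_single r]
  · rw [hM r r le_rfl, hN r c hrc]; simp
  · intro k _ hk
    rcases lt_or_gt_of_ne hk with h | h
    · rw [hM r k h.le, if_neg h.ne', zero_mul]
    · rw [hN k c (hrc.trans h.le), if_neg (hrc.trans_lt h).ne', mul_zero]
  · simp

lemma UT.one {R : Type*} [CommRing R] {n : ℕ} : UT (1 : Matrix (Fin n) (Fin n) R) := by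
  intro r c _
  rw [Matrix.one_apply]

lemma UT.pow_eq_zero {R : Type*} [CommRing R] {n : ℕ} {M : Matrix (Fin n) (Fin n) R}
    (hM : UT M) : (M - 1) ^ n = 0 := by
  have key : ∀ k : ℕ, ∀ r c : Fin n, (c : ℕ) < r + k → ((M - 1) ^ k) r c = 0 := by
    intro k
    induction k with
    | zero =>
      intro r c h
      rw [pow_zero, Matrix.one_apply, if_neg]
      rintro rfl
      omega
    | succ k ih =>
      intro r c h
      rw [pow_succ, Matrix.mul_apply]
      apply Finset.sum_eq_zero
      intro j _
      by_cases hj : (j : ℕ) < r + k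
      · rw [ih r j hj, zero_mul]
      · have : c ≤ j := by rw [Fin.le_def]; omega
        rw [Matrix.sub_apply, hM j c this, Matrix.one_apply, sub_self, mul_zero]
  ext r c
  exact key n r c (by omega)

/-- the unitriangular group -/
def UTG (R : Type*) [CommRing R] (n : ℕ) : Subgroup (Matrix (Fin n) (Fin n) R)ˣ where
  carrier := {g | UT g.val ∧ UT (g⁻¹).val}
  mul_mem' := by
    rintro a b ⟨h1, h2⟩ ⟨h3, h4⟩
    refine ⟨h1.mul h3, ?_⟩
    rw [mul_inv_rev]
    exact h4.mul h2
  one_mem' := ⟨UT.one, by simpa using UT.one⟩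
  inv_mem' := by
    rintro a ⟨h1, h2⟩
    exact ⟨h2, by simpa using h1⟩

lemma UTG.isPGroup (p : ℕ) [Fact p.Prime] (n : ℕ) : IsPGroup p (UTG (ZMod p) n) := by
  rcases Nat.eq_zero_or_pos n with rfl | hn
  · intro g
    exact ⟨0, Subtype.ext (Units.ext (Subsingleton.elim _ _))⟩
  have : Nonempty (Fin n) := ⟨⟨0, hn⟩⟩
  intro g
  refine ⟨n, ?_⟩
  have h := UT.pow_eq_zero g.2.1
  have h1 : (g.1.val - 1) ^ p ^ n = 0 :=
    pow_eq_zero_of_le (Nat.lt_pow_self (Fact.out : p.Prime).one_lt).le h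
  rw [sub_pow_char_pow_of_commute _ _ (Commute.one_right _), one_pow, sub_eq_zero] at h1
  exact Subtype.ext (Units.ext (by simpa using h1))

instance (p : ℕ) [Fact p.Prime] (n : ℕ) : Group.IsNilpotent (UTG (ZMod p) n) :=
  (UTG.isPGroup p n).isNilpotent

lemma exists_syllables {T : Type*} (u : FreeGroup T) (hu : u ≠ 1) :
    ∃ l : List (T × ℤ), l ≠ [] ∧ l.IsChain (fun a b => a.1 ≠ b.1) ∧ (∀ q ∈ l, q.2 ≠ 0) ∧
      u = (l.map fun q => FreeGroup.of q.1 ^ q.2).prod := by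
  classical
  let W := Monoid.CoprodI.Word.equiv (freeGroupEquivCoprodI u)
  have hW : W.prod = freeGroupEquivCoprodI u := Monoid.CoprodI.Word.equiv.symm_apply_apply _
  have hu' : u = (W.toList.map fun q => FreeGroup.of q.1 ^
      FreeGroup.freeGroupUnitEquivInt q.2).prod := by
    have : u = freeGroupEquivCoprodI.symm W.prod := by rw [hW, MulEquiv.symm_apply_apply]
    rw [this, Monoid.CoprodI.Word.prod, map_list_prod, List.map_map]
    congr 1
    apply List.map_congr_left
    intro q _
    have h2 : FreeGroup.of () ^ FreeGroup.freeGroupUnitEquivInt q.2 = q.2 :=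
      FreeGroup.freeGroupUnitEquivInt.left_inv q.2
    simp only [Function.comp]
    conv_lhs => rw [← h2]
    simp
  refine ⟨W.toList.map fun q => (q.1, FreeGroup.freeGroupUnitEquivInt q.2), ?_, ?_, ?_, ?_⟩
  · intro h
    rw [List.map_eq_nil_iff] at h
    rw [h] at hu'
    exact hu (by simpa using hu')
  · rw [List.isChain_map]
    exact W.chain_ne
  · intro q hq h0
    obtain ⟨r, hr, rfl⟩ := List.mem_map.1 hq
    apply W.ne_one r hr
    have h2 : FreeGroup.of () ^ FreeGroup.freeGroupUnitEquivInt r.2 = r.2 :=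
      FreeGroup.freeGroupUnitEquivInt.left_inv r.2
    rw [← h2]
    simp only at h0
    rw [h0, zpow_zero]
  · rw [List.map_map]
    exact hu'

open Classical in
/-- path matrices -/
noncomputable def pathMat (R : Type*) [CommRing R] {T : Type*} (l : List (T × ℤ)) (a : T) :
    Matrix (Fin (l.length + 1)) (Fin (l.length + 1)) R :=
  Matrix.of fun r c => if (c : ℕ) = r + 1 ∧ (l[(r : ℕ)]?).map Prod.fst = some a then 1 else 0

lemma pathMat_sq (R : Type*) [CommRing R] {T : Type*} (l : List (T × ℤ))
    (hl : l.IsChain (fun a b => a.1 ≠ b.1)) (a : T) : pathMat R l a * pathMat R l a = 0 := by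
  ext r c
  rw [Matrix.mul_apply]
  apply Finset.sum_eq_zero
  intro k _
  simp only [pathMat, Matrix.of_apply]
  by_contra hne
  have h1 := left_ne_zero_of_mul hne
  have h2 := right_ne_zero_of_mul hne
  simp only [ne_eq, ite_eq_right_iff, Classical.not_imp] at h1 h2
  obtain ⟨⟨hk, hr⟩, -⟩ := h1
  obtain ⟨⟨hc, hk'⟩, -⟩ := h2
  rw [Option.map_eq_some_iff] at hr hk'
  obtain ⟨q, hq, hqa⟩ := hr
  obtain ⟨q', hq', hqb⟩ := hk'
  rw [hk] at hq'
  rw [List.getElem?_eq_some_iff] at hq hq'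
  obtain ⟨i1, rfl⟩ := hq
  obtain ⟨i2, rfl⟩ := hq'
  exact List.isChain_iff_getElem.1 hl r i2 (hqa.trans hqb.symm)

/-- one-parameter group of a square zero matrix -/
def oneParam {R : Type*} [Ring R] (N : R) (hN : N * N = 0) : Multiplicative ℤ →* Rˣ where
  toFun e :=
    { val := 1 + e.toAdd • N
      inv := 1 - e.toAdd • N
      val_inv := by simp [mul_sub, add_mul, hN, -zsmul_eq_mul]
      inv_val := by simp [mul_add, sub_mul, hN, -zsmul_eq_mul] }
  map_one' := by ext; simp
  map_mul' a b := by
    ext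
    simp [mul_add, add_mul, hN, add_smul, -zsmul_eq_mul]
    abel

lemma pathMat_UT (R : Type*) [CommRing R] {T : Type*} (l : List (T × ℤ)) (a : T) (e : ℤ) :
    UT (1 + e • pathMat R l a) := by
  intro r c hrc
  have : pathMat R l a r c = 0 := by
    simp only [pathMat, Matrix.of_apply]
    rw [if_neg]
    rintro ⟨h, -⟩
    rw [Fin.le_def] at hrc
    omega
  rw [Matrix.add_apply, Matrix.smul_apply, this, smul_zero, add_zero, Matrix.one_apply]

lemma path_entry (F : Type*) [Field F] {T : Type*} (l : List (T × ℤ))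
    (h0 : ∀ q ∈ l, (q.2 : F) ≠ 0) (l₂ l₁ : List (T × ℤ)) (hl : l = l₁ ++ l₂)
    (M : Matrix (Fin (l.length + 1)) (Fin (l.length + 1)) F)
    (hM : M = (l₂.map fun q => 1 + q.2 • pathMat F l q.1).prod) :
    (∀ r : Fin (l.length + 1), (r : ℕ) < l₁.length → M r (Fin.last _) = 0) ∧
    (∀ r : Fin (l.length + 1), (r : ℕ) = l₁.length → M r (Fin.last _) ≠ 0) := by
  induction l₂ generalizing l₁ M with
  | nil =>
    have hlen : l.length = l₁.length := by rw [hl]; simp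
    simp only [List.map_nil, List.prod_nil] at hM
    subst hM
    constructor
    · intro r hr
      rw [Matrix.one_apply, if_neg]
      rintro rfl
      simp [hlen] at hr
    · intro r hr
      have : r = Fin.last _ := Fin.ext (by rw [hr, ← hlen]; rfl)
      rw [this]
      simp
  | cons q l₂ ih =>
    obtain ⟨ih1, ih2⟩ := ih (l₁ ++ [q]) (by rw [hl]; simp) _ rfl
    simp only [List.length_append, List.length_cons, List.length_nil, zero_add] at ih1 ih2
    rw [List.map_cons, List.prod_cons] at hM
    set M' := (l₂.map fun q => 1 + q.2 • pathMat F l q.1).prod with hM'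
    have hlen : l₁.length < l.length := by rw [hl]; simp
    have hrow : ∀ r : Fin (l.length + 1), M r (Fin.last _) = M' r (Fin.last _) +
        (q.2 : F) * ∑ k, pathMat F l q.1 r k * M' k (Fin.last _) := by
      intro r
      rw [hM, add_mul, one_mul, Matrix.add_apply, Matrix.smul_mul, Matrix.smul_apply,
        Matrix.mul_apply, zsmul_eq_mul]
    constructor
    · intro r hr
      rw [hrow, ih1 r (by omega), Finset.sum_eq_zero, mul_zero, add_zero]
      intro k _
      simp only [pathMat, Matrix.of_apply]
      split_ifs with hk
      · rw [ih1 k (by omega), mul_zero]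
      · rw [zero_mul]
    · intro r hr
      have hlt : l₁.length + 1 < l.length + 1 := by omega
      rw [hrow, ih1 r (by omega), zero_add, Finset.sum_eq_single ⟨l₁.length + 1, hlt⟩]
      · have : pathMat F l q.1 r ⟨l₁.length + 1, hlt⟩ = 1 := by
          simp only [pathMat, Matrix.of_apply]
          rw [if_pos]
          refine ⟨by simp [hr], ?_⟩
          rw [hr, hl]
          simp
        rw [this, one_mul]
        exact mul_ne_zero (h0 q (by rw [hl]; simp)) (ih2 _ rfl)
      · intro k _ hk
        simp only [pathMat, Matrix.of_apply]
        rw [if_neg, zero_mul]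
        rintro ⟨h, -⟩
        exact hk (Fin.ext (by simp [h, hr]))
      · simp

lemma residual {T : Type*} (u : FreeGroup T) (hu : u ≠ 1) (n : ℤ) (hn : n ≠ 0) :
    ∃ p : ℕ, ∃ _ : Fact p.Prime, ¬ (p : ℤ) ∣ n ∧ ∃ s : ℕ,
      ∃ φ : FreeGroup T →* UTG (ZMod p) s, φ u ≠ 1 := by
  obtain ⟨l, hne, hch, h0, hul⟩ := exists_syllables u hu
  have hprod : (n * (l.map Prod.snd).prod) ≠ 0 := by
    refine mul_ne_zero hn (List.prod_ne_zero ?_)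
    intro h
    obtain ⟨q, hq, h⟩ := List.mem_map.1 h
    exact h0 q hq h
  obtain ⟨p, hp, hpp⟩ := Nat.exists_infinite_primes ((n * (l.map Prod.snd).prod).natAbs + 1)
  have hdvd : ¬ (p : ℤ) ∣ n * (l.map Prod.snd).prod := by
    intro h
    have := Nat.le_of_dvd (Int.natAbs_pos.2 hprod) (Int.natCast_dvd.1 h)
    omega
  have : Fact p.Prime := ⟨hpp⟩
  refine ⟨p, this, fun h => hdvd (h.mul_right _), l.length + 1, ?_⟩
  let θ := fun a : T => oneParam (pathMat (ZMod p) l a) (pathMat_sq _ l hch a)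
  let g : T → UTG (ZMod p) (l.length + 1) := fun a => ⟨θ a (Multiplicative.ofAdd 1), by
    constructor
    · exact pathMat_UT (ZMod p) l a 1
    · rw [← map_inv]
      exact pathMat_UT (ZMod p) l a (-1)⟩
  refine ⟨FreeGroup.lift g, ?_⟩
  intro h1
  have hval : ((FreeGroup.lift g u).1.val : Matrix _ _ (ZMod p)) =
      (l.map fun q => 1 + q.2 • pathMat (ZMod p) l q.1).prod := by
    rw [hul]
    have : ∀ v, ((FreeGroup.lift g v).1.val : Matrix _ _ (ZMod p)) =
      ((Units.coeHom _).comp ((UTG (ZMod p) (l.length + 1)).subtype.comp (FreeGroup.lift g))) v :=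
      fun _ => rfl
    rw [this, map_list_prod, List.map_map]
    congr 1
    apply List.map_congr_left
    intro q _
    have h3 : (θ q.1 (Multiplicative.ofAdd 1)) ^ q.2 = θ q.1 (Multiplicative.ofAdd q.2) := by
      rw [← map_zpow, ← ofAdd_zsmul]; simp
    have h4 : ((θ q.1 (Multiplicative.ofAdd 1)) ^ q.2).val = 1 + q.2 • pathMat (ZMod p) l q.1 := by
      rw [h3]; rfl
    rw [← h4]
    simp [g]
  have h0' : ∀ q ∈ l, ((q.2 : ℤ) : ZMod p) ≠ 0 := by
    intro q hq h
    rw [ZMod.intCast_zmod_eq_zero_iff_dvd] at h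
    exact hdvd ((h.trans (List.dvd_prod (List.mem_map_of_mem hq))).mul_left _)
  have := (path_entry (ZMod p) l h0' l [] rfl _ hval).2 0 rfl
  rw [h1] at this
  apply this
  have hz : (0 : Fin (l.length + 1)) ≠ Fin.last _ := by
    intro h
    have := congrArg Fin.val h
    simp at this
    exact hne (List.length_eq_zero_iff.1 this.symm)
  simp [hz]

lemma nonzero_case {A T : Type*} (x : A) (w : FreeGroup A) (hw : (ex x w).toAdd ≠ 0)
    (j : T → A) (hj : Function.Injective j) (hx : ∀ a, j a ≠ x) :
    Function.Injective ((QuotientGroup.mk' (Subgroup.normalClosure ({w} : Set (FreeGroup A)))).comp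
        (FreeGroup.map j)) := by
  classical
  rw [injective_iff_map_eq_one]
  intro u hu
  by_contra hne
  obtain ⟨p, hp, hpn, s, φ, hφ⟩ := residual u hne _ hw
  let f : A → UTG (ZMod p) s := Function.extend j (fun a => φ (FreeGroup.of a)) 1
  obtain ⟨g, hg⟩ := solve p _ hpn x w rfl _ (UTG.isPGroup p s) f
  have hker : Subgroup.normalClosure ({w} : Set (FreeGroup A)) ≤
      (FreeGroup.lift (Function.update f x g)).ker := by
    apply Subgroup.normalClosure_le_normal
    simpa [MonoidHom.mem_ker] using hg
  have hmem : FreeGroup.map j u ∈ Subgroup.normalClosure ({w} : Set (FreeGroup A)) := by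
    simpa using hu
  have h1 := hker hmem
  rw [MonoidHom.mem_ker] at h1
  apply hφ
  rw [← h1]
  have : φ = (FreeGroup.lift (Function.update f x g)).comp (FreeGroup.map j) := by
    ext1 a
    simp [hx a, f, hj.extend_apply]
  rw [this]; rfl

end Magnus

namespace Magnus

lemma fin_eq {A : Type*} (x : A) (h : ℤ) (L : List (A × Bool)) :
    fin x h L = h + (ex x (FreeGroup.mk L)).toAdd := by
  induction L generalizing h with
  | nil => simp [fin, ← FreeGroup.one_eq_mk]
  | cons q L ih =>
    obtain ⟨a, b⟩ := q
    have e : FreeGroup.mk ((a, b) :: L) = FreeGroup.mk [(a, b)] * FreeGroup.mk L := by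
      rw [FreeGroup.mul_mk]; rfl
    rw [e, map_mul, toAdd_mul]
    by_cases ha : a = x
    · subst ha
      cases b <;> simp [fin, ih, ex, add_assoc]
    · cases b <;> simp [fin, ih, ex, ha]

lemma lift_cons {A K : Type*} [Group K] (f : A → K) (q : A × Bool) (L : List (A × Bool)) :
    FreeGroup.lift f (FreeGroup.mk (q :: L)) =
      cond q.2 (f q.1) (f q.1)⁻¹ * FreeGroup.lift f (FreeGroup.mk L) := by
  rw [FreeGroup.lift_mk, FreeGroup.lift_mk, List.map_cons, List.prod_cons]

lemma conj_height {A K : Type*} [Group K] (β : A × ℤ → K) (t : K) (m M : ℤ)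
    (hrel : ∀ a i, m ≤ i → i < M → t * β (a, i) = β (a, i + 1) * t) (a : A) (i : ℤ)
    (hi : m ≤ i) (hM : i ≤ M) :
    t ^ i * (t ^ (-m) * β (a, m) * t ^ m) = β (a, i) * t ^ i := by
  induction i, hi using Int.le_induction with
  | base => simp [← mul_assoc]
  | succ i hi ih =>
    have := ih (by omega)
    rw [add_comm i 1, zpow_add, zpow_one, mul_assoc, this, ← mul_assoc, hrel a i hi (by omega),
      mul_assoc, add_comm 1 i]

open Classical in
lemma rewrite_eq {A K : Type*} [Group K] (x : A) (β : A × ℤ → K) (t : K) (m M : ℤ)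
    (hrel : ∀ a i, m ≤ i → i < M → t * β (a, i) = β (a, i + 1) * t) (h : ℤ)
    (L : List (A × Bool)) (hL : ∀ q ∈ rew x h L, m ≤ q.1.2 ∧ q.1.2 ≤ M) :
    t ^ h * FreeGroup.lift (fun a => if a = x then t else t ^ (-m) * β (a, m) * t ^ m)
      (FreeGroup.mk L) = FreeGroup.lift β (FreeGroup.mk (rew x h L)) * t ^ (fin x h L) := by
  induction L generalizing h with
  | nil => simp [rew, fin, ← FreeGroup.one_eq_mk]
  | cons q L ih =>
    obtain ⟨a, b⟩ := q
    by_cases ha : a = x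
    · subst ha
      simp only [rew, if_true] at hL
      have := ih _ hL
      simp only [rew, fin, if_true]
      rw [← this, zpow_add, FreeGroup.lift_mk, FreeGroup.lift_mk, List.map_cons, List.prod_cons,
        ← mul_assoc]
      congr 2
      cases b <;> simp
    · simp only [rew, ha, if_false, List.mem_cons, forall_eq_or_imp] at hL
      have := ih _ hL.2
      have hc := conj_height β t m M hrel a h hL.1.1 hL.1.2
      simp only [rew, fin, ha, if_false]
      rw [lift_cons, lift_cons, mul_assoc _ (FreeGroup.lift β _), ← this, ← mul_assoc, ← mul_assoc]
      congr 1
      simp only [ha, if_false]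
      cases b
      · simp only [cond_false]
        rw [eq_inv_mul_iff_mul_eq, ← mul_assoc, ← hc, mul_assoc, mul_inv_cancel, mul_one]
      · simpa only [cond_true] using hc

universe u

open Classical in
lemma zero_case {A : Type u} (L : List (A × Bool)) (hL : FreeGroup.IsReduced (L ++ L))
    (x : A) (b : Bool) (hb : (x, b) ∈ L) (h0 : fin x 0 L = 0)
    (IH : ∀ (y : A × ℤ) (c : Bool), (y, c) ∈ rew x 0 L →
      ∀ (T : Type u) (j : T → A × ℤ), Function.Injective j → (∀ a, j a ≠ y) →
      Function.Injective ((QuotientGroup.mk' (Subgroup.normalClosure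
        ({FreeGroup.mk (rew x 0 L)} : Set (FreeGroup (A × ℤ))))).comp (FreeGroup.map j)))
    (T : Type u) (j : T → A) (hj : Function.Injective j) (hx : ∀ a, j a ≠ x) :
    Function.Injective ((QuotientGroup.mk' (Subgroup.normalClosure
        ({FreeGroup.mk L} : Set (FreeGroup A)))).comp (FreeGroup.map j)) := by
  obtain ⟨m, M, hmM, hall, ⟨q₁, hq₁, hm⟩, ⟨q₂, hq₂, hM⟩⟩ := exists_heights b L hL hb h0
  set N := Subgroup.normalClosure
        ({FreeGroup.mk (rew x 0 L)} : Set (FreeGroup (A × ℤ))) with hN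
  let T₀ := {q : A × ℤ // m ≤ q.2 ∧ q.2 < M}
  let j₁ : T₀ → A × ℤ := Subtype.val
  let j₂ : T₀ → A × ℤ := fun q => (q.1.1, q.1.2 + 1)
  have inj₁ := IH q₂.1 q₂.2 hq₂ T₀ j₁ Subtype.val_injective (by
    intro a h
    have := a.2.2
    have h' : a.1.2 = q₂.1.2 := congrArg Prod.snd h
    omega)
  have inj₂ := IH q₁.1 q₁.2 hq₁ T₀ j₂ (by
    intro a c h
    simp only [j₂, Prod.mk.injEq, add_left_inj] at h
    exact Subtype.ext (Prod.ext h.1 h.2)) (by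
    intro a h
    have := a.2.1
    have h' : a.1.2 + 1 = q₁.1.2 := congrArg Prod.snd h
    omega)
  let φ := (MonoidHom.ofInjective inj₁).symm.trans (MonoidHom.ofInjective inj₂)
  let K := HNNExtension (FreeGroup (A × ℤ) ⧸ N) _ _ φ
  let t : K := HNNExtension.t
  let ι : (FreeGroup (A × ℤ) ⧸ N) →* K := HNNExtension.of
  have hι : Function.Injective ι := HNNExtension.of_injective _
  let β : A × ℤ → K := fun q => ι (QuotientGroup.mk' N (FreeGroup.of q))
  have hβ : FreeGroup.lift β = ι.comp (QuotientGroup.mk' N) := by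
    ext q; simp [β]
  have hrel : ∀ a i, m ≤ i → i < M → t * β (a, i) = β (a, i + 1) * t := by
    intro a i h1 h2
    let q : T₀ := ⟨(a, i), h1, h2⟩
    have := HNNExtension.t_mul_of (φ := φ) (MonoidHom.ofInjective inj₁ (FreeGroup.of q))
    simp only [φ, MulEquiv.trans_apply, MulEquiv.symm_apply_apply] at this
    exact this
  let F : FreeGroup A →* K :=
    FreeGroup.lift (fun a => if a = x then t else t ^ (-m) * β (a, m) * t ^ m)
  have hF : F (FreeGroup.mk L) = 1 := by
    have := rewrite_eq x β t m M hrel 0 L hall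
    rw [h0, zpow_zero, one_mul, mul_one, hβ] at this
    rw [show F (FreeGroup.mk L) = _ from this, MonoidHom.comp_apply]
    have h2 : QuotientGroup.mk' N (FreeGroup.mk (rew x 0 L)) = 1 := by
      rw [QuotientGroup.mk'_apply, QuotientGroup.eq_one_iff]
      exact Subgroup.subset_normalClosure rfl
    rw [h2, map_one]
  have hker : Subgroup.normalClosure ({FreeGroup.mk L} : Set (FreeGroup A)) ≤ F.ker := by
    apply Subgroup.normalClosure_le_normal
    simpa [MonoidHom.mem_ker] using hF
  have hFj : F.comp (FreeGroup.map j) = ((MulAut.conj (t ^ (-m))).toMonoidHom.comp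
      (ι.comp ((QuotientGroup.mk' N).comp (FreeGroup.map fun a => (j a, m))))) := by
    ext a
    have h1 : F (FreeGroup.map j (FreeGroup.of a)) = t ^ (-m) * β (j a, m) * t ^ m := by
      simp [F, hx a]
    have h2 : t ^ m = (t ^ (-m))⁻¹ := by rw [zpow_neg, inv_inv]
    rw [MonoidHom.comp_apply, h1, h2]
    rfl
  have inj₃ := IH q₂.1 q₂.2 hq₂ T (fun a => (j a, m)) (by
    intro a c h
    exact hj (congrArg Prod.fst h)) (by
    intro a h
    have h' : m = q₂.1.2 := congrArg Prod.snd h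
    omega)
  have hinj : Function.Injective (F.comp (FreeGroup.map j)) := by
    rw [hFj]
    exact (MulAut.conj (t ^ (-m))).injective.comp (hι.comp inj₃)
  rw [injective_iff_map_eq_one] at hinj ⊢
  intro v hv
  apply hinj
  have hmem : FreeGroup.map j v ∈ Subgroup.normalClosure ({FreeGroup.mk L} : Set (FreeGroup A)) := by
    simpa using hv
  exact hker hmem

lemma main_aux (n : ℕ) : ∀ (A : Type u) (L : List (A × Bool)), L.length ≤ n →
    FreeGroup.IsReduced (L ++ L) → ∀ (x : A) (b : Bool), (x, b) ∈ L →
    ∀ (T : Type u) (j : T → A), Function.Injective j → (∀ a, j a ≠ x) →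
    Function.Injective ((QuotientGroup.mk' (Subgroup.normalClosure
        ({FreeGroup.mk L} : Set (FreeGroup A)))).comp (FreeGroup.map j)) := by
  induction n with
  | zero =>
    intro A L hlen _ x b hb
    rw [Nat.le_zero, List.length_eq_zero_iff] at hlen
    simp [hlen] at hb
  | succ n ih =>
    intro A L hlen hL x b hb T j hj hx
    by_cases h0 : fin x 0 L = 0
    · refine zero_case L hL x b hb h0 ?_ T j hj hx
      have hlt := length_rew_lt (x := x) 0 L ⟨b, hb⟩
      exact ih (A × ℤ) (rew x 0 L) (by omega) (rew_double L hL h0)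
    · refine nonzero_case x _ ?_ j hj hx
      rwa [fin_eq, zero_add] at h0

end Magnus

/-- **The Freiheitssatz (Magnus, 1930).** If some letter occurring in the
cyclically reduced relator `w` lies outside `B ⊆ A`, then the generators in `B`
freely generate a free subgroup of the one-relator group `⟨A ∣ w = 1⟩`. -/
theorem freiheitssatz {A : Type*} [DecidableEq A]
    (w : FreeGroup A) (hw : w ≠ 1) (hcyc : FreeGroup.CyclicallyReduced w)
    (B : Set A)
    (hB : ∃ a : A, (∃ b : Bool, (a, b) ∈ w.toWord) ∧ a ∉ B) :
    Function.Injective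
      ((QuotientGroup.mk' (Subgroup.normalClosure ({w} : Set (FreeGroup A)))).comp
        (FreeGroup.map (Subtype.val : B → A))) := by
  obtain ⟨a, ⟨b, hab⟩, haB⟩ := hB
  have hred : FreeGroup.IsReduced (w.toWord ++ w.toWord) := by
    have h1 : FreeGroup.IsReduced w.toWord := FreeGroup.isReduced_toWord
    refine List.IsChain.append h1 h1 ?_
    intro p hp q hq hpq
    by_contra hne
    apply hcyc q hq
    rw [Option.mem_def.1 hp]
    congr 1
    refine Prod.ext hpq ?_
    cases h1 : p.2 <;> cases h2 : q.2 <;> simp_all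
  have := Magnus.main_aux w.toWord.length A w.toWord le_rfl hred a b hab B Subtype.val
    Subtype.val_injective (fun c h => haB (h ▸ c.2))
  rwa [FreeGroup.mk_toWord] at this
end
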